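/- Let d > 2 be an integer, c₀ ∈ (0,1], and ε ∈ (0,1). There exist constants c, C > 0 depending only on (d, c₀), and δ ∈ (0,1) depending only on (d, c₀, ε), such that for every admissible kernel J on ℤ^d with constant c₀ and every family G ∈ 𝒢 such that (J,G) satisfies Assumption G, for every β ∈ [0, β(δ)] and every x ∈ ℤ^d, G_β(x) ≤ δ_0(x) + (C/σ_J^d) · (σ_J/(σ_J ∨ |x|))^{d−2−ε} · exp(−c·|x|/ξ(β)). -/

import Mathlib

open scoped ENNReal

noncomputable section

namespace Blackbox

/-- Supremum norm of a lattice point. -/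
def supNorm {d : ℕ} (x : Fin d → ℤ) : ℝ :=
  ((Finset.univ.sup fun i => (x i).natAbs : ℕ) : ℝ)

/-- Squared Euclidean norm of a lattice point. -/
def sqNorm {d : ℕ} (x : Fin d → ℤ) : ℝ :=
  ∑ i, ((x i : ℝ)) ^ 2

/-- Invariance under coordinate permutations and sign flips of individual coordinates. -/
def IsSymmFun {d : ℕ} {α : Type*} (f : (Fin d → ℤ) → α) : Prop :=
  ∀ (π : Equiv.Perm (Fin d)) (e : Fin d → Bool) (x : Fin d → ℤ),
    f (fun i => (if e i then -1 else 1) * x (π i)) = f x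

/-- First coordinate (dot product with `e₁`). -/
def e1 {d : ℕ} {α : Type*} [Zero α] (y : Fin d → α) : α :=
  if h : 0 < d then y ⟨0, h⟩ else 0

/-- An admissible kernel on `ℤ^d` with constant `c₀`. -/
structure AdmissibleKernel (d : ℕ) (c₀ : ℝ) where
  J : (Fin d → ℤ) → ℝ
  nonneg : ∀ x, 0 ≤ J x
  zero_at_zero : J 0 = 0
  summable : Summable J
  norm_one : ∑' x, J x = 1
  symm : IsSymmFun J
  R : ℝ
  R_ge_one : 1 ≤ R
  range_le : ∀ x, 0 < J x → supNorm x ≤ R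
  range_attained : ∃ x, 0 < J x ∧ supNorm x = R
  summable_sq : Summable fun x => sqNorm x * J x
  sigma_lower : c₀ * R ≤ Real.sqrt (∑' x, sqNorm x * J x)
  J_upper : ∀ x, J x ≤ c₀⁻¹ / R ^ d

/-- `σ_J`, the square root of the variance of the kernel. -/
def AdmissibleKernel.sigma {d : ℕ} {c₀ : ℝ} (K : AdmissibleKernel d c₀) : ℝ :=
  Real.sqrt (∑' x, sqNorm x * K.J x)

/-- A family `G ∈ 𝒢` together with an admissible kernel `J` such that `(J,G)` satisfies
Assumption G (with error-term family `H`). -/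
structure Model (d : ℕ) (c₀ : ℝ) where
  K : AdmissibleKernel d c₀
  G : ℝ → (Fin d → ℤ) → ℝ≥0∞
  βc : ℝ≥0∞
  βc_pos : 0 < βc
  init : ∀ x, G 0 x = if x = 0 then 1 else 0
  G' : ℝ → (Fin d → ℤ) → ℝ
  mono : ∀ (x : Fin d → ℤ) ⦃β₁ β₂ : ℝ⦄, 0 ≤ β₁ → β₁ ≤ β₂ →
    ENNReal.ofReal β₂ ≤ βc → G β₁ x ≤ G β₂ x
  deriv : ∀ (x : Fin d → ℤ) ⦃β : ℝ⦄, 0 ≤ β → ENNReal.ofReal β < βc →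
    HasDerivWithinAt (fun t => (G t x).toReal) (G' β x) (Set.Ici 0) β
  symm : ∀ β, IsSymmFun (G β)
  expDecay : ∀ ⦃β : ℝ⦄, 0 ≤ β → ENNReal.ofReal β < βc →
    ∃ C > (0:ℝ), ∃ c > (0:ℝ), ∀ x, G β x ≤ ENNReal.ofReal (C * Real.exp (-c * supNorm x))
  limit : βc ≠ ⊤ → ∀ x, G βc.toReal x = ⨆ β ∈ Set.Ico (0 : ℝ) βc.toReal, G β x
  I1 : ∀ ⦃β' β : ℝ⦄, 0 ≤ β' → β' ≤ β → ENNReal.ofReal β < βc →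
    ∀ x, G β x ≤ G β' x + ENNReal.ofReal (β - β') *
      ∑' p : (Fin d → ℤ) × (Fin d → ℤ),
        G β' p.1 * ENNReal.ofReal (K.J p.2) * G β (x - p.1 - p.2)
  H : ℝ → (Fin d → ℤ) → ℝ
  H_nonneg : ∀ β x, 0 ≤ H β x
  H_zero : ∀ x, H 0 x = 0
  H_symm : ∀ β x, H β (-x) = H β x
  H_cont : ∀ x, ContinuousOn (fun β => H β x)
    {β : ℝ | 0 ≤ β ∧ ENNReal.ofReal β < βc}
  H_expDecay : ∀ ⦃β : ℝ⦄, 0 ≤ β → ENNReal.ofReal β < βc →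
    ∃ C > (0:ℝ), ∃ c > (0:ℝ), ∀ x, H β x ≤ C * Real.exp (-c * supNorm x)
  I2 : ∀ ⦃β : ℝ⦄, 0 ≤ β → ENNReal.ofReal β < βc → ∀ x,
    (∑' p : (Fin d → ℤ) × (Fin d → ℤ),
      (G β p.1).toReal * (K.J p.2 - H β p.2) * (G β (x - p.1 - p.2)).toReal)
      ≤ G' β x

namespace Model

variable {d : ℕ} {c₀ : ℝ}

def sigma (M : Model d c₀) : ℝ := M.K.sigma

/-- `F_β = J * G_β`. -/
def F (M : Model d c₀) (β : ℝ) (x : Fin d → ℤ) : ℝ≥0∞ :=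
  ∑' y, ENNReal.ofReal (M.K.J y) * M.G β (x - y)

/-- The susceptibility `χ(β)`. -/
def chi (M : Model d c₀) (β : ℝ) : ℝ≥0∞ := ∑' x, M.G β x

/-- `ξ(β)²`. -/
def xiSq (M : Model d c₀) (β : ℝ) : ℝ≥0∞ :=
  (∑' x, ENNReal.ofReal (sqNorm x) * M.F β x) / M.chi β

/-- The correlation length of order two, `ξ(β)`. -/
def xi (M : Model d c₀) (β : ℝ) : ℝ := Real.sqrt (M.xiSq β).toReal

/-- The error term `E(β)`. -/
def E (M : Model d c₀) (β : ℝ) : ℝ≥0∞ :=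
  ⨆ t ∈ Set.Icc (0 : ℝ) β,
    (ENNReal.ofReal (∑' x, M.H t x) +
      ENNReal.ofReal (∑' x, sqNorm x * M.H t x) / M.xiSq t)

/-- `β(δ)`. -/
def betaOf (M : Model d c₀) (δ : ℝ) : ℝ :=
  sSup {β : ℝ | 0 ≤ β ∧ ENNReal.ofReal β < M.βc ∧ M.E β < ENNReal.ofReal δ}

/-- One-step distribution of the effective random walk at parameter `β`. -/
def effStep (M : Model d c₀) (β : ℝ) (y : Fin d → ℤ) : ℝ≥0∞ :=
  M.F β y / M.chi β

/-- `k`-step distribution of the effective random walk at parameter `β`. -/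
def effIter (M : Model d c₀) (β : ℝ) : ℕ → (Fin d → ℤ) → ℝ≥0∞
  | 0 => fun x => if x = 0 then 1 else 0
  | n + 1 => fun x => ∑' y, M.effStep β y * M.effIter β n (x - y)

/-- Moment generating function `M_β(s)` of the first coordinate of one step of the
effective random walk. -/
def Mgf (M : Model d c₀) (β s : ℝ) : ℝ≥0∞ :=
  ∑' y : Fin d → ℤ, M.effStep β y * ENNReal.ofReal (Real.exp (s / M.xi β * ((e1 y : ℤ) : ℝ)))

end Model

end Blackbox
open Blackbox
section
open Blackbox
namespace BB
variable {d : ℕ}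

def cv (f g : (Fin d → ℤ) → ℝ≥0∞) (x : Fin d → ℤ) : ℝ≥0∞ := ∑' y, f y * g (x - y)

lemma tsum_cv (w f g : (Fin d → ℤ) → ℝ≥0∞) :
    ∑' x, w x * cv f g x = ∑' y, ∑' z, w (y + z) * (f y * g z) := by
  unfold cv
  simp_rw [← ENNReal.tsum_mul_left]
  rw [ENNReal.tsum_comm]
  refine tsum_congr fun y => ?_
  rw [← (Equiv.addLeft y).tsum_eq]
  simp

lemma cv_comm (f g : (Fin d → ℤ) → ℝ≥0∞) : cv f g = cv g f := by
  funext x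
  unfold cv
  rw [← (Equiv.subLeft x).tsum_eq]
  simp [mul_comm]

lemma cv_assoc (f g h : (Fin d → ℤ) → ℝ≥0∞) : cv (cv f g) h = cv f (cv g h) := by
  funext x
  have := tsum_cv (fun y => h (x - y)) f g
  calc cv (cv f g) h x = ∑' y, h (x - y) * cv f g y := by
        unfold cv; exact tsum_congr fun y => mul_comm _ _
    _ = _ := this
    _ = _ := by
        unfold cv
        refine tsum_congr fun y => ?_
        rw [← ENNReal.tsum_mul_left]
        refine tsum_congr fun z => ?_
        rw [sub_add_eq_sub_sub]; ring

lemma cv_mono {f f' g g' : (Fin d → ℤ) → ℝ≥0∞} (hf : ∀ x, f x ≤ f' x) (hg : ∀ x, g x ≤ g' x)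
    (x : Fin d → ℤ) : cv f g x ≤ cv f' g' x :=
  ENNReal.tsum_le_tsum fun y => mul_le_mul' (hf y) (hg _)

lemma cv_add (f g h : (Fin d → ℤ) → ℝ≥0∞) (x : Fin d → ℤ) :
    cv f (fun y => g y + h y) x = cv f g x + cv f h x := by
  unfold cv
  simp_rw [mul_add]
  rw [ENNReal.tsum_add]

lemma cv_smul (f g : (Fin d → ℤ) → ℝ≥0∞) (a : ℝ≥0∞) (x : Fin d → ℤ) :
    cv f (fun y => a * g y) x = a * cv f g x := by
  unfold cv
  rw [← ENNReal.tsum_mul_left]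
  exact tsum_congr fun y => by ring

lemma smul_cv (f g : (Fin d → ℤ) → ℝ≥0∞) (a : ℝ≥0∞) (x : Fin d → ℤ) :
    cv (fun y => a * f y) g x = a * cv f g x := by
  rw [cv_comm, cv_smul, cv_comm]

def m0 (f : (Fin d → ℤ) → ℝ≥0∞) : ℝ≥0∞ := ∑' x, f x
def m2 (f : (Fin d → ℤ) → ℝ≥0∞) : ℝ≥0∞ := ∑' x, ENNReal.ofReal (sqNorm x) * f x
def me (i : Fin d) (s : ℝ) (f : (Fin d → ℤ) → ℝ≥0∞) : ℝ≥0∞ :=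
  ∑' x, ENNReal.ofReal (Real.exp (s * (x i : ℝ))) * f x

lemma m0_cv (f g : (Fin d → ℤ) → ℝ≥0∞) : m0 (cv f g) = m0 f * m0 g := by
  have := tsum_cv (fun _ => 1) f g
  simp only [one_mul] at this
  unfold m0
  rw [this]
  simp_rw [ENNReal.tsum_mul_left, ENNReal.tsum_mul_right]

lemma me_cv (i : Fin d) (s : ℝ) (f g : (Fin d → ℤ) → ℝ≥0∞) :
    me i s (cv f g) = me i s f * me i s g := by
  unfold me
  rw [tsum_cv, ← ENNReal.tsum_mul_right]
  refine tsum_congr fun y => ?_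
  rw [← ENNReal.tsum_mul_left]
  refine tsum_congr fun z => ?_
  rw [Pi.add_apply, Int.cast_add, mul_add, Real.exp_add, ENNReal.ofReal_mul (Real.exp_pos _).le]
  ring

lemma sqNorm_nonneg (x : Fin d → ℤ) : 0 ≤ sqNorm x := by unfold sqNorm; positivity

lemma sqNorm_neg (x : Fin d → ℤ) : sqNorm (-x) = sqNorm x := by unfold sqNorm; simp

lemma sqNorm_par (y z : Fin d → ℤ) :
    sqNorm (y + z) + sqNorm (y - z) = 2 * sqNorm y + 2 * sqNorm z := by
  unfold sqNorm
  rw [← Finset.sum_add_distrib, Finset.mul_sum, Finset.mul_sum, ← Finset.sum_add_distrib]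
  refine Finset.sum_congr rfl fun i _ => ?_
  push_cast [Pi.add_apply, Pi.sub_apply]; ring

lemma m2_cv (f g : (Fin d → ℤ) → ℝ≥0∞) (hg : ∀ x, g (-x) = g x) :
    m2 (cv f g) = m2 f * m0 g + m0 f * m2 g := by
  have key : ∀ y, ∑' z, ENNReal.ofReal (sqNorm (y + z)) * g z
      = ENNReal.ofReal (sqNorm y) * m0 g + m2 g := by
    intro y
    have h1 : ∑' z, ENNReal.ofReal (sqNorm (y + z)) * g z
        = ∑' z, ENNReal.ofReal (sqNorm (y - z)) * g z := by
      rw [← (Equiv.neg _).tsum_eq]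
      refine tsum_congr fun z => ?_
      simp [hg, sub_eq_add_neg]
    have h2 : 2 * ∑' z, ENNReal.ofReal (sqNorm (y + z)) * g z
        = 2 * (ENNReal.ofReal (sqNorm y) * m0 g + m2 g) := by
      rw [two_mul]
      nth_rewrite 2 [h1]
      rw [← ENNReal.tsum_add]
      unfold m0 m2
      rw [← ENNReal.tsum_mul_left, ← ENNReal.tsum_add, ← ENNReal.tsum_mul_left]
      refine tsum_congr fun z => ?_
      rw [← add_mul, ← ENNReal.ofReal_add (sqNorm_nonneg _) (sqNorm_nonneg _), sqNorm_par,
        ENNReal.ofReal_add (by have := sqNorm_nonneg y; positivity)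
          (by have := sqNorm_nonneg z; positivity),
        ENNReal.ofReal_mul (by norm_num), ENNReal.ofReal_mul (by norm_num)]
      simp; ring
    exact (ENNReal.mul_right_inj (by norm_num) (by norm_num)).1 h2
  unfold m2
  rw [tsum_cv]
  have : ∀ y, ∑' z, ENNReal.ofReal (sqNorm (y + z)) * (f y * g z)
      = ENNReal.ofReal (sqNorm y) * f y * m0 g + f y * m2 g := by
    intro y
    have := key y
    calc _ = f y * ∑' z, ENNReal.ofReal (sqNorm (y + z)) * g z := by
          rw [← ENNReal.tsum_mul_left]; exact tsum_congr fun z => by ring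
      _ = _ := by rw [this]; ring
  simp_rw [this]
  rw [ENNReal.tsum_add, ENNReal.tsum_mul_right, ENNReal.tsum_mul_right]
  rfl

lemma m0_mono {f g : (Fin d → ℤ) → ℝ≥0∞} (h : ∀ x, f x ≤ g x) : m0 f ≤ m0 g :=
  ENNReal.tsum_le_tsum h
lemma m2_mono {f g : (Fin d → ℤ) → ℝ≥0∞} (h : ∀ x, f x ≤ g x) : m2 f ≤ m2 g :=
  ENNReal.tsum_le_tsum fun x => mul_le_mul' le_rfl (h x)
lemma me_mono {i : Fin d} {s : ℝ} {f g : (Fin d → ℤ) → ℝ≥0∞} (h : ∀ x, f x ≤ g x) :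
    me i s f ≤ me i s g :=
  ENNReal.tsum_le_tsum fun x => mul_le_mul' le_rfl (h x)
lemma m0_add (f g : (Fin d → ℤ) → ℝ≥0∞) : m0 (fun x => f x + g x) = m0 f + m0 g :=
  ENNReal.tsum_add
lemma m2_add (f g : (Fin d → ℤ) → ℝ≥0∞) : m2 (fun x => f x + g x) = m2 f + m2 g := by
  unfold m2; simp_rw [mul_add]; exact ENNReal.tsum_add
lemma m0_smul (a : ℝ≥0∞) (f : (Fin d → ℤ) → ℝ≥0∞) : m0 (fun x => a * f x) = a * m0 f :=
  ENNReal.tsum_mul_left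
lemma m2_smul (a : ℝ≥0∞) (f : (Fin d → ℤ) → ℝ≥0∞) : m2 (fun x => a * f x) = a * m2 f := by
  unfold m2; rw [← ENNReal.tsum_mul_left]; exact tsum_congr fun x => by ring
lemma me_smul (i : Fin d) (s : ℝ) (a : ℝ≥0∞) (f : (Fin d → ℤ) → ℝ≥0∞) :
    me i s (fun x => a * f x) = a * me i s f := by
  unfold me; rw [← ENNReal.tsum_mul_left]; exact tsum_congr fun x => by ring

lemma iter_cv_comm (f g : (Fin d → ℤ) → ℝ≥0∞) (k : ℕ) (h : (Fin d → ℤ) → ℝ≥0∞) :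
    cv g ((cv f)^[k] h) = (cv f)^[k] (cv g h) := by
  induction k with
  | zero => rfl
  | succ k ih =>
    rw [Function.iterate_succ_apply', Function.iterate_succ_apply', ← ih, ← cv_assoc,
      cv_comm g f, cv_assoc]

lemma iter_mono (f : (Fin d → ℤ) → ℝ≥0∞) (k : ℕ) {g h : (Fin d → ℤ) → ℝ≥0∞}
    (hh : ∀ x, g x ≤ h x) (x : Fin d → ℤ) : (cv f)^[k] g x ≤ (cv f)^[k] h x := by
  induction k generalizing x with
  | zero => exact hh x
  | succ k ih =>
    rw [Function.iterate_succ_apply', Function.iterate_succ_apply']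
    exact cv_mono (fun _ => le_rfl) ih x

lemma iter_smul_left (f : (Fin d → ℤ) → ℝ≥0∞) (a : ℝ≥0∞) (k : ℕ) (g : (Fin d → ℤ) → ℝ≥0∞)
    (x : Fin d → ℤ) : (cv (fun y => a * f y))^[k] g x = a ^ k * (cv f)^[k] g x := by
  induction k generalizing x with
  | zero => simp
  | succ k ih =>
    rw [Function.iterate_succ_apply', Function.iterate_succ_apply', smul_cv]
    rw [funext ih, cv_smul]; ring

lemma iter_smul_right (f : (Fin d → ℤ) → ℝ≥0∞) (a : ℝ≥0∞) (k : ℕ) (g : (Fin d → ℤ) → ℝ≥0∞)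
    (x : Fin d → ℤ) : (cv f)^[k] (fun y => a * g y) x = a * (cv f)^[k] g x := by
  induction k generalizing x with
  | zero => simp
  | succ k ih =>
    rw [Function.iterate_succ_apply', Function.iterate_succ_apply', funext ih, cv_smul]

lemma me_iter (i : Fin d) (s : ℝ) (f : (Fin d → ℤ) → ℝ≥0∞) (k : ℕ) (g : (Fin d → ℤ) → ℝ≥0∞) :
    me i s ((cv f)^[k] g) = (me i s f) ^ k * me i s g := by
  induction k with
  | zero => simp
  | succ k ih => rw [Function.iterate_succ_apply', me_cv, ih]; ring

lemma m0_iter (f : (Fin d → ℤ) → ℝ≥0∞) (k : ℕ) (g : (Fin d → ℤ) → ℝ≥0∞) :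
    m0 ((cv f)^[k] g) = (m0 f) ^ k * m0 g := by
  induction k with
  | zero => simp
  | succ k ih => rw [Function.iterate_succ_apply', m0_cv, ih]; ring

/-- iteration of the renewal inequality -/
lemma renewal {F F' : (Fin d → ℤ) → ℝ≥0∞} {b : ℝ≥0∞}
    (h : ∀ x, F x ≤ F' x + b * cv F' F x) (k : ℕ) (x : Fin d → ℤ) :
    F x ≤ ∑ j ∈ Finset.range k, b ^ j * (cv F')^[j] F' x + b ^ k * (cv F')^[k] F x := by
  induction k generalizing x with
  | zero => simp
  | succ k ih =>
    refine (h x).trans ?_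
    have : cv F' F x ≤ cv F' (fun x => ∑ j ∈ Finset.range k, b ^ j * (cv F')^[j] F' x
        + b ^ k * (cv F')^[k] F x) x := cv_mono (fun _ => le_rfl) ih x
    have hs : ∀ k : ℕ, cv F' (fun x => ∑ j ∈ Finset.range k, b ^ j * (cv F')^[j] F' x) x
        = ∑ j ∈ Finset.range k, b ^ j * (cv F')^[j+1] F' x := by
      intro k
      induction k with
      | zero => simp [cv]
      | succ k ihk =>
        simp_rw [Finset.sum_range_succ]
        rw [cv_add, ihk, cv_smul, Function.iterate_succ_apply']
    rw [cv_add, hs, cv_smul, ← Function.iterate_succ_apply' (cv F')] at this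
    calc _ ≤ _ := add_le_add le_rfl (mul_le_mul' le_rfl this)
      _ = _ := by
        rw [Finset.sum_range_succ', mul_add, Finset.mul_sum]
        simp only [Function.iterate_zero, id, pow_zero, one_mul]
        rw [add_comm (∑ j ∈ _, _) (F' x), add_assoc]
        congr 1
        congr 1
        · exact Finset.sum_congr rfl fun j _ => by ring
        · ring

def e0 (x : Fin d → ℤ) : ℝ≥0∞ := if x = 0 then 1 else 0

lemma cv_e0 (f : (Fin d → ℤ) → ℝ≥0∞) : cv e0 f = f := by
  funext x
  unfold cv e0
  rw [tsum_eq_single 0]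
  · simp
  · intro y hy; simp [hy]

end BB
end

section
open Blackbox
namespace BB
variable {d : ℕ}

lemma supNorm_nonneg (x : Fin d → ℤ) : 0 ≤ supNorm x := by unfold supNorm; positivity

lemma abs_le_supNorm (x : Fin d → ℤ) (i : Fin d) : |(x i : ℝ)| ≤ supNorm x := by
  unfold supNorm
  have : (x i).natAbs ≤ Finset.univ.sup fun i => (x i).natAbs :=
    Finset.le_sup (f := fun i => (x i).natAbs) (Finset.mem_univ i)
  have h2 : |(x i : ℝ)| = ((x i).natAbs : ℝ) := by
    rw [← Int.cast_abs, Int.abs_eq_natAbs]; simp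
  rw [h2]; exact_mod_cast this

lemma supNorm_le {x : Fin d → ℤ} {a : ℝ} (ha : 0 ≤ a) (h : ∀ i, |(x i : ℝ)| ≤ a) :
    supNorm x ≤ a := by
  unfold supNorm
  have : (Finset.univ.sup fun i => (x i).natAbs) ≤ ⌊a⌋₊ := by
    refine Finset.sup_le fun i _ => Nat.le_floor ?_
    have h2 : |(x i : ℝ)| = ((x i).natAbs : ℝ) := by
      rw [← Int.cast_abs, Int.abs_eq_natAbs]; simp
    rw [← h2]; exact h i
  exact (Nat.cast_le.2 this).trans (Nat.floor_le ha)

lemma supNorm_neg (x : Fin d → ℤ) : supNorm (-x) = supNorm x := by unfold supNorm; simp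

lemma supNorm_add_le (x y : Fin d → ℤ) : supNorm (x + y) ≤ supNorm x + supNorm y := by
  refine supNorm_le (add_nonneg (supNorm_nonneg _) (supNorm_nonneg _)) fun i => ?_
  rw [Pi.add_apply, Int.cast_add]
  exact (abs_add_le _ _).trans (add_le_add (abs_le_supNorm x i) (abs_le_supNorm y i))

lemma supNorm_zero : supNorm (0 : Fin d → ℤ) = 0 :=
  le_antisymm (supNorm_le le_rfl (by simp)) (supNorm_nonneg _)

lemma exists_supNorm (hd : 0 < d) (x : Fin d → ℤ) : ∃ i, supNorm x = |(x i : ℝ)| := by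
  have : Nonempty (Fin d) := ⟨⟨0, hd⟩⟩
  obtain ⟨i, -, hi⟩ := Finset.exists_mem_eq_sup Finset.univ Finset.univ_nonempty
    (fun i => (x i).natAbs)
  refine ⟨i, ?_⟩
  unfold supNorm
  rw [hi, ← Int.cast_abs, Int.abs_eq_natAbs]; simp

lemma exp_supNorm_le (hd : 0 < d) {a : ℝ} (x : Fin d → ℤ) :
    Real.exp (a * supNorm x) ≤ ∑ i, (Real.exp (a * (x i : ℝ)) + Real.exp (-a * (x i : ℝ))) := by
  obtain ⟨i, hi⟩ := exists_supNorm hd x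
  have h1 : Real.exp (a * supNorm x) ≤ Real.exp (a * (x i : ℝ)) + Real.exp (-a * (x i : ℝ)) := by
    rw [hi]
    rcases abs_cases (x i : ℝ) with ⟨h, -⟩ | ⟨h, -⟩ <;> rw [h]
    · have := Real.exp_pos (-a * (x i : ℝ)); linarith
    · have := Real.exp_pos (a * (x i : ℝ))
      have h3 : a * -(x i : ℝ) = -a * x i := by ring
      rw [h3]; linarith
  refine h1.trans ?_
  exact Finset.single_le_sum (f := fun i => Real.exp (a * (x i : ℝ)) + Real.exp (-a * (x i : ℝ)))
    (fun j _ => by positivity) (Finset.mem_univ i)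

lemma sqNorm_le (x : Fin d → ℤ) : sqNorm x ≤ d * supNorm x ^ 2 := by
  unfold sqNorm
  calc _ ≤ ∑ _i : Fin d, supNorm x ^ 2 := Finset.sum_le_sum fun i _ => by
        rw [← sq_abs]; exact pow_le_pow_left₀ (abs_nonneg _) (abs_le_supNorm x i) 2
    _ = _ := by simp

lemma tsum_pi_prod (n : ℕ) (f : ℤ → ℝ≥0∞) :
    ∑' x : Fin n → ℤ, ∏ i, f (x i) = (∑' m, f m) ^ n := by
  induction n with
  | zero => simp
  | succ n ih =>
    rw [← (Fin.consEquiv (fun _ => ℤ)).tsum_eq, ENNReal.tsum_prod']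
    simp only [Fin.consEquiv_apply, Fin.prod_univ_succ, Fin.cons_zero, Fin.cons_succ]
    simp_rw [ENNReal.tsum_mul_left, ih, ENNReal.tsum_mul_right]
    ring

lemma tsum_exp_int {a : ℝ} (ha : 0 < a) :
    ∑' m : ℤ, ENNReal.ofReal (Real.exp (-a * |(m : ℝ)|)) ≠ ⊤ := by
  have h : Summable fun m : ℤ => Real.exp (-a * |(m : ℝ)|) := by
    have hn : Summable fun n : ℕ => Real.exp (-a * (n : ℝ)) := by
      have := Real.summable_exp_nat_mul_iff.2 (neg_lt_zero.2 ha)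
      simpa [mul_comm] using this
    refine Summable.of_nat_of_neg ?_ ?_ <;> simpa using hn
  exact h.tsum_ofReal_ne_top

lemma tsum_exp_supNorm {a : ℝ} (ha : 0 < a) :
    ∑' x : Fin d → ℤ, ENNReal.ofReal (Real.exp (-a * supNorm x)) ≠ ⊤ := by
  rcases Nat.eq_zero_or_pos d with rfl | hd
  · simp
  have hd' : (0:ℝ) < d := by exact_mod_cast hd
  have key : ∀ x : Fin d → ℤ, ENNReal.ofReal (Real.exp (-a * supNorm x))
      ≤ ∏ i, ENNReal.ofReal (Real.exp (-(a/d) * |(x i : ℝ)|)) := by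
    intro x
    rw [← ENNReal.ofReal_prod_of_nonneg (fun i _ => (Real.exp_pos _).le), ← Real.exp_sum]
    refine ENNReal.ofReal_le_ofReal (Real.exp_le_exp.2 ?_)
    have : ∑ i, |(x i : ℝ)| ≤ d * supNorm x := by
      calc _ ≤ ∑ _i : Fin d, supNorm x := Finset.sum_le_sum fun i _ => abs_le_supNorm x i
        _ = _ := by simp
    rw [← Finset.mul_sum]
    have h3 : a / d * ∑ i, |(x i : ℝ)| ≤ a / d * (d * supNorm x) :=
      mul_le_mul_of_nonneg_left this (by positivity)
    have h4 : a / d * (d * supNorm x) = a * supNorm x := by field_simp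
    linarith
  refine ne_top_of_le_ne_top ?_ (ENNReal.tsum_le_tsum key)
  rw [tsum_pi_prod d (fun m => ENNReal.ofReal (Real.exp (-(a/d) * |(m : ℝ)|)))]
  exact ENNReal.pow_ne_top (tsum_exp_int (by positivity))

lemma m0_ne_top_of_exp {f : (Fin d → ℤ) → ℝ≥0∞} {C c : ℝ} (hC : 0 < C) (hc : 0 < c)
    (h : ∀ x, f x ≤ ENNReal.ofReal (C * Real.exp (-c * supNorm x))) : m0 f ≠ ⊤ := by
  refine ne_top_of_le_ne_top ?_ (m0_mono h)
  unfold m0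
  simp_rw [ENNReal.ofReal_mul hC.le]
  rw [ENNReal.tsum_mul_left]
  exact ENNReal.mul_ne_top ENNReal.ofReal_ne_top (tsum_exp_supNorm hc)

lemma m2_ne_top_of_exp {f : (Fin d → ℤ) → ℝ≥0∞} {C c : ℝ} (hC : 0 < C) (hc : 0 < c)
    (h : ∀ x, f x ≤ ENNReal.ofReal (C * Real.exp (-c * supNorm x))) : m2 f ≠ ⊤ := by
  rcases Nat.eq_zero_or_pos d with rfl | hd
  · unfold m2; simp [sqNorm]
  have hd' : (0:ℝ) < d := by exact_mod_cast hd
  have key : ∀ x, ENNReal.ofReal (sqNorm x) * f x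
      ≤ ENNReal.ofReal ((d * C * 8 / c ^ 2) * Real.exp (-(c/2) * supNorm x)) := by
    intro x
    refine (mul_le_mul' le_rfl (h x)).trans ?_
    rw [← ENNReal.ofReal_mul (sqNorm_nonneg x)]
    refine ENNReal.ofReal_le_ofReal ?_
    have h1 := sqNorm_le x
    have hs := supNorm_nonneg x
    have h2 : (c / 2 * supNorm x) ^ 2 / 2 ≤ Real.exp (c / 2 * supNorm x) := by
      have := Real.quadratic_le_exp_of_nonneg (x := c / 2 * supNorm x) (by positivity)
      nlinarith [mul_nonneg hc.le hs]
    have h3 : Real.exp (-c * supNorm x) = Real.exp (-(c/2) * supNorm x) * Real.exp (-(c/2) * supNorm x) := by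
      rw [← Real.exp_add]; congr 1; ring
    have h4 : Real.exp (c / 2 * supNorm x) * Real.exp (-(c/2) * supNorm x) = 1 := by
      rw [← Real.exp_add]; simp
    have h5 : supNorm x ^ 2 * Real.exp (-(c/2) * supNorm x) ≤ 8 / c ^ 2 := by
      have : supNorm x ^ 2 ≤ 8 / c^2 * Real.exp (c / 2 * supNorm x) := by
        rw [div_mul_eq_mul_div, le_div_iff₀ (by positivity)]; nlinarith
      calc _ ≤ 8 / c^2 * Real.exp (c / 2 * supNorm x) * Real.exp (-(c/2) * supNorm x) := by gcongr
        _ = _ := by rw [mul_assoc, h4, mul_one]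
    calc sqNorm x * (C * Real.exp (-c * supNorm x))
        ≤ (d * supNorm x ^ 2) * (C * Real.exp (-c * supNorm x)) := by gcongr
      _ = d * C * (supNorm x ^ 2 * Real.exp (-(c/2) * supNorm x)) * Real.exp (-(c/2) * supNorm x) := by
          rw [h3]; ring
      _ ≤ d * C * (8 / c^2) * Real.exp (-(c/2) * supNorm x) := by gcongr
      _ = _ := by ring
  have := m0_ne_top_of_exp (f := fun x => ENNReal.ofReal (sqNorm x) * f x)
    (C := d * C * 8 / c ^ 2) (c := c/2) (by positivity) (by positivity) key
  exact this

end BB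
end

section
open Blackbox
namespace BB
variable {d : ℕ} {c₀ : ℝ}

def symE (π : Equiv.Perm (Fin d)) (e : Fin d → Bool) : (Fin d → ℤ) ≃ (Fin d → ℤ) where
  toFun x := fun i => (if e i then -1 else 1) * x (π i)
  invFun y := fun i => (if e (π.symm i) then -1 else 1) * y (π.symm i)
  left_inv x := by
    funext i
    by_cases h : e (π.symm i) <;> simp [h]
  right_inv x := by
    funext i
    by_cases h : e i <;> simp [h]

lemma symE_sub (π : Equiv.Perm (Fin d)) (e : Fin d → Bool) (x y : Fin d → ℤ) :
    symE π e x - symE π e y = symE π e (x - y) := by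
  funext i
  by_cases h : e i
  · simp [symE, h]; ring
  · simp [symE, h]

lemma symm_cv {f g : (Fin d → ℤ) → ℝ≥0∞} (hf : IsSymmFun f) (hg : IsSymmFun g) :
    IsSymmFun (cv f g) := by
  intro π e x
  change cv f g (symE π e x) = _
  unfold cv
  rw [← (symE π e).tsum_eq]
  refine tsum_congr fun y => ?_
  rw [symE_sub]
  exact congrArg₂ _ (hf π e y) (hg π e _)

lemma symm_even {α : Type*} {f : (Fin d → ℤ) → α} (hf : IsSymmFun f) (x : Fin d → ℤ) :
    f (-x) = f x := by
  have := hf 1 (fun _ => true) x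
  rw [← this]; congr 1; funext i; simp

def Jf (M : Model d c₀) (x : Fin d → ℤ) : ℝ≥0∞ := ENNReal.ofReal (M.K.J x)

def ok (M : Model d c₀) (β : ℝ) : Prop := 0 ≤ β ∧ ENNReal.ofReal β < M.βc

variable (M : Model d c₀)

lemma ok_mono {M : Model d c₀} {β β' : ℝ} (h : ok M β) (h0 : 0 ≤ β') (hh : β' ≤ β) : ok M β' :=
  ⟨h0, (ENNReal.ofReal_le_ofReal hh).trans_lt h.2⟩

lemma ok_zero : ok M 0 := ⟨le_rfl, by simpa using M.βc_pos⟩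

lemma Jf_symm : IsSymmFun (Jf M) := fun π e x => by unfold Jf; rw [M.K.symm π e x]

lemma F_eq (β : ℝ) : M.F β = cv (Jf M) (M.G β) := rfl
lemma chi_eq (β : ℝ) : M.chi β = m0 (M.G β) := rfl
lemma xiSq_eq (β : ℝ) : M.xiSq β = m2 (M.F β) / m0 (M.G β) := rfl

lemma F_symm (β : ℝ) : IsSymmFun (M.F β) := symm_cv (Jf_symm M) (M.symm β)

lemma m0_J : m0 (Jf M) = 1 := by
  unfold m0 Jf
  rw [← ENNReal.ofReal_tsum_of_nonneg M.K.nonneg M.K.summable, M.K.norm_one]; simp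

lemma sigma_sq : M.sigma ^ 2 = ∑' x, sqNorm x * M.K.J x := by
  unfold Model.sigma AdmissibleKernel.sigma
  rw [Real.sq_sqrt]
  exact tsum_nonneg fun x => mul_nonneg (sqNorm_nonneg x) (M.K.nonneg x)

lemma m2_J : m2 (Jf M) = ENNReal.ofReal (M.sigma ^ 2) := by
  rw [sigma_sq, ENNReal.ofReal_tsum_of_nonneg
    (fun x => mul_nonneg (sqNorm_nonneg x) (M.K.nonneg x)) M.K.summable_sq]
  exact tsum_congr fun x => (ENNReal.ofReal_mul (sqNorm_nonneg x)).symm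

lemma R_le (hc : 0 < c₀) : M.K.R ≤ M.sigma / c₀ := by
  rw [le_div_iff₀ hc, mul_comm]; exact M.K.sigma_lower

lemma sigma_pos (hc : 0 < c₀) : 0 < M.sigma := by
  have := M.K.sigma_lower
  have h2 := M.K.R_ge_one
  have h3 : 0 < c₀ * M.K.R := by positivity
  exact h3.trans_le this

lemma sigma_sq_le : M.sigma ^ 2 ≤ d * M.K.R ^ 2 := by
  rw [sigma_sq]
  have h : ∀ x, sqNorm x * M.K.J x ≤ d * M.K.R ^ 2 * M.K.J x := by
    intro x
    rcases (M.K.nonneg x).eq_or_lt with h | h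
    · rw [← h]; simp
    · refine mul_le_mul_of_nonneg_right ((sqNorm_le x).trans ?_) h.le
      have := M.K.range_le x h
      have := supNorm_nonneg x
      gcongr
  calc _ ≤ ∑' x, d * M.K.R ^ 2 * M.K.J x :=
        M.K.summable_sq.tsum_le_tsum h (M.K.summable.mul_left _)
    _ = _ := by rw [tsum_mul_left, M.K.norm_one, mul_one]

lemma m0_F (β : ℝ) : m0 (M.F β) = m0 (M.G β) := by rw [F_eq, m0_cv, m0_J, one_mul]

lemma m2_F (β : ℝ) : m2 (M.F β) = m2 (M.G β) + ENNReal.ofReal (M.sigma ^ 2) * m0 (M.G β) := by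
  rw [F_eq, m2_cv _ _ (symm_even (M.symm β)), m0_J, m2_J, one_mul, add_comm]

lemma G_zero : M.G 0 = e0 := by funext x; rw [M.init]; rfl

lemma F_zero : M.F 0 = Jf M := by rw [F_eq, cv_comm, G_zero, cv_e0]

lemma m0_e0 : m0 (e0 : (Fin d → ℤ) → ℝ≥0∞) = 1 := by
  unfold m0 e0; rw [tsum_eq_single 0] <;> simp +contextual

variable {M}

lemma m0_G_ne_top {β : ℝ} (h : ok M β) : m0 (M.G β) ≠ ⊤ := by
  obtain ⟨C, hC, c, hc, hh⟩ := M.expDecay h.1 h.2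
  exact m0_ne_top_of_exp hC hc hh

lemma m2_G_ne_top {β : ℝ} (h : ok M β) : m2 (M.G β) ≠ ⊤ := by
  obtain ⟨C, hC, c, hc, hh⟩ := M.expDecay h.1 h.2
  exact m2_ne_top_of_exp hC hc hh

lemma m2_F_ne_top {β : ℝ} (h : ok M β) : m2 (M.F β) ≠ ⊤ := by
  rw [m2_F]
  exact ENNReal.add_ne_top.2 ⟨m2_G_ne_top h, ENNReal.mul_ne_top ENNReal.ofReal_ne_top (m0_G_ne_top h)⟩

lemma G_mono {β β' : ℝ} (h : ENNReal.ofReal β ≤ M.βc) (h0 : 0 ≤ β') (hh : β' ≤ β)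
    (x : Fin d → ℤ) : M.G β' x ≤ M.G β x := M.mono x h0 hh h

lemma F_mono {β β' : ℝ} (h : ENNReal.ofReal β ≤ M.βc) (h0 : 0 ≤ β') (hh : β' ≤ β)
    (x : Fin d → ℤ) : M.F β' x ≤ M.F β x := cv_mono (fun _ => le_rfl) (G_mono h h0 hh) x

lemma one_le_m0_G {β : ℝ} (h0 : 0 ≤ β) (h : ENNReal.ofReal β ≤ M.βc) : 1 ≤ m0 (M.G β) := by
  have := m0_mono (G_mono h le_rfl h0)
  rwa [G_zero, m0_e0] at this

lemma I1' {β' β : ℝ} (h : ok M β) (h0 : 0 ≤ β') (hh : β' ≤ β) (x : Fin d → ℤ) :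
    M.G β x ≤ M.G β' x + ENNReal.ofReal (β - β') * cv (M.G β') (M.F β) x := by
  refine (M.I1 h0 hh h.2 x).trans_eq ?_
  congr 2
  rw [ENNReal.tsum_prod']
  unfold cv
  refine tsum_congr fun y => ?_
  unfold Model.F
  rw [← ENNReal.tsum_mul_left]
  exact tsum_congr fun z => by ring

lemma I1F {β' β : ℝ} (h : ok M β) (h0 : 0 ≤ β') (hh : β' ≤ β) (x : Fin d → ℤ) :
    M.F β x ≤ M.F β' x + ENNReal.ofReal (β - β') * cv (M.F β') (M.F β) x := by
  have := cv_mono (f := Jf M) (fun _ => le_rfl) (I1' h h0 hh) x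
  rw [cv_add, cv_smul, ← cv_assoc] at this
  exact this

def ch (M : Model d c₀) (β : ℝ) : ℝ := (m0 (M.G β)).toReal
def vG (M : Model d c₀) (β : ℝ) : ℝ := (m2 (M.G β)).toReal
def vv (M : Model d c₀) (β : ℝ) : ℝ := (m2 (M.F β)).toReal

lemma ofReal_ch {β : ℝ} (h : ok M β) : ENNReal.ofReal (ch M β) = m0 (M.G β) :=
  ENNReal.ofReal_toReal (m0_G_ne_top h)
lemma ofReal_vv {β : ℝ} (h : ok M β) : ENNReal.ofReal (vv M β) = m2 (M.F β) :=
  ENNReal.ofReal_toReal (m2_F_ne_top h)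

lemma one_le_ch {β : ℝ} (h : ok M β) : 1 ≤ ch M β := by
  have := ENNReal.toReal_mono (m0_G_ne_top h) (one_le_m0_G h.1 h.2.le)
  simpa [ch] using this

lemma ch_zero : ch M 0 = 1 := by unfold ch; rw [G_zero, m0_e0]; simp

lemma vv_eq {β : ℝ} (h : ok M β) : vv M β = vG M β + M.sigma ^ 2 * ch M β := by
  unfold vv vG ch
  rw [m2_F, ENNReal.toReal_add (m2_G_ne_top h)
    (ENNReal.mul_ne_top ENNReal.ofReal_ne_top (m0_G_ne_top h)), ENNReal.toReal_mul,
    ENNReal.toReal_ofReal (sq_nonneg _)]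

lemma vG_nonneg {β : ℝ} : 0 ≤ vG M β := ENNReal.toReal_nonneg

lemma vv_zero : vv M 0 = M.sigma ^ 2 := by
  unfold vv; rw [F_zero, m2_J, ENNReal.toReal_ofReal (sq_nonneg _)]

lemma le_vv {β : ℝ} (h : ok M β) : M.sigma ^ 2 * ch M β ≤ vv M β := by
  rw [vv_eq h]; have := vG_nonneg (M := M) (β := β); linarith

lemma vv_pos (hc : 0 < c₀) {β : ℝ} (h : ok M β) : 0 < vv M β := by
  have h1 := le_vv h
  have h2 := one_le_ch h
  have h3 := sigma_pos M hc
  have : 0 < M.sigma ^ 2 * ch M β := by positivity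
  linarith

lemma xiSq_eq' (hc : 0 < c₀) {β : ℝ} (h : ok M β) :
    M.xiSq β = ENNReal.ofReal (vv M β / ch M β) := by
  have := one_le_ch h
  rw [xiSq_eq, ← ofReal_ch h, ← ofReal_vv h, ENNReal.ofReal_div_of_pos (by linarith)]

lemma xi_sq (hc : 0 < c₀) {β : ℝ} (h : ok M β) : M.xi β ^ 2 = vv M β / ch M β := by
  have h1 := one_le_ch h
  have h2 := vv_pos hc h
  have h3 : 0 ≤ vv M β / ch M β := by positivity
  unfold Model.xi
  rw [xiSq_eq' hc h, ENNReal.toReal_ofReal h3, Real.sq_sqrt h3]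

lemma sigma_le_xi (hc : 0 < c₀) {β : ℝ} (h : ok M β) : M.sigma ≤ M.xi β := by
  have h1 := one_le_ch h
  have h2 := le_vv h
  have : M.sigma ^ 2 ≤ M.xi β ^ 2 := by
    rw [xi_sq hc h, le_div_iff₀ (by linarith)]; exact h2
  exact (pow_le_pow_iff_left₀ (sigma_pos M hc).le (Real.sqrt_nonneg _) two_ne_zero).1 this

lemma ch_mono {β β' : ℝ} (h : ok M β) (h0 : 0 ≤ β') (hh : β' ≤ β) : ch M β' ≤ ch M β :=
  ENNReal.toReal_mono (m0_G_ne_top h) (m0_mono (G_mono h.2.le h0 hh))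
lemma vv_mono {β β' : ℝ} (h : ok M β) (h0 : 0 ≤ β') (hh : β' ≤ β) : vv M β' ≤ vv M β :=
  ENNReal.toReal_mono (m2_F_ne_top h) (m2_mono (F_mono h.2.le h0 hh))

lemma ch_incr {β β' : ℝ} (h : ok M β) (h0 : 0 ≤ β') (hh : β' ≤ β) :
    ch M β ≤ ch M β' + (β - β') * (ch M β' * ch M β) := by
  have h' := ok_mono h h0 hh
  have := m0_mono (I1F h h0 hh)
  rw [m0_add, m0_smul, m0_cv, m0_F, m0_F, ← ofReal_ch h, ← ofReal_ch h'] at this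
  have c1 := one_le_ch h
  have c2 := one_le_ch h'
  rw [← ENNReal.ofReal_mul (by linarith), ← ENNReal.ofReal_mul (by linarith),
    ← ENNReal.ofReal_add (by linarith) (mul_nonneg (by linarith) (by positivity))] at this
  exact (ENNReal.ofReal_le_ofReal_iff (add_nonneg (by linarith) (mul_nonneg (by linarith) (by positivity)))).1 this

lemma vv_incr {β β' : ℝ} (h : ok M β) (h0 : 0 ≤ β') (hh : β' ≤ β) :
    vv M β ≤ vv M β' + (β - β') * (vv M β' * ch M β + ch M β' * vv M β) := by
  have h' := ok_mono h h0 hh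
  have := m2_mono (I1F h h0 hh)
  rw [m2_add, m2_smul, m2_cv _ _ (symm_even (F_symm M β)), m0_F, m0_F, ← ofReal_ch h,
    ← ofReal_ch h', ← ofReal_vv h, ← ofReal_vv h'] at this
  have c1 := one_le_ch h
  have c2 := one_le_ch h'
  have v1 : 0 ≤ vv M β := ENNReal.toReal_nonneg
  have v2 : 0 ≤ vv M β' := ENNReal.toReal_nonneg
  have hb : 0 ≤ β - β' := by linarith
  rw [← ENNReal.ofReal_mul v2, ← ENNReal.ofReal_mul (by linarith),
    ← ENNReal.ofReal_add (by positivity) (by positivity),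
    ← ENNReal.ofReal_mul hb, ← ENNReal.ofReal_add v2 (by positivity)] at this
  exact (ENNReal.ofReal_le_ofReal_iff (by positivity)).1 this

lemma lip_cont {f : ℝ → ℝ} {a b L : ℝ} (hL : 0 ≤ L)
    (h1 : ∀ x ∈ Set.Icc a b, ∀ y ∈ Set.Icc a b, x ≤ y → f x ≤ f y)
    (h2 : ∀ x ∈ Set.Icc a b, ∀ y ∈ Set.Icc a b, x ≤ y → f y ≤ f x + (y - x) * L) :
    ContinuousOn f (Set.Icc a b) := by
  have : LipschitzOnWith (Real.toNNReal L) f (Set.Icc a b) := by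
    refine LipschitzOnWith.of_dist_le_mul fun x hx y hy => ?_
    rw [Real.coe_toNNReal _ hL, Real.dist_eq, Real.dist_eq]
    rcases le_total x y with h | h
    · rw [abs_of_nonpos (by linarith [h1 x hx y hy h]), abs_of_nonpos (by linarith)]
      linarith [h2 x hx y hy h]
    · rw [abs_of_nonneg (by linarith [h1 y hy x hx h]), abs_of_nonneg (by linarith)]
      linarith [h2 y hy x hx h]
  exact this.continuousOn

lemma ch_cont {b : ℝ} (h : ok M b) : ContinuousOn (ch M) (Set.Icc 0 b) := by
  have hb := one_le_ch h
  refine lip_cont (L := ch M b * ch M b) (by positivity) ?_ ?_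
  · intro x hx y hy hxy; exact ch_mono (ok_mono h hy.1 hy.2) hx.1 hxy
  · intro x hx y hy hxy
    have hy' := ok_mono h hy.1 hy.2
    refine (ch_incr hy' hx.1 hxy).trans ?_
    have := ch_mono h hx.1 hx.2
    have := ch_mono h hy.1 hy.2
    have := one_le_ch hy'
    have : 0 ≤ y - x := by linarith
    gcongr

lemma vv_cont {b : ℝ} (h : ok M b) : ContinuousOn (vv M) (Set.Icc 0 b) := by
  have hb := one_le_ch h
  have v1 : ∀ β, 0 ≤ vv M β := fun _ => ENNReal.toReal_nonneg
  refine lip_cont (L := vv M b * ch M b + ch M b * vv M b)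
    (by have := v1 b; positivity) ?_ ?_
  · intro x hx y hy hxy; exact vv_mono (ok_mono h hy.1 hy.2) hx.1 hxy
  · intro x hx y hy hxy
    have hy' := ok_mono h hy.1 hy.2
    refine (vv_incr hy' hx.1 hxy).trans ?_
    have := ch_mono h hx.1 hx.2
    have := ch_mono h hy.1 hy.2
    have := vv_mono h hx.1 hx.2
    have := vv_mono h hy.1 hy.2
    have := one_le_ch hy'
    have : 0 ≤ y - x := by linarith
    have := v1 y
    have := v1 b
    gcongr

lemma xi_cont (hc : 0 < c₀) {b : ℝ} (h : ok M b) : ContinuousOn M.xi (Set.Icc 0 b) := by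
  have : ContinuousOn (fun t => Real.sqrt (vv M t / ch M t)) (Set.Icc 0 b) :=
    ((vv_cont h).div (ch_cont h) fun t ht => by
      have := one_le_ch (ok_mono h ht.1 ht.2); linarith).sqrt
  refine this.congr fun t ht => ?_
  have ht' := ok_mono h ht.1 ht.2
  change M.xi t = Real.sqrt (vv M t / ch M t)
  rw [← xi_sq hc ht', Real.sqrt_sq (show 0 ≤ M.xi t from Real.sqrt_nonneg _)]

lemma xi_zero : M.xi 0 = M.sigma := by
  unfold Model.xi
  rw [xiSq_eq, F_zero, m2_J, G_zero, m0_e0, div_one, ENNReal.toReal_ofReal (sq_nonneg _),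
    Real.sqrt_sq (show 0 ≤ M.sigma from Real.sqrt_nonneg _)]

end BB
end

section
open Blackbox
namespace BB
variable {d : ℕ} {c₀ : ℝ} {M : Model d c₀}
open Filter Topology

def Hf (M : Model d c₀) (t : ℝ) (x : Fin d → ℤ) : ℝ≥0∞ := ENNReal.ofReal (M.H t x)

lemma m0_H_ne_top {β : ℝ} (h : ok M β) : m0 (Hf M β) ≠ ⊤ := by
  obtain ⟨C, hC, c, hc, hh⟩ := M.H_expDecay h.1 h.2
  exact m0_ne_top_of_exp hC hc fun x => ENNReal.ofReal_le_ofReal (hh x)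

lemma m2_H_ne_top {β : ℝ} (h : ok M β) : m2 (Hf M β) ≠ ⊤ := by
  obtain ⟨C, hC, c, hc, hh⟩ := M.H_expDecay h.1 h.2
  exact m2_ne_top_of_exp hC hc fun x => ENNReal.ofReal_le_ofReal (hh x)

lemma cv_ne_top {f g : (Fin d → ℤ) → ℝ≥0∞} (hf : m0 f ≠ ⊤) (hg : m0 g ≠ ⊤) (x : Fin d → ℤ) :
    cv f g x ≠ ⊤ := by
  have h : m0 (cv f g) ≠ ⊤ := by rw [m0_cv]; exact ENNReal.mul_ne_top hf hg
  exact ENNReal.ne_top_of_tsum_ne_top h x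

lemma pair_tsum (f g h : (Fin d → ℤ) → ℝ≥0∞) (x : Fin d → ℤ) :
    cv f (cv g h) x = ∑' p : (Fin d → ℤ) × (Fin d → ℤ), f p.1 * g p.2 * h (x - p.1 - p.2) := by
  rw [ENNReal.tsum_prod']
  refine tsum_congr fun y => ?_
  unfold cv
  rw [← ENNReal.tsum_mul_left]
  exact tsum_congr fun z => by ring

lemma real_pair {f g h : (Fin d → ℤ) → ℝ≥0∞} {x : Fin d → ℤ} (hf : cv f (cv g h) x ≠ ⊤) :
    HasSum (fun p : (Fin d → ℤ) × (Fin d → ℤ) =>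
      (f p.1).toReal * (g p.2).toReal * (h (x - p.1 - p.2)).toReal) (cv f (cv g h) x).toReal := by
  rw [pair_tsum] at hf ⊢
  have h1 := ENNReal.summable_toReal hf
  have h2 := h1.hasSum
  rw [← ENNReal.tsum_toReal_eq (fun a => ENNReal.ne_top_of_tsum_ne_top hf a)] at h2
  simpa [ENNReal.toReal_mul] using h2

lemma I2' {t : ℝ} (h : ok M t) (x : Fin d → ℤ) :
    (cv (M.G t) (M.F t) x).toReal - (cv (M.G t) (cv (Hf M t) (M.G t)) x).toReal ≤ M.G' t x := by
  refine le_trans (le_of_eq ?_) (M.I2 h.1 h.2 x)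
  have hG := m0_G_ne_top h
  have hF : m0 (M.F t) ≠ ⊤ := by rw [m0_F]; exact hG
  have hHG : m0 (cv (Hf M t) (M.G t)) ≠ ⊤ := by
    rw [m0_cv]; exact ENNReal.mul_ne_top (m0_H_ne_top h) hG
  have a := real_pair (f := M.G t) (g := Jf M) (h := M.G t) (x := x) (cv_ne_top hG hF x)
  have b := real_pair (f := M.G t) (g := Hf M t) (h := M.G t) (x := x) (cv_ne_top hG hHG x)
  rw [F_eq, ← (a.sub b).tsum_eq]
  refine tsum_congr fun p => ?_
  simp only [Jf, Hf, ENNReal.toReal_ofReal (M.K.nonneg _), ENNReal.toReal_ofReal (M.H_nonneg _ _)]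
  ring

lemma wsum {w : (Fin d → ℤ) → ℝ} (hw : ∀ x, 0 ≤ w x) {f : (Fin d → ℤ) → ℝ≥0∞}
    (hf : ∑' x, ENNReal.ofReal (w x) * f x ≠ ⊤) :
    HasSum (fun x => w x * (f x).toReal) (∑' x, ENNReal.ofReal (w x) * f x).toReal := by
  have h1 := ENNReal.summable_toReal hf
  have h2 := h1.hasSum
  rw [← ENNReal.tsum_toReal_eq (fun a => ENNReal.ne_top_of_tsum_ne_top hf a)] at h2
  simpa [ENNReal.toReal_mul, ENNReal.toReal_ofReal (hw _)] using h2

lemma dini {w : (Fin d → ℤ) → ℝ} (hw : ∀ x, 0 ≤ w x) {t b : ℝ} (h0 : 0 ≤ t) (htb : t < b)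
    (hb : ok M b)
    (hG : ∀ z, ok M z → ∑' x, ENNReal.ofReal (w x) * M.G z x ≠ ⊤)
    (ha : ∑' x, ENNReal.ofReal (w x) * cv (M.G t) (M.F t) x ≠ ⊤)
    (hH : ∑' x, ENNReal.ofReal (w x) * cv (M.G t) (cv (Hf M t) (M.G t)) x ≠ ⊤)
    {r : ℝ} (hr : r < (∑' x, ENNReal.ofReal (w x) * cv (M.G t) (M.F t) x).toReal -
      (∑' x, ENNReal.ofReal (w x) * cv (M.G t) (cv (Hf M t) (M.G t)) x).toReal) :
    ∀ᶠ z in 𝓝[>] t, r * (z - t) ≤ (∑' x, ENNReal.ofReal (w x) * M.G z x).toReal -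
      (∑' x, ENNReal.ofReal (w x) * M.G t x).toReal := by
  have ht : ok M t := ok_mono hb h0 htb.le
  have hs := (wsum hw ha).sub (wsum hw hH)
  obtain ⟨S, hS⟩ := (hs.eventually_const_lt hr).exists
  have hS' : r < ∑ x ∈ S, w x * M.G' t x := by
    refine hS.trans_le (Finset.sum_le_sum fun x _ => ?_)
    rw [← mul_sub]
    exact mul_le_mul_of_nonneg_left (I2' ht x) (hw x)
  have hd : HasDerivWithinAt (fun z => ∑ x ∈ S, w x * (M.G z x).toReal)
      (∑ x ∈ S, w x * M.G' t x) (Set.Ioi t) t := by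
    refine HasDerivWithinAt.fun_sum fun x _ => ?_
    exact ((M.deriv x ht.1 ht.2).mono (fun z (hz : t < z) => h0.trans hz.le)).const_mul _
  rw [hasDerivWithinAt_iff_tendsto_slope' (by simp)] at hd
  filter_upwards [hd.eventually (lt_mem_nhds hS'), self_mem_nhdsWithin,
    Ioo_mem_nhdsGT htb] with z hz1 hz2 hz3
  have hz2 : t < z := hz2
  have hz : ok M z := ok_mono hb (h0.trans hz2.le) hz3.2.le
  rw [slope_def_field, lt_div_iff₀ (by linarith)] at hz1
  refine hz1.le.trans ?_
  have h3 := (wsum hw (hG z hz)).sub (wsum hw (hG t ht))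
  rw [← Finset.sum_sub_distrib]
  refine sum_le_hasSum S (fun x _ => ?_) h3
  rw [← mul_sub]
  refine mul_nonneg (hw x) (sub_nonneg.2 (ENNReal.toReal_mono ?_ (G_mono hz.2.le h0 hz2.le x)))
  exact ENNReal.ne_top_of_tsum_ne_top (m0_G_ne_top hz) x

lemma anti_of_dini {f : ℝ → ℝ} {a b : ℝ} (hab : a ≤ b) (hf : ContinuousOn f (Set.Icc a b))
    (h : ∀ t ∈ Set.Ico a b, ∀ᶠ z in 𝓝[>] t, f z ≤ f t) : f b ≤ f a := by
  have hc : IsClosed ({x | f x ≤ f a} ∩ Set.Icc a b) := by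
    have := hf.preimage_isClosed_of_isClosed isClosed_Icc (isClosed_Iic (a := f a))
    convert this using 1
    ext x; simp [and_comm]
  have := hc.Icc_subset_of_forall_mem_nhdsWithin (le_refl (f a)) (fun x hx => by
    filter_upwards [h x hx.2] with z hz
    exact hz.trans hx.1)
  exact this ⟨hab, le_rfl⟩

def good (M : Model d c₀) (δ β : ℝ) : Prop := ok M β ∧ M.E β < ENNReal.ofReal δ

lemma good_mono {δ β β' : ℝ} (h : good M δ β) (h0 : 0 ≤ β') (hh : β' ≤ β) : good M δ β' := by
  refine ⟨ok_mono h.1 h0 hh, lt_of_le_of_lt ?_ h.2⟩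
  unfold Model.E
  exact biSup_mono fun t ht => ⟨ht.1, ht.2.trans hh⟩

def hh0 (M : Model d c₀) (t : ℝ) : ℝ := (m0 (Hf M t)).toReal
def hh2 (M : Model d c₀) (t : ℝ) : ℝ := (m2 (Hf M t)).toReal

lemma good_H (hc : 0 < c₀) {δ β : ℝ} (hδ : 0 < δ) (h : good M δ β) :
    hh0 M β + hh2 M β * ch M β / vv M β ≤ δ := by
  have h1 : (ENNReal.ofReal (∑' x, M.H β x) +
      ENNReal.ofReal (∑' x, sqNorm x * M.H β x) / M.xiSq β) ≤ M.E β := by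
    unfold Model.E
    exact le_biSup (f := fun t => (ENNReal.ofReal (∑' x, M.H t x) +
      ENNReal.ofReal (∑' x, sqNorm x * M.H t x) / M.xiSq t)) ⟨h.1.1, le_rfl⟩
  have hv := vv_pos hc h.1
  have hch := one_le_ch h.1
  have e1 : ∑' x, M.H β x = hh0 M β := by
    unfold hh0 m0 Hf
    rw [ENNReal.tsum_toReal_eq (fun x => ENNReal.ofReal_ne_top)]
    exact tsum_congr fun x => (ENNReal.toReal_ofReal (M.H_nonneg _ _)).symm
  have e2 : ∑' x, sqNorm x * M.H β x = hh2 M β := by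
    unfold hh2 m2 Hf
    rw [ENNReal.tsum_toReal_eq (fun x => ENNReal.mul_ne_top ENNReal.ofReal_ne_top ENNReal.ofReal_ne_top)]
    refine tsum_congr fun x => ?_
    rw [ENNReal.toReal_mul, ENNReal.toReal_ofReal (M.H_nonneg _ _), ENNReal.toReal_ofReal (sqNorm_nonneg x)]
  have p0 : 0 ≤ hh0 M β := ENNReal.toReal_nonneg
  have p2 : 0 ≤ hh2 M β := ENNReal.toReal_nonneg
  have hx : 0 < vv M β / ch M β := by positivity
  rw [e1, e2, xiSq_eq' hc h.1, ← ENNReal.ofReal_div_of_pos hx, ← ENNReal.ofReal_add p0 (by positivity)] at h1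
  have h2 := (ENNReal.ofReal_le_ofReal_iff hδ.le).1 (h1.trans h.2.le)
  convert h2 using 2
  field_simp

lemma hh0_le (hc : 0 < c₀) {δ β : ℝ} (hδ : 0 < δ) (h : good M δ β) : hh0 M β ≤ δ := by
  have := good_H hc hδ h
  have hv := vv_pos hc h.1
  have hch := one_le_ch h.1
  have p2 : 0 ≤ hh2 M β := ENNReal.toReal_nonneg
  have : 0 ≤ hh2 M β * ch M β / vv M β := by positivity
  linarith

lemma ch_dini (hc : 0 < c₀) {δ b t r : ℝ} (hδ : 0 < δ) (h : good M δ b) (h0 : 0 ≤ t) (htb : t < b)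
    (hr : r < (1 - δ) * ch M t ^ 2) :
    ∀ᶠ z in 𝓝[>] t, r * (z - t) ≤ ch M z - ch M t := by
  have ht := good_mono h h0 htb.le
  have e : ∀ f : (Fin d → ℤ) → ℝ≥0∞, ∑' x, ENNReal.ofReal ((fun _ => (1:ℝ)) x) * f x = m0 f := by
    intro f; simp [m0]
  have hG := m0_G_ne_top ht.1
  have key := dini (M := M) (w := fun _ => 1) (fun _ => zero_le_one) h0 htb h.1 (r := r)
  simp only [e, m0_cv, m0_F] at key
  refine key (fun z hz => m0_G_ne_top hz) (ENNReal.mul_ne_top hG hG)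
    (ENNReal.mul_ne_top hG (ENNReal.mul_ne_top (m0_H_ne_top ht.1) hG)) ?_
  refine hr.trans_le ?_
  have := hh0_le hc hδ ht
  rw [ENNReal.toReal_mul, ENNReal.toReal_mul, ENNReal.toReal_mul]
  change _ ≤ ch M t * ch M t - ch M t * (hh0 M t * ch M t)
  nlinarith [sq_nonneg (ch M t)]

lemma vv_dini (hc : 0 < c₀) {δ b t r : ℝ} (hδ : 0 < δ) (h : good M δ b) (h0 : 0 ≤ t) (htb : t < b)
    (hr : r < (2 - 2 * δ) * (ch M t * vv M t)) :
    ∀ᶠ z in 𝓝[>] t, r * (z - t) ≤ vv M z - vv M t := by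
  have ht := good_mono h h0 htb.le
  have e : ∀ f : (Fin d → ℤ) → ℝ≥0∞, ∑' x, ENNReal.ofReal ((fun x => sqNorm x + M.sigma ^ 2) x) * f x
      = m2 f + ENNReal.ofReal (M.sigma ^ 2) * m0 f := by
    intro f
    unfold m2 m0
    rw [← ENNReal.tsum_mul_left, ← ENNReal.tsum_add]
    refine tsum_congr fun x => ?_
    rw [ENNReal.ofReal_add (sqNorm_nonneg x) (sq_nonneg _), add_mul]
  have hG := m0_G_ne_top ht.1
  have hG2 := m2_G_ne_top ht.1
  have hH := m0_H_ne_top ht.1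
  have hH2 := m2_H_ne_top ht.1
  have hF2 := m2_F_ne_top ht.1
  have hs : ENNReal.ofReal (M.sigma ^ 2) ≠ ⊤ := ENNReal.ofReal_ne_top
  have key := dini (M := M) (w := fun x => sqNorm x + M.sigma ^ 2)
    (fun x => add_nonneg (sqNorm_nonneg x) (sq_nonneg _)) h0 htb h.1 (r := r)
  have evH : ∀ x, Hf M t (-x) = Hf M t x := fun x => by unfold Hf; rw [M.H_symm]
  have evG := symm_even (M.symm t)
  have evF := symm_even (F_symm M t)
  have a1 : cv (M.G t) (cv (Hf M t) (M.G t)) = cv (cv (M.G t) (Hf M t)) (M.G t) := by rw [cv_assoc]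
  simp only [e, a1, m0_cv, m0_F, m2_cv _ _ evG, m2_cv _ _ evH, m2_cv _ _ evF, ← m2_F] at key
  have k2 := key (fun z hz => m2_F_ne_top hz) (by finiteness) (by finiteness)
  refine k2 (hr.trans_le ?_)
  have g1 := good_H hc hδ ht
  have p0 : 0 ≤ hh0 M t := ENNReal.toReal_nonneg
  have p2 : 0 ≤ hh2 M t := ENNReal.toReal_nonneg
  have hv := vv_pos hc ht.1
  have hch := one_le_ch ht.1
  have ve := vv_eq ht.1
  simp (disch := finiteness) only [ENNReal.toReal_add, ENNReal.toReal_mul, ENNReal.toReal_ofReal (sq_nonneg M.sigma)]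
  change _ ≤ vG M t * ch M t + ch M t * vv M t + M.sigma ^ 2 * (ch M t * ch M t) -
    (((vG M t * hh0 M t + ch M t * hh2 M t) * ch M t + ch M t * hh0 M t * vG M t)
     + M.sigma ^ 2 * (ch M t * hh0 M t * ch M t))
  have g2 : hh0 M t * vv M t + hh2 M t * ch M t ≤ δ * vv M t := by
    have := mul_le_mul_of_nonneg_right g1 hv.le
    rw [add_mul, div_mul_cancel₀ _ hv.ne'] at this
    exact this
  have hs2 : vG M t ≤ vv M t := by nlinarith [sq_nonneg M.sigma]
  have g3 : hh0 M t * vG M t ≤ hh0 M t * vv M t := by gcongr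
  have e2 : M.sigma ^ 2 * ch M t = vv M t - vG M t := by linarith
  have : vG M t * ch M t + ch M t * vv M t + M.sigma ^ 2 * (ch M t * ch M t) -
    (((vG M t * hh0 M t + ch M t * hh2 M t) * ch M t + ch M t * hh0 M t * vG M t)
     + M.sigma ^ 2 * (ch M t * hh0 M t * ch M t)) =
     ch M t * (2 * vv M t - (hh0 M t * vv M t + hh0 M t * vG M t + hh2 M t * ch M t)) := by
    linear_combination (ch M t - hh0 M t * ch M t) * e2
  rw [this]
  have hle : (2 - 2 * δ) * vv M t ≤ 2 * vv M t - (hh0 M t * vv M t + hh0 M t * vG M t + hh2 M t * ch M t) := by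
    have : 0 ≤ hh2 M t * ch M t := by positivity
    linarith
  calc _ = ch M t * ((2 - 2 * δ) * vv M t) := by ring
    _ ≤ _ := by gcongr

lemma tendsto_right {f : ℝ → ℝ} {b t : ℝ} (hf : ContinuousOn f (Set.Icc 0 b)) (h0 : 0 ≤ t)
    (htb : t < b) : Tendsto f (𝓝[>] t) (𝓝 (f t)) := by
  have h1 := hf t ⟨h0, htb.le⟩
  refine h1.mono_left ?_
  rw [← nhdsWithin_Ioo_eq_nhdsGT htb]
  exact nhdsWithin_mono _ fun x hx => ⟨h0.trans hx.1.le, hx.2.le⟩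

/-- (a) -/
lemma ch_inv (hc : 0 < c₀) {δ b a : ℝ} (hδ : 0 < δ) (hδ1 : δ < 1 / 4) (h : good M δ b) (h0 : 0 ≤ a) (hab : a ≤ b) :
    (1 - 2 * δ) * (b - a) ≤ 1 / ch M a - 1 / ch M b := by
  have key : (1 / ch M b + (1 - 2 * δ) * b) ≤ (1 / ch M a + (1 - 2 * δ) * a) := by
    refine anti_of_dini (f := fun t => 1 / ch M t + (1 - 2 * δ) * t) hab ?_ ?_
    · refine ContinuousOn.add ?_ (by fun_prop)
      refine ContinuousOn.div continuousOn_const ((ch_cont h.1).mono (Set.Icc_subset_Icc_left h0)) ?_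
      intro t ht
      have := one_le_ch (ok_mono h.1 (h0.trans ht.1) ht.2); linarith
    · intro t ht
      have ht0 := h0.trans ht.1
      have hgt := good_mono h ht0 ht.2.le
      have c1 := one_le_ch hgt.1
      have hp : 0 < ch M t ^ 2 := by positivity
      have e1 := ch_dini hc hδ h ht0 ht.2 (r := (1 - 3 / 2 * δ) * ch M t ^ 2) (by nlinarith)
      have e2 := (tendsto_right (ch_cont h.1) ht0 ht.2).const_mul ((1 - 2 * δ) * ch M t)
      have e3 := e2.eventually (gt_mem_nhds (show (1 - 2 * δ) * ch M t * ch M t < (1 - 3 / 2 * δ) * ch M t ^ 2 by nlinarith))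
      filter_upwards [e1, e3, self_mem_nhdsWithin, Ioo_mem_nhdsGT ht.2] with z h1 h3 hz hz2
      have hz : t < z := hz
      have c2 := one_le_ch (ok_mono h.1 (ht0.trans hz.le) hz2.2.le)
      have : 1 / ch M t - 1 / ch M z = (ch M z - ch M t) / (ch M t * ch M z) := by field_simp
      have h4 : (1 - 2 * δ) * (z - t) ≤ (ch M z - ch M t) / (ch M t * ch M z) := by
        rw [le_div_iff₀ (by positivity)]
        calc _ = (1 - 2 * δ) * ch M t * ch M z * (z - t) := by ring
          _ ≤ (1 - 3 / 2 * δ) * ch M t ^ 2 * (z - t) := by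
            have : 0 ≤ z - t := by linarith
            gcongr
          _ ≤ _ := h1
      linarith
  linarith

/-- (b) -/
lemma vv_log (hc : 0 < c₀) {δ b a : ℝ} (hδ : 0 < δ) (hδ1 : δ < 1 / 4) (h : good M δ b) (h0 : 0 ≤ a) (hab : a ≤ b) :
    (2 - 3 * δ) * Real.log (ch M b / ch M a) ≤ Real.log (vv M b / vv M a) := by
  have key : (2 - 3 * δ) * Real.log (ch M b) - Real.log (vv M b) ≤
      (2 - 3 * δ) * Real.log (ch M a) - Real.log (vv M a) := by
    refine anti_of_dini (f := fun t => (2 - 3 * δ) * Real.log (ch M t) - Real.log (vv M t)) hab ?_ ?_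
    · refine ContinuousOn.sub (continuousOn_const.mul (ContinuousOn.log ((ch_cont h.1).mono (Set.Icc_subset_Icc_left h0)) ?_))
        (ContinuousOn.log ((vv_cont h.1).mono (Set.Icc_subset_Icc_left h0)) ?_)
      · intro t ht
        have := one_le_ch (ok_mono h.1 (h0.trans ht.1) ht.2); linarith
      · intro t ht
        exact (vv_pos hc (ok_mono h.1 (h0.trans ht.1) ht.2)).ne'
    · intro t ht
      have ht0 := h0.trans ht.1
      have hgt := good_mono h ht0 ht.2.le
      have c1 := one_le_ch hgt.1
      have v1 := vv_pos hc hgt.1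
      have hp : 0 < ch M t * vv M t := by positivity
      have e1 := vv_dini hc hδ h ht0 ht.2 (r := (2 - 5 / 2 * δ) * (ch M t * vv M t)) (by nlinarith)
      have e2 := ((tendsto_right (ch_cont h.1) ht0 ht.2).mul (tendsto_right (vv_cont h.1) ht0 ht.2)).const_mul (2 - 3 * δ)
      have e3 := e2.eventually (gt_mem_nhds (show (2 - 3 * δ) * (ch M t * vv M t) < (2 - 5 / 2 * δ) * (ch M t * vv M t) by nlinarith))
      filter_upwards [e1, e3, self_mem_nhdsWithin, Ioo_mem_nhdsGT ht.2] with z h1 h3 hz hz2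
      have hz : t < z := hz
      have hzok := (ok_mono h.1 (ht0.trans hz.le) hz2.2.le)
      have c2 := one_le_ch hzok
      have v2 := vv_pos hc hzok
      have hzt : 0 ≤ z - t := by linarith
      have l1 : Real.log (ch M z) - Real.log (ch M t) ≤ (z - t) * ch M z := by
        rw [← Real.log_div (by linarith) (by linarith)]
        refine (Real.log_le_sub_one_of_pos (by positivity)).trans ?_
        have := ch_incr hzok ht0 hz.le
        rw [div_sub_one (by linarith), div_le_iff₀ (by linarith)]
        linarith
      have l2 : (2 - 3 * δ) * (ch M z * (z - t)) ≤ Real.log (vv M z) - Real.log (vv M t) := by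
        have := Real.log_le_sub_one_of_pos (show 0 < vv M t / vv M z by positivity)
        rw [Real.log_div (by linarith) (by linarith), div_sub_one (by linarith)] at this
        have h5 : (2 - 3 * δ) * (ch M z * (z - t)) ≤ -((vv M t - vv M z) / vv M z) := by
          rw [← neg_div, le_div_iff₀ v2]
          calc _ = (2 - 3 * δ) * (ch M z * vv M z) * (z - t) := by ring
            _ ≤ (2 - 5 / 2 * δ) * (ch M t * vv M t) * (z - t) := by gcongr
            _ ≤ _ := by linarith
        linarith
      have l3 := mul_le_mul_of_nonneg_left l1 (show (0:ℝ) ≤ 2 - 3 * δ by linarith)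
      linarith
  have hb := one_le_ch h.1
  have ha := one_le_ch (ok_mono h.1 h0 hab)
  have vb := vv_pos hc h.1
  have va := vv_pos hc (ok_mono h.1 h0 hab)
  rw [Real.log_div (by linarith) (by linarith), Real.log_div (by linarith) (by linarith)]
  linarith

/-- ξ ratio -/
lemma xi_ratio (hc : 0 < c₀) {δ b a : ℝ} (hδ : 0 < δ) (hδ1 : δ < 1 / 4) (h : good M δ b) (h0 : 0 ≤ a) (hab : a ≤ b) :
    (ch M b / ch M a) ^ (1 - 3 * δ) ≤ (M.xi b / M.xi a) ^ 2 := by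
  have hb := one_le_ch h.1
  have ha' := ok_mono h.1 h0 hab
  have ha := one_le_ch ha'
  have vb := vv_pos hc h.1
  have va := vv_pos hc ha'
  have key := vv_log hc hδ hδ1 h h0 hab
  have e : (M.xi b / M.xi a) ^ 2 = (vv M b / vv M a) / (ch M b / ch M a) := by
    rw [div_pow, xi_sq hc h.1, xi_sq hc ha']; field_simp
  have p1 : 0 < ch M b / ch M a := by positivity
  have p2 : 0 < vv M b / vv M a := by positivity
  rw [e, ← Real.log_le_log_iff (by positivity) (by positivity), Real.log_rpow p1, Real.log_div p2.ne' p1.ne']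
  linarith

lemma xi_mono (hc : 0 < c₀) {δ b a : ℝ} (hδ : 0 < δ) (hδ1 : δ < 1 / 4) (h : good M δ b) (h0 : 0 ≤ a) (hab : a ≤ b) :
    M.xi a ≤ M.xi b := by
  have hr := xi_ratio hc hδ hδ1 h h0 hab
  have ha' := ok_mono h.1 h0 hab
  have ha := one_le_ch ha'
  have h1 : 1 ≤ ch M b / ch M a := by
    rw [one_le_div (by linarith)]; exact ch_mono h.1 h0 hab
  have h2 := (Real.one_le_rpow h1 (show 0 ≤ 1 - 3 * δ by linarith)).trans hr
  have hx : 0 < M.xi a := (sigma_pos M hc).trans_le (sigma_le_xi hc ha')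
  have hy : 0 < M.xi b := (sigma_pos M hc).trans_le (sigma_le_xi hc h.1)
  rw [div_pow, one_le_div (by positivity)] at h2
  exact (pow_le_pow_iff_left₀ hx.le hy.le two_ne_zero).1 h2

lemma beta_ch (hc : 0 < c₀) {δ b a : ℝ} (hδ : 0 < δ) (hδ1 : δ < 1 / 4) (h : good M δ b) (h0 : 0 ≤ a) (hab : a ≤ b) :
    (b - a) * ch M a ≤ (1 + 4 * δ) * (1 - ch M a / ch M b) := by
  have hb := one_le_ch h.1
  have ha' := ok_mono h.1 h0 hab
  have ha := one_le_ch ha'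
  have h1 := ch_inv hc hδ hδ1 h h0 hab
  have h2 := mul_le_mul_of_nonneg_right h1 (show 0 ≤ ch M a by linarith)
  have e : (1 / ch M a - 1 / ch M b) * ch M a = 1 - ch M a / ch M b := by field_simp
  rw [e] at h2
  have h3 : 0 ≤ (b - a) * ch M a := mul_nonneg (by linarith) (by linarith)
  have h4 : (1:ℝ) ≤ (1 + 4 * δ) * (1 - 2 * δ) := by nlinarith
  calc (b - a) * ch M a ≤ ((1 + 4 * δ) * (1 - 2 * δ)) * ((b - a) * ch M a) := le_mul_of_one_le_left h3 h4
    _ = (1 + 4 * δ) * ((1 - 2 * δ) * (b - a) * ch M a) := by ring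
    _ ≤ _ := by gcongr

end BB
end

section
open Blackbox
namespace BB
variable {d : ℕ}
open Filter Topology

lemma cosh_bound {r y : ℝ} (hr : |r| ≤ 1) :
    Real.cosh (r * y) ≤ 1 + r ^ 2 * y ^ 2 / 2 + r ^ 4 * Real.cosh y := by
  have h1 := Real.hasSum_cosh (r * y)
  have h2 := (Real.hasSum_cosh y).mul_left (r ^ 4)
  have h3 : HasSum (fun n : ℕ => if n = 0 then (1:ℝ) else if n = 1 then r ^ 2 * y ^ 2 / 2 else 0)
      (1 + r ^ 2 * y ^ 2 / 2) := by
    have := hasSum_sum_of_ne_finset_zero (L := SummationFilter.unconditional ℕ) (f := fun n : ℕ => if n = 0 then (1:ℝ) else if n = 1 then r ^ 2 * y ^ 2 / 2 else 0)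
      (s := Finset.range 2) (by
        intro n hn
        have : 1 < n := by simpa using hn
        rw [if_neg (by omega), if_neg (by omega)])
    simpa [Finset.sum_range_succ] using this
  have h4 := h3.add h2
  refine hasSum_le (fun n => ?_) h1 h4
  have p4 : 0 ≤ r ^ 4 := by positivity
  have hy : 0 ≤ y ^ (2 * n) / ((2 * n).factorial : ℝ) := by
    have : 0 ≤ y ^ (2 * n) := by rw [pow_mul]; positivity
    positivity
  match n with
  | 0 => simp; positivity
  | 1 =>
    have : 0 ≤ r ^ 4 * (y ^ 2 / 2) := by positivity
    norm_num [Nat.factorial, mul_pow] 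
    positivity
  | (n+2) =>
    simp only [show n + 2 ≠ 0 by omega, show n + 2 ≠ 1 by omega, if_false, zero_add]
    rw [mul_pow, mul_div_assoc]
    refine mul_le_mul_of_nonneg_right ?_ hy
    have e1 : r ^ (2 * (n + 2)) = |r| ^ (2 * (n + 2)) := by
      rw [pow_mul, pow_mul, sq_abs]
    have e2 : r ^ 4 = |r| ^ 4 := by
      rw [show (4:ℕ) = 2 * 2 from rfl, pow_mul, pow_mul, sq_abs]
    rw [e1, e2]
    exact pow_le_pow_of_le_one (abs_nonneg r) hr (by omega)

def mc (i : Fin d) (f : (Fin d → ℤ) → ℝ≥0∞) : ℝ≥0∞ :=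
  ∑' x, ENNReal.ofReal ((x i : ℝ) ^ 2) * f x

lemma me_neg {f : (Fin d → ℤ) → ℝ≥0∞} (hf : IsSymmFun f) (i : Fin d) (s : ℝ) :
    me i (-s) f = me i s f := by
  unfold me
  rw [← (Equiv.neg (Fin d → ℤ)).tsum_eq]
  refine tsum_congr fun x => ?_
  simp [symm_even hf]

lemma me_cosh {f : (Fin d → ℤ) → ℝ≥0∞} (hf : IsSymmFun f) (i : Fin d) (s : ℝ) :
    me i s f = ∑' x, ENNReal.ofReal (Real.cosh (s * (x i : ℝ))) * f x := by
  have h : me i s f + me i s f = 2 * ∑' x, ENNReal.ofReal (Real.cosh (s * (x i : ℝ))) * f x := by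
    nth_rewrite 2 [← me_neg hf]
    unfold me
    rw [← ENNReal.tsum_add, ← ENNReal.tsum_mul_left]
    refine tsum_congr fun x => ?_
    rw [← add_mul, ← mul_assoc, ← ENNReal.ofReal_add (by positivity) (by positivity)]
    congr 1
    rw [show (2:ℝ≥0∞) = ENNReal.ofReal 2 by simp, ← ENNReal.ofReal_mul (by norm_num), Real.cosh_eq]
    congr 1
    rw [neg_mul]; ring
  rw [← two_mul] at h
  exact (ENNReal.mul_right_inj (by simp) (by simp)).1 h

lemma mc_perm {f : (Fin d → ℤ) → ℝ≥0∞} (hf : IsSymmFun f) (i j : Fin d) : mc i f = mc j f := by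
  unfold mc
  rw [← (symE (Equiv.swap i j) (fun _ => false)).tsum_eq]
  refine tsum_congr fun x => ?_
  have : f (symE (Equiv.swap i j) (fun _ => false) x) = f x := hf _ _ x
  rw [this]
  simp [symE]

lemma sum_mc (f : (Fin d → ℤ) → ℝ≥0∞) : ∑ i, mc i f = m2 f := by
  unfold mc m2 sqNorm
  rw [← Summable.tsum_finsetSum (fun _ _ => ENNReal.summable)]
  refine tsum_congr fun x => ?_
  rw [ENNReal.ofReal_sum_of_nonneg (fun i _ => sq_nonneg _), Finset.sum_mul]

lemma mc_eq {f : (Fin d → ℤ) → ℝ≥0∞} (hf : IsSymmFun f) (i : Fin d) : (d:ℝ≥0∞) * mc i f = m2 f := by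
  rw [← sum_mc, Finset.sum_congr rfl (fun j _ => mc_perm hf j i)]
  simp

lemma mc_eq' {f : (Fin d → ℤ) → ℝ≥0∞} (hf : IsSymmFun f) (i : Fin d) {v : ℝ}
    (hv : m2 f = ENNReal.ofReal v) : mc i f = ENNReal.ofReal (v / d) := by
  have hd : 0 < d := i.pos
  have hd' : (0:ℝ) < d := by exact_mod_cast hd
  have := mc_eq hf i
  rw [ENNReal.ofReal_div_of_pos hd', ← hv, ENNReal.ofReal_natCast, ← this]
  rw [mul_comm, ENNReal.mul_div_cancel_right (by exact_mod_cast hd.ne') (by simp)]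

/-- moment generating function bound -/
lemma me_bound {f : (Fin d → ℤ) → ℝ≥0∞} (hf : IsSymmFun f) {χ u s0 s : ℝ} (hu : 0 < u)
    (hs0 : 0 < s0) (hs : |s| ≤ s0) (hχ : 0 ≤ χ) (h0 : m0 f = ENNReal.ofReal χ)
    (h2 : m2 f = ENNReal.ofReal (u ^ 2 * χ)) (i : Fin d)
    (hm : me i (s0 / u) f ≤ ENNReal.ofReal (2 * χ)) :
    me i (s / u) f ≤ ENNReal.ofReal (χ * (1 + s ^ 2 / (2 * d) + 2 * (s / s0) ^ 4)) := by
  have hd : 0 < d := i.pos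
  have hd' : (0:ℝ) < d := by exact_mod_cast hd
  have hr : |s / s0| ≤ 1 := by
    rw [abs_div, abs_of_pos hs0, div_le_one hs0]; exact hs
  have key : ∀ x : Fin d → ℤ, ENNReal.ofReal (Real.cosh (s / u * (x i : ℝ))) * f x ≤
      f x + ENNReal.ofReal (s ^ 2 / (2 * u ^ 2)) * (ENNReal.ofReal ((x i : ℝ) ^ 2) * f x)
      + ENNReal.ofReal ((s / s0) ^ 4) * (ENNReal.ofReal (Real.cosh (s0 / u * (x i : ℝ))) * f x) := by
    intro x
    have h := cosh_bound (r := s / s0) (y := s0 / u * (x i : ℝ)) hr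
    have e1 : s / s0 * (s0 / u * (x i : ℝ)) = s / u * (x i : ℝ) := by field_simp
    have e2 : (s / s0) ^ 2 * (s0 / u * (x i : ℝ)) ^ 2 / 2 = s ^ 2 / (2 * u ^ 2) * (x i : ℝ) ^ 2 := by
      field_simp
    rw [e1, e2] at h
    have hc := Real.cosh_pos (s0 / u * (x i : ℝ))
    calc _ ≤ ENNReal.ofReal (1 + s ^ 2 / (2 * u ^ 2) * (x i : ℝ) ^ 2 +
          (s / s0) ^ 4 * Real.cosh (s0 / u * (x i : ℝ))) * f x := by gcongr
      _ = _ := by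
        rw [ENNReal.ofReal_add (by positivity) (by positivity), ENNReal.ofReal_add (by positivity) (by positivity),
          ENNReal.ofReal_mul (by positivity), ENNReal.ofReal_mul (by positivity), ENNReal.ofReal_one]
        ring
  rw [me_cosh hf]
  refine (ENNReal.tsum_le_tsum key).trans ?_
  rw [ENNReal.tsum_add, ENNReal.tsum_add, ENNReal.tsum_mul_left, ENNReal.tsum_mul_left, ← me_cosh hf]
  change m0 f + _ * mc i f + _ ≤ _
  rw [mc_eq' hf i h2, h0, ← ENNReal.ofReal_mul (by positivity),
    ← ENNReal.ofReal_add hχ (by positivity)]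
  calc _ ≤ ENNReal.ofReal (χ + s ^ 2 / (2 * u ^ 2) * (u ^ 2 * χ / d)) +
        ENNReal.ofReal ((s / s0) ^ 4) * ENNReal.ofReal (2 * χ) := by gcongr
    _ = _ := by
      rw [← ENNReal.ofReal_mul (by positivity), ← ENNReal.ofReal_add (by positivity) (by positivity)]
      congr 1
      field_simp

end BB
end

section
open Blackbox
namespace BB
variable {d : ℕ}
open Filter Topology

structure Stp (u s0 : ℝ) (p : (Fin d → ℤ) → ℝ≥0∞) : Prop where
  symm : IsSymmFun p
  m0 : m0 p = 1
  m2 : m2 p = ENNReal.ofReal (u ^ 2)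
  me : ∀ i, me i (s0 / u) p ≤ 2

def dt (θ : Fin d → ℝ) (x : Fin d → ℤ) : ℝ := ∑ i, θ i * (x i : ℝ)

lemma dt_sub (θ : Fin d → ℝ) (x y : Fin d → ℤ) : dt θ (x - y) = dt θ x - dt θ y := by
  unfold dt; rw [← Finset.sum_sub_distrib]; refine Finset.sum_congr rfl fun i _ => ?_
  simp; ring

lemma dt_neg (θ : Fin d → ℝ) (x : Fin d → ℤ) : dt θ (-x) = - dt θ x := by
  unfold dt; simp

variable {p : (Fin d → ℤ) → ℝ≥0∞} {u s0 : ℝ}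

lemma Stp.hq (hp : Stp u s0 p) : HasSum (fun x => (p x).toReal) 1 := by
  have h := wsum (d := d) (w := fun _ => 1) (fun _ => zero_le_one) (f := p)
    (by have := hp.m0; unfold BB.m0 at this; simp [this])
  have := hp.m0; unfold BB.m0 at this; simpa [this] using h

lemma Stp.sq (hp : Stp u s0 p) {w : (Fin d → ℤ) → ℝ} (hw : ∀ x, |w x| ≤ 1) :
    Summable (fun x => (p x).toReal * w x) := by
  refine hp.hq.summable.of_norm_bounded fun x => ?_
  rw [norm_mul, Real.norm_eq_abs, Real.norm_eq_abs, abs_of_nonneg ENNReal.toReal_nonneg]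
  exact mul_le_of_le_one_right ENNReal.toReal_nonneg (hw x)

def ph (p : (Fin d → ℤ) → ℝ≥0∞) (θ : Fin d → ℝ) : ℝ := ∑' y, (p y).toReal * Real.cos (dt θ y)

lemma Stp.hcos (hp : Stp u s0 p) (θ : Fin d → ℝ) :
    HasSum (fun y => (p y).toReal * Real.cos (dt θ y)) (ph p θ) :=
  (hp.sq fun _ => Real.abs_cos_le_one _).hasSum

lemma odd_sum {g : (Fin d → ℤ) → ℝ} (e : (Fin d → ℤ) ≃ (Fin d → ℤ)) (hg : Summable g)
    (h : ∀ x, g (e x) = - g x) : HasSum g 0 := by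
  have h1 : ∑' x, g x = - ∑' x, g x := by
    nth_rewrite 1 [← e.tsum_eq]
    simp only [h]
    exact tsum_neg
  have h2 : ∑' x, g x = 0 := by linarith
  rw [← h2]; exact hg.hasSum

lemma Stp.hsin (hp : Stp u s0 p) (θ : Fin d → ℝ) :
    HasSum (fun y => (p y).toReal * Real.sin (dt θ y)) 0 := by
  refine odd_sum (Equiv.neg _) (hp.sq fun _ => Real.abs_sin_le_one _) fun x => ?_
  simp [symm_even hp.symm, dt_neg]

lemma Stp.hconv (hp : Stp u s0 p) (θ : Fin d → ℝ) (x : Fin d → ℤ) :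
    HasSum (fun y => (p y).toReal * Real.cos (dt θ (x - y))) (ph p θ * Real.cos (dt θ x)) := by
  have h1 := (hp.hcos θ).mul_right (Real.cos (dt θ x))
  have h2 := (hp.hsin θ).mul_right (Real.sin (dt θ x))
  have h3 := h1.add h2
  rw [zero_mul, add_zero] at h3
  have e : (fun y => (p y).toReal * Real.cos (dt θ (x - y))) = fun b =>
      (p b).toReal * Real.cos (dt θ b) * Real.cos (dt θ x) + (p b).toReal * Real.sin (dt θ b) * Real.sin (dt θ x) := by
    funext y
    rw [dt_sub, Real.cos_sub]; ring
  rw [e]; exact h3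

lemma Stp.hmc (hp : Stp u s0 p) (i : Fin d) :
    HasSum (fun y => (p y).toReal * ((y i : ℝ) * (y i : ℝ))) (u ^ 2 / d) := by
  have h := mc_eq' hp.symm i hp.m2
  have h2 := wsum (d := d) (w := fun y => (y i : ℝ) ^ 2) (fun _ => sq_nonneg _) (f := p)
    (by unfold mc at h; rw [h]; simp)
  unfold mc at h
  rw [h, ENNReal.toReal_ofReal (by positivity)] at h2
  convert h2 using 2 with y
  ring

lemma Stp.hmm (hp : Stp u s0 p) (i j : Fin d) :
    HasSum (fun y => (p y).toReal * ((y i : ℝ) * (y j : ℝ))) (if i = j then u ^ 2 / d else 0) := by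
  split_ifs with hij
  · subst hij; exact hp.hmc i
  · refine odd_sum (symE 1 (fun k => decide (k = i))) ?_ ?_
    · refine Summable.of_norm_bounded ((hp.hmc i).summable.add (hp.hmc j).summable) fun y => ?_
      rw [norm_mul, Real.norm_eq_abs, Real.norm_eq_abs, abs_of_nonneg ENNReal.toReal_nonneg, ← mul_add]
      refine mul_le_mul_of_nonneg_left ?_ ENNReal.toReal_nonneg
      rw [abs_le]
      constructor <;> nlinarith [sq_nonneg ((y i : ℝ) - y j), sq_nonneg ((y i : ℝ) + y j), sq_nonneg (y i : ℝ), sq_nonneg (y j : ℝ)]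
    · intro x
      have h1 : p (symE 1 (fun k => decide (k = i)) x) = p x := hp.symm _ _ x
      have hji : j ≠ i := fun h => hij h.symm
      rw [h1]
      simp [symE, hji]

lemma Stp.hdt2 (hp : Stp u s0 p) (θ : Fin d → ℝ) :
    HasSum (fun y => (p y).toReal * (dt θ y) ^ 2) ((∑ i, θ i ^ 2) * u ^ 2 / d) := by
  have h : HasSum (fun y => ∑ i, ∑ j, θ i * θ j * ((p y).toReal * ((y i : ℝ) * (y j : ℝ))))
      (∑ i, ∑ j, θ i * θ j * (if i = j then u ^ 2 / d else 0)) :=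
    hasSum_sum fun i _ => hasSum_sum fun j _ => (hp.hmm i j).mul_left _
  convert h using 1
  · funext y
    unfold dt
    rw [_root_.sq, Finset.sum_mul_sum, Finset.mul_sum]
    refine Finset.sum_congr rfl fun i _ => ?_
    rw [Finset.mul_sum]
    exact Finset.sum_congr rfl fun j _ => by ring
  · simp only [mul_ite, mul_zero, Finset.sum_ite_eq, Finset.mem_univ, if_true]
    rw [mul_div_assoc, Finset.sum_mul]
    exact Finset.sum_congr rfl fun j _ => by ring

lemma pow4_le_cosh (y : ℝ) : y ^ 4 ≤ 24 * Real.cosh y := by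
  have h := sum_le_hasSum {2} (fun n _ => by
    rw [pow_mul]; positivity) (Real.hasSum_cosh y)
  simp [Nat.factorial] at h
  linarith

lemma Stp.hcosh (hp : Stp u s0 p) (i : Fin d) :
    ∃ b ≤ (2:ℝ), HasSum (fun y => (p y).toReal * Real.cosh (s0 / u * (y i : ℝ))) b := by
  have h := hp.me i
  rw [me_cosh hp.symm] at h
  have h2 := wsum (d := d) (w := fun y => Real.cosh (s0 / u * (y i : ℝ))) (fun _ => (Real.cosh_pos _).le) (f := p)
    (ne_top_of_le_ne_top (by simp) h)
  refine ⟨_, ?_, by simpa only [mul_comm] using h2⟩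
  have := ENNReal.toReal_mono (by simp) h
  simpa [mul_comm] using this

lemma cos_upper (y : ℝ) : Real.cos y ≤ 1 - y ^ 2 / 2 + y ^ 4 / 2 := by
  by_cases hy : |y| ≤ 1
  · have := (abs_le.1 (Real.cos_bound hy)).2
    have e : |y| ^ 4 = y ^ 4 := by
      rw [show (4:ℕ) = 2 * 2 from rfl, pow_mul, pow_mul, sq_abs]
    rw [e] at this
    have : 0 ≤ y ^ 4 := by positivity
    linarith
  · have h1 : 1 ≤ y ^ 2 := by
      rw [← sq_abs]; have := lt_of_not_ge hy; nlinarith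
    have := Real.cos_le_one y
    nlinarith

lemma dt_pow4 (θ : Fin d → ℝ) (y : Fin d → ℤ) :
    dt θ y ^ 4 ≤ (∑ i, θ i ^ 2) ^ 2 * (d * ∑ i, (y i : ℝ) ^ 4) := by
  have h1 : dt θ y ^ 2 ≤ (∑ i, θ i ^ 2) * ∑ i, (y i : ℝ) ^ 2 := Finset.sum_mul_sq_le_sq_mul_sq _ _ _
  have h2 : (∑ i, (y i : ℝ) ^ 2) ^ 2 ≤ d * ∑ i, (y i : ℝ) ^ 4 := by
    have := sq_sum_le_card_mul_sum_sq (s := Finset.univ) (f := fun i => (y i : ℝ) ^ 2)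
    simpa [← pow_mul] using this
  calc dt θ y ^ 4 = (dt θ y ^ 2) ^ 2 := by ring
    _ ≤ ((∑ i, θ i ^ 2) * ∑ i, (y i : ℝ) ^ 2) ^ 2 := by gcongr
    _ = (∑ i, θ i ^ 2) ^ 2 * (∑ i, (y i : ℝ) ^ 2) ^ 2 := by ring
    _ ≤ _ := by gcongr

lemma Stp.ph_bounds (hp : Stp u s0 p) (hd : 0 < d) (hu : 0 < u) (hs0 : 0 < s0) (hs1 : s0 ≤ 1)
    {θ : Fin d → ℝ} (hθ : ∀ i, |θ i| ≤ s0 ^ 2 / (10 * d ^ 2) / u) :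
    0 ≤ ph p θ ∧ ph p θ ≤ Real.exp (-((∑ i, θ i ^ 2) * u ^ 2 / (4 * d))) := by
  have hd' : (1:ℝ) ≤ d := by exact_mod_cast hd
  set A := ∑ i, θ i ^ 2 with hA
  have hA0 : 0 ≤ A := by positivity
  have hAu : A * u ^ 2 ≤ s0 ^ 4 / (100 * d ^ 3) := by
    have : A ≤ d * (s0 ^ 2 / (10 * d ^ 2) / u) ^ 2 := by
      rw [hA]
      calc _ ≤ ∑ i : Fin d, (s0 ^ 2 / (10 * d ^ 2) / u) ^ 2 := by
            refine Finset.sum_le_sum fun i _ => ?_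
            rw [← sq_abs]; have := hθ i; gcongr
        _ = _ := by simp
    calc _ ≤ d * (s0 ^ 2 / (10 * d ^ 2) / u) ^ 2 * u ^ 2 := by gcongr
      _ = _ := by field_simp; norm_num
  have h2 := hp.hdt2 θ
  have h1 := hp.hq
  have hs4 : s0 ^ 4 ≤ 1 := pow_le_one₀ hs0.le hs1
  constructor
  · have h3 := h1.sub (h2.div_const 2)
    have h4 := hasSum_le (fun y => by
      have := Real.one_sub_sq_div_two_le_cos (x := dt θ y)
      have hq : 0 ≤ (p y).toReal := ENNReal.toReal_nonneg
      have := mul_le_mul_of_nonneg_left this hq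
      show (p y).toReal - (p y).toReal * dt θ y ^ 2 / 2 ≤ _
      linarith) h3 (hp.hcos θ)
    refine le_trans ?_ h4
    have : A * u ^ 2 ≤ 1 := hAu.trans (by
      rw [div_le_one (by positivity)]
      have : (1:ℝ) ≤ d ^ 3 := one_le_pow₀ hd'
      linarith)
    have : A * u ^ 2 / d ≤ 1 := by
      rw [div_le_one (by positivity)]; linarith
    linarith
  · choose b hb2 hb using hp.hcosh
    have h5 : HasSum (fun y => A ^ 2 * d * (u / s0) ^ 4 * 24 * ∑ i, (p y).toReal * Real.cosh (s0 / u * (y i : ℝ)))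
        (A ^ 2 * d * (u / s0) ^ 4 * 24 * ∑ i, b i) := (hasSum_sum fun i _ => hb i).mul_left _
    have h3 := (h1.sub (h2.div_const 2)).add (h5.div_const 2)
    have h4 := hasSum_le (fun y => by
      have hq : 0 ≤ (p y).toReal := ENNReal.toReal_nonneg
      show (p y).toReal * Real.cos (dt θ y) ≤ (p y).toReal - (p y).toReal * dt θ y ^ 2 / 2 +
        A ^ 2 * d * (u / s0) ^ 4 * 24 * (∑ i, (p y).toReal * Real.cosh (s0 / u * (y i : ℝ))) / 2
      have k1 : dt θ y ^ 4 ≤ A ^ 2 * d * (u / s0) ^ 4 * 24 * ∑ i, Real.cosh (s0 / u * (y i : ℝ)) := by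
        refine (dt_pow4 θ y).trans ?_
        have : ∑ i, (y i : ℝ) ^ 4 ≤ (u / s0) ^ 4 * 24 * ∑ i, Real.cosh (s0 / u * (y i : ℝ)) := by
          rw [Finset.mul_sum]
          refine Finset.sum_le_sum fun i _ => ?_
          have := pow4_le_cosh (s0 / u * (y i : ℝ))
          calc (y i : ℝ) ^ 4 = (u / s0) ^ 4 * (s0 / u * (y i : ℝ)) ^ 4 := by field_simp
            _ ≤ (u / s0) ^ 4 * (24 * Real.cosh (s0 / u * (y i : ℝ))) := by gcongr
            _ = _ := by ring
        calc _ ≤ A ^ 2 * (d * ((u / s0) ^ 4 * 24 * ∑ i, Real.cosh (s0 / u * (y i : ℝ)))) := by gcongr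
          _ = _ := by ring
      have k2 := cos_upper (dt θ y)
      rw [← Finset.mul_sum]
      calc _ ≤ (p y).toReal * (1 - dt θ y ^ 2 / 2 + (A ^ 2 * d * (u / s0) ^ 4 * 24 * ∑ i, Real.cosh (s0 / u * (y i : ℝ))) / 2) := by
            refine mul_le_mul_of_nonneg_left (k2.trans ?_) hq
            gcongr
        _ = _ := by ring) (hp.hcos θ) h3
    refine h4.trans ?_
    have k3 : A ^ 2 * d * (u / s0) ^ 4 * 24 * ∑ i, b i ≤ A * u ^ 2 / (2 * d) := by
      have : ∑ i, b i ≤ 2 * d := by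
        calc _ ≤ ∑ i : Fin d, (2:ℝ) := Finset.sum_le_sum fun i _ => hb2 i
          _ = _ := by simp; ring
      calc _ ≤ A ^ 2 * d * (u / s0) ^ 4 * 24 * (2 * d) := by gcongr
        _ = (A * u ^ 2) * (A * u ^ 2) * (48 * d ^ 2 / s0 ^ 4) := by field_simp; ring
        _ ≤ (A * u ^ 2) * (s0 ^ 4 / (100 * d ^ 3)) * (48 * d ^ 2 / s0 ^ 4) := by gcongr
        _ = (A * u ^ 2) / d * (48 / 100) := by field_simp
        _ ≤ (A * u ^ 2) / d * (1 / 2) := mul_le_mul_of_nonneg_left (by norm_num) (by positivity)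
        _ = _ := by ring
    have := Real.add_one_le_exp (-(A * u ^ 2 / (4 * d)))
    have e1 : A * u ^ 2 / d = 4 * (A * u ^ 2 / (4 * d)) := by field_simp
    have e2 : A * u ^ 2 / (2 * d) = 2 * (A * u ^ 2 / (4 * d)) := by field_simp; norm_num
    rw [e1]
    rw [e2] at k3
    linarith

end BB
end

section
open Blackbox
namespace BB
variable {d : ℕ}
open Filter Topology
variable {p : (Fin d → ℤ) → ℝ≥0∞} {u s0 : ℝ}

def S0 : ℝ := ∑' l : ℤ, 1 / (1 + (l:ℝ) ^ 2)

lemma S0_summable : Summable (fun l : ℤ => 1 / (1 + (l:ℝ) ^ 2)) := by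
  have h1 : Summable (fun l : ℤ => 1 / (l:ℝ) ^ 2 + (if l = 0 then (1:ℝ) else 0)) :=
    (Real.summable_one_div_int_pow.2 one_lt_two).add (hasSum_ite_eq 0 1).summable
  refine Summable.of_nonneg_of_le (fun l => by positivity) (fun l => ?_) h1
  by_cases hl : l = 0
  · simp [hl]
  · have : (0:ℝ) < (l:ℝ) ^ 2 := by positivity
    simp only [hl, if_false, add_zero]
    exact one_div_le_one_div_of_le this (by linarith)

lemma S0_pos : 0 < S0 := by
  refine S0_summable.tsum_pos (fun l => by positivity) 0 (by norm_num)

lemma gauss_sum {α : ℝ} (hα : 0 < α) (N : ℕ) (a : Fin N) :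
    ∑ b : Fin N, Real.exp (-(α * ((a:ℝ) - (b:ℝ)) ^ 2)) ≤ (1 + 1 / α) * S0 := by
  have h1 : ∀ l : ℝ, Real.exp (-(α * l ^ 2)) ≤ (1 + 1 / α) * (1 / (1 + l ^ 2)) := by
    intro l
    have h := Real.add_one_le_exp (α * l ^ 2)
    rw [Real.exp_neg, mul_one_div, ← one_div, div_le_div_iff₀ (Real.exp_pos _) (by positivity)]
    have : (1 + 1 / α) * (α * l ^ 2 + 1) ≤ (1 + 1 / α) * Real.exp (α * l ^ 2) := by gcongr
    have e : (1 + 1 / α) * (α * l ^ 2 + 1) = 1 + l ^ 2 + α * l ^ 2 + 1 / α := by field_simp; ring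
    have p1 : 0 ≤ α * l ^ 2 := by positivity
    have p2 : 0 ≤ 1 / α := by positivity
    linarith
  have inj : Function.Injective (fun b : Fin N => ((a:ℕ):ℤ) - ((b:ℕ):ℤ)) := by
    intro b b' h
    simp only [sub_right_inj, Nat.cast_inj] at h
    exact Fin.ext h
  calc _ ≤ ∑ b : Fin N, (1 + 1 / α) * (1 / (1 + ((((a:ℕ):ℤ) - ((b:ℕ):ℤ) : ℤ) : ℝ) ^ 2)) := by
        refine Finset.sum_le_sum fun b _ => ?_
        have := h1 ((a:ℝ) - (b:ℝ))
        simpa using this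
    _ = (1 + 1 / α) * ∑ l ∈ Finset.univ.image (fun b : Fin N => ((a:ℕ):ℤ) - ((b:ℕ):ℤ)), 1 / (1 + (l:ℝ) ^ 2) := by
        rw [Finset.sum_image (fun b _ b' _ h => inj h), Finset.mul_sum]
    _ ≤ _ := by
        have := S0_summable.sum_le_tsum (Finset.univ.image (fun b : Fin N => ((a:ℕ):ℤ) - ((b:ℕ):ℤ))) (fun l _ => by positivity)
        have p2 : 0 ≤ 1 / α := by positivity
        exact mul_le_mul_of_nonneg_left this (by linarith)

def tv {N : ℕ} (θ0 : ℝ) (m m' : Fin d → Fin N) (i : Fin d) : ℝ := θ0 * ((m i : ℝ) - (m' i : ℝ))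

def Kj (p : (Fin d → ℤ) → ℝ≥0∞) (N : ℕ) (θ0 : ℝ) (j : ℕ) (x : Fin d → ℤ) : ℝ :=
  ∑ m : Fin d → Fin N, ∑ m' : Fin d → Fin N, ph p (tv θ0 m m') ^ j * Real.cos (dt (tv θ0 m m') x)

lemma Kj_zero (N : ℕ) (θ0 : ℝ) (x : Fin d → ℤ) :
    Kj p N θ0 0 x = (∑ m : Fin d → Fin N, Real.cos (dt (fun i => θ0 * (m i : ℝ)) x)) ^ 2
      + (∑ m : Fin d → Fin N, Real.sin (dt (fun i => θ0 * (m i : ℝ)) x)) ^ 2 := by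
  unfold Kj
  rw [_root_.sq, _root_.sq, Finset.sum_mul_sum, Finset.sum_mul_sum, ← Finset.sum_add_distrib]
  refine Finset.sum_congr rfl fun m _ => ?_
  rw [← Finset.sum_add_distrib]
  refine Finset.sum_congr rfl fun m' _ => ?_
  rw [pow_zero, one_mul, ← Real.cos_sub]
  congr 1
  unfold dt tv
  rw [← Finset.sum_sub_distrib]
  exact Finset.sum_congr rfl fun i _ => by ring

lemma Stp.Kj_succ (hp : Stp u s0 p) (N : ℕ) (θ0 : ℝ) (j : ℕ) (x : Fin d → ℤ) :
    HasSum (fun y => (p y).toReal * Kj p N θ0 j (x - y)) (Kj p N θ0 (j + 1) x) := by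
  have h : HasSum (fun y => ∑ m : Fin d → Fin N, ∑ m' : Fin d → Fin N, ph p (tv θ0 m m') ^ j *
      ((p y).toReal * Real.cos (dt (tv θ0 m m') (x - y))))
      (∑ m : Fin d → Fin N, ∑ m' : Fin d → Fin N, ph p (tv θ0 m m') ^ j *
        (ph p (tv θ0 m m') * Real.cos (dt (tv θ0 m m') x))) :=
    hasSum_sum fun m _ => hasSum_sum fun m' _ => (hp.hconv _ x).mul_left _
  convert h using 1
  · funext y
    unfold Kj
    rw [Finset.mul_sum]
    refine Finset.sum_congr rfl fun m _ => ?_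
    rw [Finset.mul_sum]
    exact Finset.sum_congr rfl fun m _ => by ring
  · unfold Kj
    exact Finset.sum_congr rfl fun m _ => Finset.sum_congr rfl fun m' _ => by ring

lemma Stp.ne_top (hp : Stp u s0 p) (x : Fin d → ℤ) : p x ≠ ⊤ := by
  have h := hp.m0
  have : BB.m0 p ≠ ⊤ := by rw [h]; simp
  exact ENNReal.ne_top_of_tsum_ne_top this x

lemma Stp.Kj_iter (hp : Stp u s0 p) (N : ℕ) (θ0 : ℝ) (j : ℕ) :
    (∀ x, 0 ≤ Kj p N θ0 j x) ∧
    (cv p)^[j] (fun x => ENNReal.ofReal (Kj p N θ0 0 x)) = fun x => ENNReal.ofReal (Kj p N θ0 j x) := by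
  induction j with
  | zero => exact ⟨fun x => by rw [Kj_zero]; positivity, rfl⟩
  | succ j ih =>
    have hn : ∀ x y, 0 ≤ (p y).toReal * Kj p N θ0 j (x - y) :=
      fun x y => mul_nonneg ENNReal.toReal_nonneg (ih.1 _)
    refine ⟨fun x => (hp.Kj_succ N θ0 j x).nonneg (hn x), ?_⟩
    rw [Function.iterate_succ_apply', ih.2]
    funext x
    rw [← (hp.Kj_succ N θ0 j x).tsum_eq, ENNReal.ofReal_tsum_of_nonneg (hn x) (hp.Kj_succ N θ0 j x).summable]
    refine tsum_congr fun y => ?_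
    rw [ENNReal.ofReal_mul ENNReal.toReal_nonneg, ENNReal.ofReal_toReal (hp.ne_top y)]

lemma Kj_lower {N : ℕ} {θ0 b : ℝ} (hθ : 0 ≤ θ0) (hb : 0 ≤ b) (h : d * (θ0 * N) * b ≤ 1) {x : Fin d → ℤ}
    (hx : supNorm x ≤ b) : ((N:ℝ) ^ d) ^ 2 / 4 ≤ Kj p N θ0 0 x := by
  rw [Kj_zero]
  have h1 : (N:ℝ) ^ d / 2 ≤ ∑ m : Fin d → Fin N, Real.cos (dt (fun i => θ0 * (m i : ℝ)) x) := by
    have : (N:ℝ) ^ d / 2 = ∑ m : Fin d → Fin N, (1 / 2 : ℝ) := by simp; ring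
    rw [this]
    refine Finset.sum_le_sum fun m _ => ?_
    have hd : |dt (fun i => θ0 * (m i : ℝ)) x| ≤ 1 := by
      refine le_trans ?_ h
      unfold dt
      refine (Finset.abs_sum_le_sum_abs _ _).trans ?_
      calc _ ≤ ∑ i : Fin d, θ0 * N * b := by
            refine Finset.sum_le_sum fun i _ => ?_
            rw [abs_mul, abs_of_nonneg (show 0 ≤ (fun i => θ0 * (m i : ℝ)) i by positivity)]
            change θ0 * (m i : ℝ) * _ ≤ _
            have h3 := (abs_le_supNorm x i).trans hx
            have h4 : ((m i : ℕ) : ℝ) ≤ N := by exact_mod_cast (m i).2.le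
            gcongr
        _ = _ := by simp; ring
    have h2 := Real.one_sub_sq_div_two_le_cos (x := dt (fun i => θ0 * (m i : ℝ)) x)
    have h3 := (sq_le_one_iff_abs_le_one _).2 hd
    linarith
  have h0 : (0:ℝ) ≤ (N:ℝ) ^ d / 2 := by positivity
  have := pow_le_pow_left₀ h0 h1 2
  have h5 := sq_nonneg (∑ m : Fin d → Fin N, Real.sin (dt (fun i => θ0 * (m i : ℝ)) x))
  nlinarith

lemma Stp.Kj_upper (hp : Stp u s0 p) (hd : 0 < d) (hu : 0 < u) (hs0 : 0 < s0) (hs1 : s0 ≤ 1)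
    {N : ℕ} {θ0 : ℝ} (hθ : 0 ≤ θ0) (h : θ0 * N ≤ s0 ^ 2 / (10 * d ^ 2) / u) {j : ℕ}
    {α : ℝ} (hα : 0 < α) (hαe : α = j * θ0 ^ 2 * u ^ 2 / (4 * d)) (x : Fin d → ℤ) :
    Kj p N θ0 j x ≤ (N:ℝ) ^ d * ((1 + 1 / α) * S0) ^ d := by
  have hd' : (1:ℝ) ≤ d := by exact_mod_cast hd
  have h1 : ∀ m m' : Fin d → Fin N, ph p (tv θ0 m m') ^ j * Real.cos (dt (tv θ0 m m') x) ≤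
      ∏ i, Real.exp (-(α * ((m i : ℝ) - (m' i : ℝ)) ^ 2)) := by
    intro m m'
    obtain ⟨b1, b2⟩ := hp.ph_bounds hd hu hs0 hs1 (θ := tv θ0 m m') (by
      intro i
      refine le_trans ?_ h
      unfold tv
      rw [abs_mul, abs_of_nonneg hθ]
      refine mul_le_mul_of_nonneg_left ?_ hθ
      have a1 : ((m i : ℕ) : ℝ) ≤ N := by exact_mod_cast (m i).2.le
      have a2 : ((m' i : ℕ) : ℝ) ≤ N := by exact_mod_cast (m' i).2.le
      have a3 : (0:ℝ) ≤ ((m i : ℕ) : ℝ) := by positivity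
      have a4 : (0:ℝ) ≤ ((m' i : ℕ) : ℝ) := by positivity
      rw [abs_le]; constructor <;> linarith)
    calc _ ≤ ph p (tv θ0 m m') ^ j := mul_le_of_le_one_right (pow_nonneg b1 _) (Real.cos_le_one _)
      _ ≤ Real.exp (-((∑ i, tv θ0 m m' i ^ 2) * u ^ 2 / (4 * d))) ^ j := by gcongr
      _ = _ := by
        rw [← Real.exp_nat_mul, ← Real.exp_sum]
        congr 1
        unfold tv
        rw [hαe, Finset.sum_neg_distrib, ← Finset.mul_sum]
        simp only [mul_pow]
        rw [← Finset.mul_sum]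
        ring
  unfold Kj
  calc _ ≤ ∑ m : Fin d → Fin N, ∑ m' : Fin d → Fin N, ∏ i, Real.exp (-(α * ((m i : ℝ) - (m' i : ℝ)) ^ 2)) :=
        Finset.sum_le_sum fun m _ => Finset.sum_le_sum fun m' _ => h1 m m'
    _ = ∑ m : Fin d → Fin N, ∏ i, ∑ b : Fin N, Real.exp (-(α * ((m i : ℝ) - (b : ℝ)) ^ 2)) := by
        refine Finset.sum_congr rfl fun m _ => ?_
        rw [Finset.prod_univ_sum, Fintype.piFinset_univ]
    _ ≤ ∑ m : Fin d → Fin N, ∏ i : Fin d, ((1 + 1 / α) * S0) := by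
        refine Finset.sum_le_sum fun m _ => Finset.prod_le_prod (fun i _ => by positivity) fun i _ => ?_
        exact gauss_sum hα N (m i)
    _ = _ := by simp

lemma esseen (hd : 0 < d) (hs0 : 0 < s0) (hs1 : s0 ≤ 1) : ∃ C > (0:ℝ), ∀ (u : ℝ) (p : (Fin d → ℤ) → ℝ≥0∞),
    0 < u → Stp u s0 p → ∀ b ≥ u, ∀ j ≥ 1, ∀ x,
    (cv p)^[j] (fun y => if supNorm y ≤ b then 1 else 0) x ≤
      ENNReal.ofReal (C * (b / u) ^ (2 * d) / (Real.sqrt j) ^ d) := by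
  have hd' : (1:ℝ) ≤ d := by exact_mod_cast hd
  set c : ℝ := s0 ^ 2 / (10 * d ^ 2) with hc
  have hcp : 0 < c := by positivity
  have hS := S0_pos
  refine ⟨4 * ((1 + 16 * d / c ^ 2) * S0) ^ d, by positivity, ?_⟩
  intro u p hu hp b hb j hj x
  have hbp : 0 < b := hu.trans_le hb
  have hj' : (1:ℝ) ≤ j := by exact_mod_cast hj
  have hsj : 1 ≤ Real.sqrt j := Real.one_le_sqrt.2 hj'
  set N := ⌈Real.sqrt j⌉₊ with hN
  have hN1 : Real.sqrt j ≤ N := Nat.le_ceil _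
  have hN2 : (N:ℝ) ≤ 2 * Real.sqrt j := by
    have := Nat.ceil_lt_add_one (Real.sqrt_nonneg (j:ℝ)); linarith
  have hNp : (0:ℝ) < N := by linarith
  set θ0 : ℝ := c / (N * b) with hθ0
  have hθp : 0 < θ0 := by positivity
  have hθN : θ0 * N = c / b := by rw [hθ0]; field_simp
  set α : ℝ := j * θ0 ^ 2 * u ^ 2 / (4 * d) with hα
  have hαp : 0 < α := by positivity
  have hdc : d * c ≤ 1 := by
    rw [hc, ← mul_div_assoc, div_le_one (by positivity)]
    have : s0 ^ 2 ≤ 1 := pow_le_one₀ hs0.le hs1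
    nlinarith
  have hind : ∀ y : Fin d → ℤ, (if supNorm y ≤ b then (1:ℝ≥0∞) else 0) ≤
      ENNReal.ofReal (4 / ((N:ℝ) ^ d) ^ 2) * ENNReal.ofReal (Kj p N θ0 0 y) := by
    intro y
    split_ifs with hy
    · rw [← ENNReal.ofReal_mul (by positivity), ← ENNReal.ofReal_one]
      refine ENNReal.ofReal_le_ofReal ?_
      have := Kj_lower (p := p) (N := N) hθp.le hbp.le (by
        rw [hθN]
        calc _ = d * c := by field_simp
          _ ≤ 1 := hdc) hy
      calc (1:ℝ) = 4 / ((N:ℝ) ^ d) ^ 2 * (((N:ℝ) ^ d) ^ 2 / 4) := by field_simp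
        _ ≤ _ := by gcongr
    · simp
  refine (iter_mono p j hind x).trans ?_
  rw [iter_smul_right, (hp.Kj_iter N θ0 j).2, ← ENNReal.ofReal_mul (by positivity)]
  refine ENNReal.ofReal_le_ofReal ?_
  have hup := hp.Kj_upper hd hu hs0 hs1 hθp.le (N := N) (by
    rw [hθN]; gcongr) hαp hα x
  have hB : 1 + 1 / α ≤ (1 + 16 * d / c ^ 2) * (b / u) ^ 2 := by
    have h1 : 1 ≤ (b / u) ^ 2 := one_le_pow₀ ((one_le_div hu).2 hb)
    have h2 : 1 / α ≤ 16 * d / c ^ 2 * (b / u) ^ 2 := by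
      have hN4 : (N:ℝ) ^ 2 ≤ 4 * j := by
        calc (N:ℝ) ^ 2 ≤ (2 * Real.sqrt j) ^ 2 := by gcongr
          _ = 4 * (j:ℝ) := by rw [mul_pow, Real.sq_sqrt (by positivity)]; norm_num
      have e : 1 / α = (4 * d / c ^ 2 * (b / u) ^ 2) * ((N:ℝ) ^ 2 / j) := by
        rw [hα, hθ0]; field_simp
      rw [e]
      calc _ ≤ (4 * d / c ^ 2 * (b / u) ^ 2) * 4 := by
            gcongr; rw [div_le_iff₀ (by positivity)]; exact hN4
        _ = _ := by ring
    linarith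
  calc _ ≤ 4 / ((N:ℝ) ^ d) ^ 2 * ((N:ℝ) ^ d * ((1 + 1 / α) * S0) ^ d) := by gcongr
    _ = 4 * ((1 + 1 / α) * S0) ^ d / (N:ℝ) ^ d := by field_simp
    _ ≤ 4 * ((1 + 16 * d / c ^ 2) * (b / u) ^ 2 * S0) ^ d / (Real.sqrt j) ^ d := by gcongr
    _ = _ := by
      rw [show (1 + 16 * d / c ^ 2) * (b / u) ^ 2 * S0 = ((1 + 16 * d / c ^ 2) * S0) * (b / u) ^ 2 by ring, mul_pow _ ((b / u) ^ 2), ← pow_mul]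
      ring

end BB
end

section
open Blackbox
namespace BB
variable {d : ℕ}
open Filter Topology
variable {p : (Fin d → ℤ) → ℝ≥0∞} {u s0 : ℝ}

def eu (κ u : ℝ) (y : Fin d → ℤ) : ℝ≥0∞ := ENNReal.ofReal (Real.exp (-(κ * supNorm y / u)))

lemma iter_tsum (f : (Fin d → ℤ) → ℝ≥0∞) (k : ℕ) (g : ℕ → (Fin d → ℤ) → ℝ≥0∞) (x : Fin d → ℤ) :
    (cv f)^[k] (fun y => ∑' n, g n y) x = ∑' n, (cv f)^[k] (g n) x := by
  induction k generalizing x with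
  | zero => rfl
  | succ k ih =>
    simp only [Function.iterate_succ_apply']
    rw [funext ih]
    unfold cv
    rw [ENNReal.tsum_comm]
    exact tsum_congr fun y => by rw [ENNReal.tsum_mul_left]

lemma lclt0 (hd : 0 < d) (hs0 : 0 < s0) (hs1 : s0 ≤ 1) {κ : ℝ} (hκ : 0 < κ) :
    ∃ C > (0:ℝ), ∀ (u : ℝ) (p : (Fin d → ℤ) → ℝ≥0∞),
    0 < u → Stp u s0 p → ∀ j ≥ 1, ∀ x,
    (cv p)^[j] (eu κ u) x ≤ ENNReal.ofReal (C / (Real.sqrt j) ^ d) := by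
  obtain ⟨C, hC, hE⟩ := esseen hd hs0 hs1
  have hsum : Summable (fun n : ℕ => Real.exp (-κ * n) * ((n:ℝ) + 1) ^ (2 * d)) := by
    have h1 := (summable_nat_add_iff 1).2 (Real.summable_pow_mul_exp_neg_nat_mul (2 * d) hκ)
    refine (h1.mul_left (Real.exp κ)).congr fun n => ?_
    have : Real.exp (-κ * n) = Real.exp κ * Real.exp (-κ * ((n + 1 : ℕ) : ℝ)) := by
      rw [← Real.exp_add]; push_cast; ring_nf
    rw [this]; push_cast; ring
  set S := ∑' n : ℕ, Real.exp (-κ * n) * ((n:ℝ) + 1) ^ (2 * d) with hS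
  have hSp : 0 < S := hsum.tsum_pos (fun n => by positivity) 0 (by positivity)
  refine ⟨C * S, by positivity, ?_⟩
  intro u p hu hp j hj x
  have hj' : (1:ℝ) ≤ j := by exact_mod_cast hj
  have hsj : 1 ≤ Real.sqrt j := Real.one_le_sqrt.2 hj'
  have key : ∀ y : Fin d → ℤ, eu κ u y ≤ ∑' n : ℕ, ENNReal.ofReal (Real.exp (-κ * n)) *
      (if supNorm y ≤ ((n:ℝ) + 1) * u then 1 else 0) := by
    intro y
    set n := ⌊supNorm y / u⌋₊ with hn
    refine le_trans ?_ (ENNReal.le_tsum n)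
    have h1 : (n:ℝ) ≤ supNorm y / u := Nat.floor_le (div_nonneg (supNorm_nonneg y) hu.le)
    have h2 : supNorm y ≤ ((n:ℝ) + 1) * u := by
      have := (Nat.lt_floor_add_one (supNorm y / u)).le
      rwa [div_le_iff₀ hu] at this
    rw [if_pos h2, mul_one]
    unfold eu
    refine ENNReal.ofReal_le_ofReal (Real.exp_le_exp.2 ?_)
    have := mul_le_mul_of_nonneg_left h1 hκ.le
    rw [mul_div_assoc]; linarith
  refine (iter_mono p j key x).trans ?_
  rw [iter_tsum p j (fun n y => ENNReal.ofReal (Real.exp (-κ * n)) *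
      (if supNorm y ≤ ((n:ℝ) + 1) * u then 1 else 0))]
  have hterm : ∀ n : ℕ, (cv p)^[j] (fun y => ENNReal.ofReal (Real.exp (-κ * n)) *
      (if supNorm y ≤ ((n:ℝ) + 1) * u then 1 else 0)) x ≤
      ENNReal.ofReal (C / (Real.sqrt j) ^ d * (Real.exp (-κ * n) * ((n:ℝ) + 1) ^ (2 * d))) := by
    intro n
    rw [iter_smul_right]
    have := hE u p hu hp (((n:ℝ) + 1) * u) (by
      have : (0:ℝ) ≤ n := by positivity
      nlinarith) j hj x
    refine (mul_le_mul_right this _).trans ?_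
    rw [← ENNReal.ofReal_mul (by positivity)]
    refine ENNReal.ofReal_le_ofReal (le_of_eq ?_)
    rw [mul_div_cancel_right₀ _ hu.ne']; ring
  refine (ENNReal.tsum_le_tsum hterm).trans (le_of_eq ?_)
  rw [← ENNReal.ofReal_tsum_of_nonneg (fun n => by positivity) (hsum.mul_left _), tsum_mul_left, ← hS]
  congr 1; ring

def Pj (p : (Fin d → ℤ) → ℝ≥0∞) (j : ℕ) : (Fin d → ℤ) → ℝ≥0∞ := (cv p)^[j] e0

lemma iter_eq_cv (p g : (Fin d → ℤ) → ℝ≥0∞) (j : ℕ) : (cv p)^[j] g = cv (Pj p j) g := by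
  unfold Pj
  rw [cv_comm, iter_cv_comm, cv_comm g e0, cv_e0]

lemma Pj_add (p : (Fin d → ℤ) → ℝ≥0∞) (a b : ℕ) : Pj p (a + b) = cv (Pj p a) (Pj p b) := by
  unfold Pj
  rw [Function.iterate_add_apply, iter_eq_cv]; rfl

lemma me_Pj (i : Fin d) (s : ℝ) (j : ℕ) : me i s (Pj p j) = me i s p ^ j := by
  unfold Pj
  rw [me_iter]
  have : me i s (e0 : (Fin d → ℤ) → ℝ≥0∞) = 1 := by
    unfold me e0; rw [tsum_eq_single 0] <;> simp +contextual
  rw [this, mul_one]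

def we (l : ℝ) (f : (Fin d → ℤ) → ℝ≥0∞) (y : Fin d → ℤ) : ℝ≥0∞ :=
  ENNReal.ofReal (Real.exp (l * supNorm y)) * f y

lemma m0_we (hd : 0 < d) (l : ℝ) (f : (Fin d → ℤ) → ℝ≥0∞) :
    m0 (we l f) ≤ ∑ i, (me i l f + me i (-l) f) := by
  unfold m0 we me
  simp only [← ENNReal.tsum_add]
  rw [← Summable.tsum_finsetSum (fun _ _ => ENNReal.summable)]
  refine ENNReal.tsum_le_tsum fun x => ?_
  refine (mul_le_mul_left (ENNReal.ofReal_le_ofReal (exp_supNorm_le hd x)) _).trans (le_of_eq ?_)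
  rw [ENNReal.ofReal_sum_of_nonneg (fun i _ => by positivity), Finset.sum_mul]
  refine Finset.sum_congr rfl fun i _ => ?_
  rw [ENNReal.ofReal_add (by positivity) (by positivity), add_mul]

lemma stp_me_le (hp : Stp u s0 p) (hu : 0 < u) (hs0 : 0 < s0) (hs1 : s0 ≤ 1) {s : ℝ} (hs : |s| ≤ s0) (i : Fin d) :
    me i (s / u) p ≤ ENNReal.ofReal (1 + 3 * (s / s0) ^ 2) := by
  have hd : 0 < d := i.pos
  have hd' : (1:ℝ) ≤ d := by exact_mod_cast hd
  have := me_bound hp.symm (χ := 1) hu hs0 hs zero_le_one (by simpa using hp.m0) (by simpa using hp.m2) i (by simpa using hp.me i)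
  refine this.trans (ENNReal.ofReal_le_ofReal ?_)
  have hr : |s / s0| ≤ 1 := by
    rw [abs_div, abs_of_pos hs0, div_le_one hs0]; exact hs
  have h1 : (s / s0) ^ 2 ≤ 1 := (sq_le_one_iff_abs_le_one _).2 hr
  have h2 : (s / s0) ^ 4 ≤ (s / s0) ^ 2 := by nlinarith [sq_nonneg (s / s0)]
  have h3 : s ^ 2 / (2 * d) ≤ (s / s0) ^ 2 := by
    rw [div_pow]
    have : s0 ^ 2 ≤ 1 := pow_le_one₀ hs0.le hs1
    gcongr
    linarith
  linarith

/-- exponential moment of the sup norm of the j-step walk -/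
lemma stp_we_Pj (hp : Stp u s0 p) (hd : 0 < d) (hu : 0 < u) (hs0 : 0 < s0) (hs1 : s0 ≤ 1) {s B : ℝ} (hs : |s| ≤ s0)
    {j : ℕ} (hB : (1 + 3 * (s / s0) ^ 2) ^ j ≤ B) :
    m0 (we (s / u) (Pj p j)) ≤ ENNReal.ofReal (2 * d * B) := by
  refine (m0_we hd _ _).trans ?_
  have h1 : ∀ i : Fin d, me i (s / u) (Pj p j) + me i (-(s / u)) (Pj p j) ≤ ENNReal.ofReal (2 * B) := by
    intro i
    rw [me_Pj, me_Pj, me_neg hp.symm]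
    have : me i (s / u) p ^ j ≤ ENNReal.ofReal B := by
      refine (pow_le_pow_left₀ (by simp) (stp_me_le hp hu hs0 hs1 hs i) j).trans ?_
      rw [← ENNReal.ofReal_pow (by positivity)]
      exact ENNReal.ofReal_le_ofReal hB
    have hB0 : 0 ≤ B := le_trans (by positivity) hB
    rw [two_mul, ENNReal.ofReal_add hB0 hB0]
    exact add_le_add this this
  calc _ ≤ ∑ i : Fin d, ENNReal.ofReal (2 * B) := Finset.sum_le_sum fun i _ => h1 i
    _ = _ := by
      have hB0 : 0 ≤ B := le_trans (by positivity) hB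
      rw [Finset.sum_const, Finset.card_univ, Fintype.card_fin, nsmul_eq_mul, ← ENNReal.ofReal_natCast,
        ← ENNReal.ofReal_mul (by positivity)]
      congr 1; ring

lemma cv_le_sup {f g : (Fin d → ℤ) → ℝ≥0∞} {A : ℝ≥0∞} (h : ∀ x, g x ≤ A) (x : Fin d → ℤ) :
    cv f g x ≤ m0 f * A := by
  unfold cv m0
  rw [← ENNReal.tsum_mul_right]
  exact ENNReal.tsum_le_tsum fun y => mul_le_mul_right (h _) _

lemma lclt (hd : 0 < d) (hs0 : 0 < s0) (hs1 : s0 ≤ 1) :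
    ∃ C > (0:ℝ), ∀ (u : ℝ) (p : (Fin d → ℤ) → ℝ≥0∞),
    0 < u → Stp u s0 p → ∀ j ≥ 1, ∀ x,
    (cv p)^[j] (eu (s0 / 4) u) x ≤
      ENNReal.ofReal (C / (Real.sqrt j) ^ d * Real.exp (-(s0 / 4 * supNorm x / (u * Real.sqrt j)))) := by
  have hd' : (1:ℝ) ≤ d := by exact_mod_cast hd
  set κ := s0 / 4 with hκ
  have hκp : 0 < κ := by positivity
  obtain ⟨C, hC, hE⟩ := lclt0 hd hs0 hs1 (κ := κ / 2) (by positivity)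
  refine ⟨max (2 * d * 8 * 2 ^ d) (2 * (2 * d * Real.exp 1 * (C * 2 ^ d))), by positivity, ?_⟩
  intro u p hu hp j hj x
  have hj' : (1:ℝ) ≤ j := by exact_mod_cast hj
  have hsj : 1 ≤ Real.sqrt j := Real.one_le_sqrt.2 hj'
  by_cases hj4 : j < 4
  · -- small j
    have hs2 : Real.sqrt j ≤ 2 := by
      rw [Real.sqrt_le_left (by norm_num)]
      have : (j:ℝ) < 4 := by exact_mod_cast hj4
      linarith
    have h1 : ∀ y, Pj p j y * eu κ u (x - y) ≤
        ENNReal.ofReal (Real.exp (-(κ * supNorm x / u))) * we (κ / u) (Pj p j) y := by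
      intro y
      unfold eu we
      rw [mul_comm, ← mul_assoc, ← ENNReal.ofReal_mul (by positivity), ← Real.exp_add]
      refine mul_le_mul_left (ENNReal.ofReal_le_ofReal (Real.exp_le_exp.2 ?_)) _
      have ht : supNorm x ≤ supNorm (x - y) + supNorm y := by
        have := supNorm_add_le (x - y) y; simpa using this
      have := mul_le_mul_of_nonneg_left ht (show 0 ≤ κ / u by positivity)
      have e1 : κ * supNorm (x - y) / u = κ / u * supNorm (x - y) := by ring
      have e2 : κ * supNorm x / u = κ / u * supNorm x := by ring
      rw [e1, e2]; linarith
    have h2 := stp_we_Pj hp hd hu hs0 hs1 (s := κ) (j := j) (B := 8) (by rw [abs_of_pos hκp, hκ]; linarith) (by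
      have : κ / s0 = 1 / 4 := by rw [hκ]; field_simp
      rw [this]
      calc (1 + 3 * (1 / 4 : ℝ) ^ 2) ^ j ≤ 2 ^ j := by gcongr; norm_num
        _ ≤ 2 ^ 3 := by gcongr; norm_num; omega
        _ = 8 := by norm_num)
    rw [iter_eq_cv]
    unfold cv
    refine (ENNReal.tsum_le_tsum h1).trans ?_
    rw [ENNReal.tsum_mul_left]
    change _ * m0 _ ≤ _
    refine (mul_le_mul_right h2 _).trans ?_
    rw [← ENNReal.ofReal_mul (by positivity), mul_comm]
    refine ENNReal.ofReal_le_ofReal ?_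
    have h3 : (2 * d * 8 : ℝ) ≤ max (2 * (d:ℝ) * 8 * 2 ^ d) (2 * (2 * d * Real.exp 1 * (C * 2 ^ d))) / Real.sqrt j ^ d := by
      rw [le_div_iff₀ (by positivity)]
      refine le_trans ?_ (le_max_left _ _)
      gcongr
    have h4 : Real.exp (-(κ * supNorm x / u)) ≤ Real.exp (-(κ * supNorm x / (u * Real.sqrt j))) := by
      refine Real.exp_le_exp.2 (neg_le_neg ?_)
      have := supNorm_nonneg x
      gcongr
      nlinarith
    gcongr
  · -- large j
    push Not at hj4
    have hs2 : 2 ≤ Real.sqrt j := by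
      rw [Real.le_sqrt' (by norm_num)]
      have : (4:ℝ) ≤ j := by exact_mod_cast hj4
      linarith
    set a := j / 2 with ha
    set b := j - a with hb
    have hab : j = a + b := by omega
    have ha1 : 1 ≤ a := by omega
    have hb1 : 1 ≤ b := by omega
    have ha4 : j ≤ 4 * a := by omega
    have hb4 : j ≤ 4 * b := by omega
    set l := κ / (u * Real.sqrt j) with hl
    have hlp : 0 < l := by positivity
    have hl2 : 2 * l = (2 * κ / Real.sqrt j) / u := by rw [hl]; field_simp
    have hll : l ≤ κ / u / 2 := by
      rw [hl, ← div_div]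
      gcongr
    -- sup bounds
    have hsup : ∀ k : ℕ, 1 ≤ k → j ≤ 4 * k → ∀ z, cv (Pj p k) (eu (κ / 2) u) z ≤
        ENNReal.ofReal (C * 2 ^ d / Real.sqrt j ^ d) := by
      intro k hk hk4 z
      rw [← iter_eq_cv]
      refine (hE u p hu hp k hk z).trans (ENNReal.ofReal_le_ofReal ?_)
      have hk' : (0:ℝ) < k := by exact_mod_cast hk
      have : Real.sqrt j ≤ 2 * Real.sqrt k := by
        have h4 : (j:ℝ) ≤ 4 * k := by exact_mod_cast hk4
        calc Real.sqrt j ≤ Real.sqrt (4 * k) := Real.sqrt_le_sqrt h4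
          _ = 2 * Real.sqrt k := by
            rw [Real.sqrt_mul (by norm_num), show (4:ℝ) = 2 ^ 2 by norm_num, Real.sqrt_sq (by norm_num)]
      have hks : 0 < Real.sqrt k := Real.sqrt_pos.2 hk'
      rw [div_le_div_iff₀ (by positivity) (by positivity), mul_assoc, ← mul_pow]
      gcongr
    have hmom : ∀ k : ℕ, k ≤ j → m0 (we (2 * l) (Pj p k)) ≤ ENNReal.ofReal (2 * d * Real.exp 1) := by
      intro k hk
      rw [hl2]
      refine stp_we_Pj hp hd hu hs0 hs1 ?_ ?_
      · rw [abs_of_pos (by positivity), div_le_iff₀ (by positivity), hκ]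
        nlinarith
      · have e : (2 * κ / Real.sqrt j / s0) ^ 2 = 1 / (4 * j) := by
          rw [hκ, div_pow, div_pow, Real.sq_sqrt (by positivity)]; field_simp; norm_num
        rw [e]
        calc (1 + 3 * (1 / (4 * (j:ℝ)))) ^ k ≤ (1 + 3 * (1 / (4 * (j:ℝ)))) ^ j := by
              gcongr
              have : 0 ≤ 3 * (1 / (4 * (j:ℝ))) := by positivity
              linarith
          _ ≤ (Real.exp (1 / j)) ^ j := by
              gcongr
              have := Real.add_one_le_exp (1 / (j:ℝ))
              have e2 : 3 * (1 / (4 * (j:ℝ))) ≤ 1 / j := by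
                have h5 : 0 ≤ 1 / (j:ℝ) := by positivity
                have : 3 * (1 / (4 * (j:ℝ))) = 3 / 4 * (1 / j) := by field_simp
                linarith
              linarith
          _ = Real.exp 1 := by
              rw [← Real.exp_nat_mul]; congr 1; field_simp
    have hpt : ∀ y z : Fin d → ℤ, eu κ u (x - y - z) ≤ ENNReal.ofReal (Real.exp (-(l * supNorm x))) *
        ((ENNReal.ofReal (Real.exp (2 * l * supNorm y)) + ENNReal.ofReal (Real.exp (2 * l * supNorm z))) *
          eu (κ / 2) u (x - y - z)) := by
      intro y z
      unfold eu
      rw [← ENNReal.ofReal_add (by positivity) (by positivity), ← ENNReal.ofReal_mul (by positivity),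
        ← ENNReal.ofReal_mul (by positivity)]
      refine ENNReal.ofReal_le_ofReal ?_
      set w := x - y - z with hw
      have ht : supNorm x ≤ supNorm w + supNorm y + supNorm z := by
        have h1 := supNorm_add_le w z
        have h2 := supNorm_add_le (w + z) y
        have : w + z + y = x := by rw [hw]; abel
        rw [this] at h2; linarith
      have h3 : Real.exp (l * (supNorm y + supNorm z)) ≤ Real.exp (2 * l * supNorm y) + Real.exp (2 * l * supNorm z) := by
        rcases le_total (supNorm y) (supNorm z) with h | h
        · have : Real.exp (l * (supNorm y + supNorm z)) ≤ Real.exp (2 * l * supNorm z) :=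
            Real.exp_le_exp.2 (by nlinarith)
          have := Real.exp_pos (2 * l * supNorm y); linarith
        · have : Real.exp (l * (supNorm y + supNorm z)) ≤ Real.exp (2 * l * supNorm y) :=
            Real.exp_le_exp.2 (by nlinarith)
          have := Real.exp_pos (2 * l * supNorm z); linarith
      calc Real.exp (-(κ * supNorm w / u)) ≤ Real.exp (-(l * supNorm x)) * (Real.exp (l * (supNorm y + supNorm z)) *
            Real.exp (-(κ / 2 * supNorm w / u))) := by
            rw [← Real.exp_add, ← Real.exp_add]
            refine Real.exp_le_exp.2 ?_
            have hwn := supNorm_nonneg w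
            have m1 := mul_le_mul_of_nonneg_left ht hlp.le
            have m2 := mul_le_mul_of_nonneg_right hll hwn
            have e1 : κ * supNorm w / u = 2 * (κ / u / 2 * supNorm w) := by ring
            have e2 : κ / 2 * supNorm w / u = κ / u / 2 * supNorm w := by ring
            rw [e1, e2]; linarith
        _ ≤ _ := by gcongr
    have hsplit : (cv p)^[j] (eu κ u) x ≤ ENNReal.ofReal (Real.exp (-(l * supNorm x))) *
        (cv (we (2 * l) (Pj p a)) (cv (Pj p b) (eu (κ / 2) u)) x +
          cv (we (2 * l) (Pj p b)) (cv (Pj p a) (eu (κ / 2) u)) x) := by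
      have e2 : cv (we (2 * l) (Pj p b)) (cv (Pj p a) (eu (κ / 2) u)) =
          cv (Pj p a) (cv (we (2 * l) (Pj p b)) (eu (κ / 2) u)) := by
        rw [← cv_assoc, cv_comm (we _ _), cv_assoc]
      rw [iter_eq_cv, hab, Pj_add, cv_assoc, e2, pair_tsum, pair_tsum, pair_tsum, ← ENNReal.tsum_add, ← ENNReal.tsum_mul_left]
      refine ENNReal.tsum_le_tsum fun q => ?_
      refine (mul_le_mul_right (hpt q.1 q.2) _).trans (le_of_eq ?_)
      unfold we
      ring
    refine hsplit.trans ?_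
    have t1 := (cv_le_sup (f := we (2 * l) (Pj p a)) (hsup b hb1 hb4) x).trans (mul_le_mul_left (hmom a (by omega)) _)
    have t2 := (cv_le_sup (f := we (2 * l) (Pj p b)) (hsup a ha1 ha4) x).trans (mul_le_mul_left (hmom b (by omega)) _)
    refine (mul_le_mul_right (add_le_add t1 t2) _).trans ?_
    rw [← ENNReal.ofReal_mul (by positivity), ← ENNReal.ofReal_add (by positivity) (by positivity),
      ← ENNReal.ofReal_mul (by positivity)]
    refine ENNReal.ofReal_le_ofReal ?_
    have e3 : l * supNorm x = κ * supNorm x / (u * Real.sqrt j) := by rw [hl]; ring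
    rw [e3, mul_comm]
    gcongr
    calc _ = (2 * (2 * d * Real.exp 1 * (C * 2 ^ d))) / Real.sqrt j ^ d := by ring
      _ ≤ _ := by gcongr; exact le_max_right _ _

end BB
end

section
open Blackbox
namespace BB
variable {d : ℕ}
open Filter Topology

lemma me_renewal {F F' : (Fin d → ℤ) → ℝ≥0∞} {b : ℝ≥0∞}
    (h : ∀ x, F x ≤ F' x + b * cv F' F x) (i : Fin d) (s : ℝ) (hF : m0 F ≠ ⊤)
    (hb : b * m0 F' < 1) :
    me i s F ≤ me i s F' * (1 - b * me i s F')⁻¹ := by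
  have h1 : ∀ x, F x ≤ ∑' j : ℕ, b ^ j * (cv F')^[j] F' x := by
    intro x
    have ht : Tendsto (fun k : ℕ => ∑' j : ℕ, b ^ j * (cv F')^[j] F' x + (b * m0 F') ^ k * m0 F) atTop
        (𝓝 (∑' j : ℕ, b ^ j * (cv F')^[j] F' x + 0 * m0 F)) := by
      refine Tendsto.add tendsto_const_nhds ?_
      exact ENNReal.Tendsto.mul_const (ENNReal.tendsto_pow_atTop_nhds_zero_of_lt_one hb) (Or.inr hF)
    rw [zero_mul, add_zero] at ht
    refine ge_of_tendsto' ht fun k => ?_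
    refine (renewal h k x).trans (add_le_add (ENNReal.sum_le_tsum _) ?_)
    rw [mul_pow, mul_assoc, ← m0_iter]
    exact mul_le_mul_right (ENNReal.le_tsum x) _
  refine (me_mono h1).trans ?_
  unfold me
  simp_rw [← ENNReal.tsum_mul_left]
  rw [ENNReal.tsum_comm]
  have h2 : ∀ j : ℕ, ∑' x : Fin d → ℤ, ENNReal.ofReal (Real.exp (s * (x i : ℝ))) * (b ^ j * (cv F')^[j] F' x)
      = me i s F' * (b * me i s F') ^ j := by
    intro j
    change me i s (fun x => b ^ j * (cv F')^[j] F' x) = _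
    rw [me_smul, me_iter, mul_pow]; ring
  simp_rw [h2]
  refine le_of_eq ?_
  rw [ENNReal.tsum_mul_left, ENNReal.tsum_geometric]
  unfold me
  rw [ENNReal.tsum_mul_left]

variable {c₀ : ℝ} {M : Model d c₀}

lemma em_step (hc : 0 < c₀) {δ b a s η : ℝ} (hδ : 0 < δ) (hδ1 : δ ≤ 1 / 10000) (h : good M δ b)
    (h0 : 0 ≤ a) (hab : a ≤ b) (hη0 : 0 ≤ η) (hη : η ≤ 1 / 1000) (i : Fin d)
    (hm : me i s (M.F a) ≤ ENNReal.ofReal (ch M a * (1 + η))) (hr : ch M b ≤ 128 * ch M a) :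
    me i s (M.F b) ≤ ENNReal.ofReal (2 * ch M b) := by
  have ha' := ok_mono h.1 h0 hab
  have hb1 := one_le_ch h.1
  have ha1 := one_le_ch ha'
  have hm1 := ch_mono h.1 h0 hab
  have hbc := beta_ch hc hδ (by linarith) h h0 hab
  set y := ch M a / ch M b with hy
  have hy1 : y ≤ 1 := by rw [hy, div_le_one (by linarith)]; exact hm1
  have hy2 : 1 / 128 ≤ y := by rw [hy, div_le_div_iff₀ (by norm_num) (by linarith)]; linarith
  have hye : ch M a = y * ch M b := by rw [hy]; field_simp
  set q := (b - a) * (ch M a * (1 + η)) with hq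
  have hq0 : 0 ≤ q := by rw [hq]; have : 0 ≤ b - a := by linarith
                         positivity
  have hq1 : q ≤ 1 - 3 / 4 * y := by
    have : q ≤ (1 + 4 * δ) * (1 - y) * (1 + η) := by
      rw [hq, ← mul_assoc]; exact mul_le_mul_of_nonneg_right hbc (by linarith)
    have h2 : (1 + 4 * δ) * (1 + η) ≤ 1 + 1 / 512 := by nlinarith
    have h3 : (1 + 4 * δ) * (1 - y) * (1 + η) ≤ (1 + 1 / 512) * (1 - y) := by
      calc _ = ((1 + 4 * δ) * (1 + η)) * (1 - y) := by ring
        _ ≤ _ := mul_le_mul_of_nonneg_right h2 (by linarith)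
    linarith
  have hF0 : m0 (M.F b) ≠ ⊤ := by rw [m0_F]; exact m0_G_ne_top h.1
  have hlt : ENNReal.ofReal (b - a) * m0 (M.F a) < 1 := by
    rw [m0_F, ← ofReal_ch ha', ← ENNReal.ofReal_mul (by linarith), ENNReal.ofReal_lt_one]
    have : (b - a) * ch M a ≤ q := by
      rw [hq]; refine mul_le_mul_of_nonneg_left ?_ (by linarith)
      nlinarith
    linarith
  refine (me_renewal (I1F h.1 h0 hab) i s hF0 hlt).trans ?_
  have hbm : ENNReal.ofReal (b - a) * me i s (M.F a) ≤ ENNReal.ofReal q := by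
    rw [hq, ENNReal.ofReal_mul (by linarith)]
    exact mul_le_mul_right hm _
  calc _ ≤ ENNReal.ofReal (ch M a * (1 + η)) * (1 - ENNReal.ofReal q)⁻¹ := by
        gcongr
    _ = ENNReal.ofReal (ch M a * (1 + η) / (1 - q)) := by
        rw [div_eq_mul_inv, ENNReal.ofReal_mul (p := ch M a * (1 + η)) (by positivity), ENNReal.ofReal_inv_of_pos (by linarith),
          ENNReal.ofReal_sub _ hq0, ENNReal.ofReal_one]
    _ ≤ _ := by
        refine ENNReal.ofReal_le_ofReal ?_
        rw [div_le_iff₀ (by linarith), hye]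
        have e1 : 2 * ch M b * (3 / 4 * y) ≤ 2 * ch M b * (1 - q) :=
          mul_le_mul_of_nonneg_left (by linarith) (by linarith)
        have e2 : 0 ≤ y * ch M b := by positivity
        nlinarith

lemma em_base (hc : 0 < c₀) (hc1 : c₀ ≤ 1) {b : ℝ} (h : ok M b) (i : Fin d) :
    me i (c₀ / 100 / M.xi b) (M.F 0) ≤ ENNReal.ofReal (ch M 0 * (1 + 1 / 1000)) := by
  rw [F_zero, ch_zero, one_mul, me_cosh (Jf_symm M)]
  have hs := sigma_le_xi hc h
  have hsp := sigma_pos M hc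
  have hxp : 0 < M.xi b := by linarith
  calc _ ≤ ∑' x, ENNReal.ofReal (1 + 1 / 1000) * Jf M x := by
        refine ENNReal.tsum_le_tsum fun x => ?_
        rcases (M.K.nonneg x).eq_or_lt with hx | hx
        · simp [Jf, ← hx]
        · refine mul_le_mul_left (ENNReal.ofReal_le_ofReal ?_) _
          have h1 := M.K.range_le x hx
          have h2 := R_le M hc
          have h3 := abs_le_supNorm x i
          have h4 : |(x i : ℝ)| ≤ M.xi b / c₀ := by
            refine h3.trans (h1.trans (h2.trans ?_))
            gcongr
          have h5 : |c₀ / 100 / M.xi b * (x i : ℝ)| ≤ 1 / 100 := by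
            rw [abs_mul, abs_of_pos (by positivity)]
            calc _ ≤ c₀ / 100 / M.xi b * (M.xi b / c₀) := by gcongr
              _ = 1 / 100 := by field_simp
          set t := c₀ / 100 / M.xi b * (x i : ℝ)
          have h6 : t ^ 2 ≤ 1 / 10000 := by
            rw [← sq_abs]; have := abs_nonneg t; nlinarith
          refine (Real.cosh_le_exp_half_sq t).trans ?_
          calc Real.exp (t ^ 2 / 2) ≤ Real.exp (1 / 20000) := Real.exp_le_exp.2 (by linarith)
            _ ≤ _ := by
              have := Real.exp_bound_div_one_sub_of_interval (x := 1 / 20000) (by norm_num) (by norm_num)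
              refine this.trans (by norm_num)
    _ = _ := by
      rw [ENNReal.tsum_mul_left]
      change _ * m0 (Jf M) = _
      rw [m0_J, mul_one]

lemma vv_xi (hc : 0 < c₀) {a : ℝ} (h : ok M a) : m2 (M.F a) = ENNReal.ofReal (M.xi a ^ 2 * ch M a) := by
  have := one_le_ch h
  rw [← ofReal_vv h, xi_sq hc h, div_mul_cancel₀ _ (by linarith)]

lemma em (hc : 0 < c₀) (hc1 : c₀ ≤ 1) {δ : ℝ} (hδ : 0 < δ) (hδ1 : δ ≤ 1 / 10000) (n : ℕ) :
    ∀ b, good M δ b → ch M b ≤ 128 ^ n → ∀ i,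
      me i (c₀ / 100 / M.xi b) (M.F b) ≤ ENNReal.ofReal (2 * ch M b) := by
  have base : ∀ b, good M δ b → ch M b ≤ 128 → ∀ i,
      me i (c₀ / 100 / M.xi b) (M.F b) ≤ ENNReal.ofReal (2 * ch M b) := by
    intro b h hb i
    refine em_step hc hδ hδ1 h le_rfl h.1.1 (by norm_num) le_rfl i (em_base hc hc1 h.1 i) ?_
    rw [ch_zero]; linarith
  induction n with
  | zero => intro b h hb i; exact base b h (by linarith) i
  | succ n ih =>
    intro b h hb i
    by_cases hb2 : ch M b ≤ 128
    · exact base b h hb2 i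
    push Not at hb2
    have hI := intermediate_value_Icc h.1.1 (ch_cont h.1)
    obtain ⟨a, ha, hae⟩ := hI (show ch M b / 128 ∈ Set.Icc (ch M 0) (ch M b) by
      rw [ch_zero]; constructor <;> linarith)
    have hga := good_mono h ha.1 ha.2
    have h1 := ih a hga (by rw [hae, div_le_iff₀ (by norm_num)]; rw [pow_succ] at hb; linarith) i
    have hsp := sigma_pos M hc
    have hxa := sigma_le_xi hc hga.1
    have hxb := sigma_le_xi hc h.1
    have hxm := xi_mono hc hδ (by linarith) h ha.1 ha.2
    set r := M.xi a / M.xi b with hr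
    have hr0 : 0 < r := by rw [hr]; have : 0 < M.xi a := by linarith
                           have : 0 < M.xi b := by linarith
                           positivity
    have hr2 : r ^ 2 ≤ 1 / 64 := by
      have h2 := xi_ratio hc hδ (by linarith) h ha.1 ha.2
      have e : ch M b / ch M a = 128 := by rw [hae]; field_simp
      rw [e] at h2
      have h3 : (64:ℝ) ≤ 128 ^ (1 - 3 * δ) := by
        calc (64:ℝ) = 128 ^ ((6:ℝ) / 7) := by
              rw [show (128:ℝ) = 2 ^ (7:ℝ) by norm_num, ← Real.rpow_mul (by norm_num)]
              norm_num
          _ ≤ _ := Real.rpow_le_rpow_of_exponent_le (by norm_num) (by linarith)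
      have h4 : M.xi b / M.xi a = r⁻¹ := by rw [hr, inv_div]
      rw [h4, inv_pow] at h2
      have h5 := h3.trans h2
      rw [le_inv_comm₀ (by norm_num) (by positivity)] at h5
      linarith
    have hr1 : r ≤ 1 := by nlinarith
    have hs0 : 0 < c₀ / 100 := by positivity
    have h2 := me_bound (F_symm M a) (χ := ch M a) (u := M.xi a) (s := c₀ / 100 * r) (by linarith) hs0
      (by rw [abs_of_pos (by positivity)]; nlinarith) (by have := one_le_ch hga.1; linarith)
      (by rw [m0_F, ofReal_ch hga.1]) (vv_xi hc hga.1) i h1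
    have e1 : c₀ / 100 * r / M.xi a = c₀ / 100 / M.xi b := by
      rw [hr]; have : 0 < M.xi a := by linarith
      field_simp
    rw [e1] at h2
    have hd1 : (1:ℝ) ≤ d := by exact_mod_cast i.pos
    have e2 : c₀ / 100 * r / (c₀ / 100) = r := by field_simp
    rw [e2] at h2
    have h3 : (c₀ / 100 * r) ^ 2 / (2 * d) ≤ 1 / 10000 := by
      rw [div_le_iff₀ (by positivity)]
      have : (c₀ / 100 * r) ^ 2 ≤ 1 / 10000 := by
        have : c₀ / 100 * r ≤ 1 / 100 := by nlinarith
        have : 0 ≤ c₀ / 100 * r := by positivity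
        nlinarith
      nlinarith
    have h4 : 2 * r ^ 4 ≤ 1 / 2048 := by nlinarith [sq_nonneg r]
    refine em_step hc hδ hδ1 h ha.1 ha.2 (η := 1 / 1000) (by norm_num) le_rfl i (h2.trans ?_) (by rw [hae]; linarith)
    refine ENNReal.ofReal_le_ofReal (mul_le_mul_of_nonneg_left (by linarith) (by have := one_le_ch hga.1; linarith))

/-- the effective step is a `Stp` -/
lemma stp_F (hc : 0 < c₀) (hc1 : c₀ ≤ 1) {δ : ℝ} (hδ : 0 < δ) (hδ1 : δ ≤ 1 / 10000) {b : ℝ} (h : good M δ b) :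
    Stp (M.xi b) (c₀ / 100) (fun y => ENNReal.ofReal (1 / ch M b) * M.F b y) := by
  have h1 := one_le_ch h.1
  refine ⟨fun π e x => by rw [F_symm M b π e x], ?_, ?_, ?_⟩
  · rw [m0_smul, m0_F, ← ofReal_ch h.1, ← ENNReal.ofReal_mul (by positivity), one_div_mul_cancel (by linarith)]
    simp
  · rw [m2_smul, vv_xi hc h.1, ← ENNReal.ofReal_mul (by positivity)]
    congr 1; field_simp
  · intro i
    rw [me_smul]
    obtain ⟨n, hn⟩ := pow_unbounded_of_one_lt (ch M b) (show (1:ℝ) < 128 by norm_num)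
    refine (mul_le_mul_right (em hc hc1 hδ hδ1 n b h hn.le i) _).trans ?_
    rw [← ENNReal.ofReal_mul (by positivity)]
    have : 1 / ch M b * (2 * ch M b) = 2 := by field_simp
    rw [this]; simp

end BB
end

section
open Blackbox
namespace BB
variable {d : ℕ}
open Filter Topology

def Ss (d : ℕ) (κ X u : ℝ) (K : ℕ) : ℝ :=
  ∑ j ∈ Finset.range (K ^ 2), 1 / Real.sqrt ((j + 1 : ℕ) : ℝ) ^ d * Real.exp (-(κ * X / (u * Real.sqrt ((j + 1 : ℕ) : ℝ))))

lemma sqrt_le_K {K j : ℕ} (hj : j ∈ Finset.range (K ^ 2)) : Real.sqrt ((j + 1 : ℕ) : ℝ) ≤ K := by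
  rw [Real.sqrt_le_left (by positivity)]
  have : j + 1 ≤ K ^ 2 := Finset.mem_range.1 hj
  exact_mod_cast this

lemma one_le_sq (j : ℕ) : 1 ≤ Real.sqrt ((j + 1 : ℕ) : ℝ) := by
  rw [Real.one_le_sqrt]; push_cast; have : (0:ℝ) ≤ j := by positivity
  linarith

lemma exp_le_D {κ X u ξ : ℝ} {K j : ℕ} (hκ : 0 < κ) (hX : 0 ≤ X) (hu : 0 < u) (hK : u * K ≤ ξ)
    (hj : j ∈ Finset.range (K ^ 2)) :
    Real.exp (-(κ / 2 * X / (u * Real.sqrt ((j + 1 : ℕ) : ℝ)))) ≤ Real.exp (-(κ / 2 * X / ξ)) := by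
  refine Real.exp_le_exp.2 (neg_le_neg ?_)
  have h1 := sqrt_le_K hj
  have h2 := one_le_sq j
  gcongr
  exact le_trans (by gcongr) hK

lemma Ss_le1 {κ X u ξ : ℝ} {K : ℕ} (hκ : 0 < κ) (hX : 0 ≤ X) (hu : 0 < u) (hK : u * K ≤ ξ) :
    Ss d κ X u K ≤ K ^ 2 * Real.exp (-(κ / 2 * X / ξ)) := by
  unfold Ss
  calc _ ≤ ∑ j ∈ Finset.range (K ^ 2), Real.exp (-(κ / 2 * X / ξ)) := by
        refine Finset.sum_le_sum fun j hj => ?_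
        have h2 := one_le_sq j
        have h3 : 1 / Real.sqrt ((j + 1 : ℕ) : ℝ) ^ d ≤ 1 := by
          rw [div_le_one (by positivity)]; exact one_le_pow₀ h2
        refine (mul_le_of_le_one_left (Real.exp_pos _).le h3).trans (le_trans ?_ (exp_le_D hκ hX hu hK hj))
        refine Real.exp_le_exp.2 (neg_le_neg ?_)
        gcongr
        linarith
    _ = _ := by simp

lemma Ss_le2 {κ X u σ ξ r Cd : ℝ} {K : ℕ} (hκ : 0 < κ) (hX : 0 ≤ X) (hu : 0 < u) (hK : u * K ≤ ξ)
    (hσ : 0 < σ) (hr : r = max σ (min X ξ)) (hσu : σ ≤ u) (hur : u ≤ r)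
    (hCd1 : 1 ≤ Cd) (hCd : ∀ t > 0, Real.exp (-(κ / 2 * t)) ≤ Cd / t ^ d) :
    Ss d κ X u K ≤ Cd * K ^ 2 * (u / r) ^ d * Real.exp (-(κ / 2 * X / ξ)) := by
  have hrp : 0 < r := by linarith
  by_cases hXr : r ≤ X
  · unfold Ss
    calc _ ≤ ∑ j ∈ Finset.range (K ^ 2), Cd * (u / r) ^ d * Real.exp (-(κ / 2 * X / ξ)) := by
          refine Finset.sum_le_sum fun j hj => ?_
          have h2 := one_le_sq j
          have h3 := exp_le_D hκ hX hu hK hj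
          set q := Real.sqrt ((j + 1 : ℕ) : ℝ)
          have h4 := hCd (X / (u * q)) (by have : 0 < X := by linarith
                                           positivity)
          have e : Real.exp (-(κ * X / (u * q))) = Real.exp (-(κ / 2 * (X / (u * q)))) *
              Real.exp (-(κ / 2 * X / (u * q))) := by
            rw [← Real.exp_add]; congr 1; ring
          rw [e, ← mul_assoc]
          refine mul_le_mul ?_ h3 (Real.exp_pos _).le (by positivity)
          calc _ ≤ 1 / q ^ d * (Cd / (r / (u * q)) ^ d) := by
                refine mul_le_mul_of_nonneg_left (h4.trans ?_) (by positivity)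
                gcongr
            _ = _ := by
                rw [div_pow, div_pow, mul_pow]; field_simp
      _ = _ := by simp; ring
  · push Not at hXr
    have : r = σ := by
      rcases max_choice σ (min X ξ) with h | h
      · rw [hr, h]
      · rw [h] at hr; have := min_le_left X ξ; linarith
    have hur' : u = r := by linarith
    refine (Ss_le1 hκ hX hu hK).trans ?_
    rw [hur', div_self hrp.ne', one_pow, mul_one]
    gcongr
    have : (0:ℝ) ≤ K ^ 2 := by positivity
    nlinarith

/-- hypotheses of the recursion -/
structure RecH (d : ℕ) (κ B α X σ ξ : ℝ) (a : ℝ → ℝ) (Km : ℕ) : Prop where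
  sig : 0 < σ
  sx : σ ≤ ξ
  X0 : 0 ≤ X
  mono : ∀ u, σ ≤ u → u ≤ ξ → a u ≤ a ξ
  top : a ξ ≤ B * (ξ / σ) ^ α * Real.exp (-(κ * X / ξ))
  rc : ∀ u K, σ ≤ u → 1 ≤ K → K ≤ Km → u * (K:ℝ) ≤ ξ →
    a u ≤ B * ((u / σ) ^ α * Ss d κ X u K + a (u * K) / (K:ℝ) ^ d)

lemma phase1 (hd : 2 < d) {κ B α X σ ξ : ℝ} {a : ℝ → ℝ} {Km K1 : ℕ} (h : RecH d κ B α X σ ξ a Km)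
    (hκ : 0 < κ) (hB : 1 ≤ B) (hα : 2 ≤ α) (hα2 : α ≤ 5 / 2) (hK1 : 2 ≤ K1) (hKB : 4 * B ^ 2 ≤ K1) (hKm : K1 ≤ Km) (n : ℕ) :
    ∀ u, σ ≤ u → u ≤ ξ → ξ ≤ u * (K1:ℝ) ^ n →
      a u ≤ 2 * B * (K1:ℝ) ^ 3 * (u / σ) ^ α * Real.exp (-(κ / 2 * X / ξ)) := by
  have hσ := h.sig
  have hX := h.X0
  have hK1' : (2:ℝ) ≤ K1 := by exact_mod_cast hK1
  have hξ : 0 < ξ := by have := h.sx; linarith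
  set D := Real.exp (-(κ / 2 * X / ξ)) with hD
  have hDp : 0 < D := Real.exp_pos _
  have hK3 : (K1:ℝ) ^ α ≤ (K1:ℝ) ^ 3 := by
    rw [← Real.rpow_natCast]
    refine Real.rpow_le_rpow_of_exponent_le (by linarith) (by norm_num; linarith)
  have hA : ∀ u, σ ≤ u → u ≤ ξ → ξ ≤ u * K1 → a u ≤ 2 * B * (K1:ℝ) ^ 3 * (u / σ) ^ α * D := by
    intro u h1 h2 h3
    have hu : 0 < u := by linarith
    have e1 : (ξ / σ) ^ α ≤ (K1:ℝ) ^ 3 * (u / σ) ^ α := by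
      calc (ξ / σ) ^ α ≤ (K1 * (u / σ)) ^ α := by
            refine Real.rpow_le_rpow (by positivity) ?_ (by linarith)
            rw [← mul_div_assoc, mul_comm (K1:ℝ)]; gcongr
        _ = (K1:ℝ) ^ α * (u / σ) ^ α := Real.mul_rpow (by positivity) (by positivity)
        _ ≤ _ := by gcongr
    have e2 : Real.exp (-(κ * X / ξ)) ≤ D := by
      refine Real.exp_le_exp.2 (neg_le_neg ?_); gcongr; linarith
    calc a u ≤ a ξ := h.mono u h1 h2
      _ ≤ B * (ξ / σ) ^ α * Real.exp (-(κ * X / ξ)) := h.top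
      _ ≤ B * ((K1:ℝ) ^ 3 * (u / σ) ^ α) * D := by gcongr
      _ ≤ _ := by
        have : 0 ≤ B * ((K1:ℝ) ^ 3 * (u / σ) ^ α) * D := by positivity
        linarith
  induction n with
  | zero =>
    intro u h1 h2 h3
    rw [pow_zero, mul_one] at h3
    refine hA u h1 h2 ?_
    nlinarith
  | succ n ih =>
    intro u h1 h2 h3
    have hu : 0 < u := by linarith
    rcases le_total ξ (u * K1) with h4 | h4
    · exact hA u h1 h2 h4
    have h5 := h.rc u K1 h1 (by omega) hKm h4
    have h6 := ih (u * K1) (by nlinarith) h4 (by rw [mul_assoc, ← pow_succ']; exact h3)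
    have h7 := Ss_le1 (d := d) hκ hX hu h4
    have e1 : (u * K1 / σ) ^ α = (u / σ) ^ α * (K1:ℝ) ^ α := by
      rw [← Real.mul_rpow (by positivity) (by positivity)]; congr 1; ring
    -- B K1^α ≤ K1^d / 2
    have e2 : B * (K1:ℝ) ^ α ≤ (K1:ℝ) ^ d / 2 := by
      have g1 : 2 * B ≤ (K1:ℝ) ^ (1 / 2 : ℝ) := by
        rw [← Real.sqrt_eq_rpow]
        refine Real.le_sqrt_of_sq_le ?_
        nlinarith
      have g2 : (K1:ℝ) ^ (1 / 2 : ℝ) * (K1:ℝ) ^ α ≤ (K1:ℝ) ^ d := by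
        rw [← Real.rpow_add (by linarith), ← Real.rpow_natCast]
        refine Real.rpow_le_rpow_of_exponent_le (by linarith) ?_
        have : (3:ℝ) ≤ d := by exact_mod_cast hd
        linarith
      have g3 : 0 ≤ (K1:ℝ) ^ α := by positivity
      nlinarith
    have e3 : a (u * K1) / (K1:ℝ) ^ d * B ≤ (2 * B * (K1:ℝ) ^ 3 * (u / σ) ^ α * D) / 2 := by
      rw [div_mul_eq_mul_div, div_le_iff₀ (by positivity)]
      calc a (u * K1) * B ≤ (2 * B * (K1:ℝ) ^ 3 * (u * K1 / σ) ^ α * D) * B := by gcongr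
        _ = (2 * B * (K1:ℝ) ^ 3 * (u / σ) ^ α * D) * (B * (K1:ℝ) ^ α) := by rw [e1]; ring
        _ ≤ (2 * B * (K1:ℝ) ^ 3 * (u / σ) ^ α * D) * ((K1:ℝ) ^ d / 2) := by gcongr
        _ = _ := by ring
    have e4 : B * ((u / σ) ^ α * Ss d κ X u K1) ≤ (2 * B * (K1:ℝ) ^ 3 * (u / σ) ^ α * D) / 2 := by
      calc _ ≤ B * ((u / σ) ^ α * (K1 ^ 2 * D)) := by gcongr
        _ ≤ B * ((u / σ) ^ α * (K1 ^ 3 * D)) := by gcongr <;> linarith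
        _ = _ := by ring
    calc a u ≤ _ := h5
      _ = B * ((u / σ) ^ α * Ss d κ X u K1) + a (u * K1) / (K1:ℝ) ^ d * B := by ring
      _ ≤ _ := by linarith

lemma phase2 {κ B α X σ ξ r Cd C2 C3 : ℝ} {a : ℝ → ℝ} {Km K : ℕ} (h : RecH d κ B α X σ ξ a Km)
    (hκ : 0 < κ) (hB : 1 ≤ B) (hα : 2 ≤ α) (hr : r = max σ (min X ξ))
    (hCd1 : 1 ≤ Cd) (hCd : ∀ t > 0, Real.exp (-(κ / 2 * t)) ≤ Cd / t ^ d) (hC2 : 1 ≤ C2)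
    (hp1 : ∀ u, σ ≤ u → u ≤ ξ → a u ≤ C2 * (u / σ) ^ α * Real.exp (-(κ / 2 * X / ξ)))
    (hC3 : C3 = B * (Cd + 2 ^ d * C2)) (hK : 2 ≤ K) (hKm : K ≤ Km) (n : ℕ) :
    ∀ u, σ ≤ u → u ≤ r → r ≤ u * (K:ℝ) ^ (n + 1) →
      a u ≤ C3 ^ (n + 1) * (r / σ) ^ α * (u / r) ^ d * Real.exp (-(κ / 2 * X / ξ)) := by
  have hσ := h.sig
  have hX := h.X0
  have hK' : (2:ℝ) ≤ K := by exact_mod_cast hK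
  have hrξ : r ≤ ξ := by rw [hr]; exact max_le h.sx (min_le_right _ _)
  have hrp : 0 < r := by rw [hr]; exact lt_max_of_lt_left hσ
  set D := Real.exp (-(κ / 2 * X / ξ)) with hD
  have hDp : 0 < D := Real.exp_pos _
  have h2d : (1:ℝ) ≤ 2 ^ d := one_le_pow₀ (by norm_num)
  have hC3B : B * Cd + B ≤ C3 := by
    rw [hC3, mul_add]
    have : 1 ≤ 2 ^ d * C2 := by nlinarith
    nlinarith
  have hC31 : 1 ≤ C3 := by nlinarith
  -- the first term
  have hfirst : ∀ u (N : ℕ), σ ≤ u → 1 ≤ N → u * (N:ℝ) ≤ r →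
      (u / σ) ^ α * Ss d κ X u N ≤ Cd * ((r / σ) ^ α * (u / r) ^ d * D) := by
    intro u N h1 h2 h3
    have hu : 0 < u := by linarith
    have hN : (1:ℝ) ≤ N := by exact_mod_cast h2
    have h4 : u ≤ r := by nlinarith
    have h5 := Ss_le2 (d := d) hκ hX hu (h3.trans hrξ) hσ hr h1 h4 hCd1 hCd
    have h6 : (u / σ) ^ α * (N:ℝ) ^ 2 ≤ (r / σ) ^ α := by
      calc (u / σ) ^ α * (N:ℝ) ^ 2 ≤ (u / σ) ^ α * (N:ℝ) ^ α := by
            gcongr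
            rw [← Real.rpow_natCast]
            exact Real.rpow_le_rpow_of_exponent_le hN (by norm_num; exact hα)
        _ = (u * N / σ) ^ α := by
            rw [← Real.mul_rpow (by positivity) (by positivity)]; congr 1; ring
        _ ≤ _ := Real.rpow_le_rpow (by positivity) (by gcongr) (by linarith)
    calc _ ≤ (u / σ) ^ α * (Cd * N ^ 2 * (u / r) ^ d * D) := by gcongr
      _ = ((u / σ) ^ α * (N:ℝ) ^ 2) * (Cd * (u / r) ^ d * D) := by ring
      _ ≤ (r / σ) ^ α * (Cd * (u / r) ^ d * D) := by gcongr
      _ = _ := by ring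
  have hbase : ∀ u, σ ≤ u → u ≤ r → r ≤ u * (K:ℝ) → a u ≤ C3 * ((r / σ) ^ α * (u / r) ^ d * D) := by
    intro u h1 h2 h3
    have hu : 0 < u := by linarith
    have hru : 1 ≤ r / u := by rw [one_le_div hu]; exact h2
    set N := ⌊r / u⌋₊ with hN
    have hN1 : 1 ≤ N := Nat.one_le_floor_iff _ |>.2 hru
    have hN1' : (1:ℝ) ≤ N := by exact_mod_cast hN1
    have hN2 : (N:ℝ) ≤ r / u := Nat.floor_le (by positivity)
    have hNK : N ≤ K := by
      have : (N:ℝ) ≤ K := hN2.trans (by rw [div_le_iff₀ hu]; linarith)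
      exact_mod_cast this
    have hN3 : r / u < N + 1 := Nat.lt_floor_add_one _
    have huN : u * N ≤ r := by rw [le_div_iff₀ hu] at hN2; linarith
    have hNr : r / (2 * u) ≤ N := by
      have : r / (2 * u) = r / u / 2 := by field_simp
      rw [this]; linarith
    have h4 := h.rc u N h1 hN1 (hNK.trans hKm) (huN.trans hrξ)
    have h5 := hfirst u N h1 hN1 huN
    have h6 := hp1 (u * N) (by nlinarith) (huN.trans hrξ)
    have h7 : a (u * N) / (N:ℝ) ^ d ≤ 2 ^ d * C2 * ((r / σ) ^ α * (u / r) ^ d * D) := by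
      rw [div_le_iff₀ (by positivity)]
      have e1 : 1 ≤ (2 * u / r) ^ d * (N:ℝ) ^ d := by
        rw [← mul_pow]
        refine one_le_pow₀ ?_
        rw [div_le_iff₀ (by positivity)] at hNr
        rw [div_mul_eq_mul_div, one_le_div hrp]; linarith
      calc a (u * N) ≤ C2 * (u * N / σ) ^ α * D := h6
        _ ≤ C2 * (r / σ) ^ α * D := by
            have : (u * N / σ) ^ α ≤ (r / σ) ^ α := Real.rpow_le_rpow (by positivity) (by gcongr) (by linarith)
            gcongr
        _ ≤ C2 * (r / σ) ^ α * D * ((2 * u / r) ^ d * (N:ℝ) ^ d) := le_mul_of_one_le_right (by positivity) e1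
        _ = _ := by rw [mul_div_assoc, mul_pow]; ring
    calc a u ≤ _ := h4
      _ ≤ B * (Cd * ((r / σ) ^ α * (u / r) ^ d * D) + 2 ^ d * C2 * ((r / σ) ^ α * (u / r) ^ d * D)) := by gcongr
      _ = _ := by rw [hC3]; ring
  induction n with
  | zero =>
    intro u h1 h2 h3
    have := hbase u h1 h2 (by simpa using h3)
    calc a u ≤ _ := this
      _ = _ := by ring
  | succ n ih =>
    intro u h1 h2 h3
    have hu : 0 < u := by linarith
    have hT : 0 ≤ (r / σ) ^ α * (u / r) ^ d * D := by positivity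
    have hC3n : 1 ≤ C3 ^ (n + 1) := one_le_pow₀ hC31
    rcases le_total r (u * K) with h4 | h4
    · have := hbase u h1 h2 h4
      have h5 : C3 ≤ C3 ^ (n + 1 + 1) := by rw [pow_succ]; nlinarith
      calc a u ≤ _ := this
        _ ≤ C3 ^ (n + 1 + 1) * ((r / σ) ^ α * (u / r) ^ d * D) := by gcongr
        _ = _ := by ring
    have h5 := h.rc u K h1 (by omega) hKm (h4.trans hrξ)
    have h6 := hfirst u K h1 (by omega) h4
    have h7 := ih (u * K) (by nlinarith) h4 (by rw [mul_assoc, ← pow_succ']; exact h3)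
    have h8 : a (u * K) / (K:ℝ) ^ d ≤ C3 ^ (n + 1) * ((r / σ) ^ α * (u / r) ^ d * D) := by
      rw [div_le_iff₀ (by positivity)]
      refine h7.trans (le_of_eq ?_)
      rw [div_pow, div_pow, mul_pow]; ring
    calc a u ≤ _ := h5
      _ ≤ B * (Cd * ((r / σ) ^ α * (u / r) ^ d * D) + C3 ^ (n + 1) * ((r / σ) ^ α * (u / r) ^ d * D)) := by gcongr
      _ = (B * Cd + B * C3 ^ (n + 1)) * ((r / σ) ^ α * (u / r) ^ d * D) := by ring
      _ ≤ C3 ^ (n + 1 + 1) * ((r / σ) ^ α * (u / r) ^ d * D) := by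
          refine mul_le_mul_of_nonneg_right ?_ hT
          rw [pow_succ C3 (n + 1)]
          have : B * Cd ≤ B * Cd * C3 ^ (n + 1) := le_mul_of_one_le_right (by positivity) hC3n
          nlinarith
      _ = _ := by ring

lemma exp_poly (d : ℕ) {κ : ℝ} (hκ : 0 < κ) : ∃ Cd : ℝ, 1 ≤ Cd ∧ ∀ t > 0, Real.exp (-(κ * t)) ≤ Cd / t ^ d := by
  refine ⟨max 1 (d.factorial / κ ^ d), le_max_left _ _, fun t ht => ?_⟩
  rw [le_div_iff₀ (by positivity), Real.exp_neg, inv_mul_le_iff₀ (Real.exp_pos _)]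
  have h := Real.pow_div_factorial_le_exp (x := κ * t) (by positivity) d
  rw [div_le_iff₀ (by positivity), mul_pow] at h
  calc t ^ d ≤ Real.exp (κ * t) * (d.factorial / κ ^ d) := by
        rw [← mul_div_assoc, le_div_iff₀ (by positivity)]; linarith
    _ ≤ _ := by gcongr; exact le_max_right _ _

lemma phases (hd : 2 < d) {κ B : ℝ} (hκ : 0 < κ) (hB : 1 ≤ B) :
    ∃ C3 > (0:ℝ), ∀ ε ∈ Set.Ioo (0:ℝ) 1, ∃ Km : ℕ, ∀ (X σ ξ : ℝ) (a : ℝ → ℝ),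
      RecH d κ B (2 + ε / 2) X σ ξ a Km →
      a σ ≤ C3 * (σ / max σ (min X ξ)) ^ ((d:ℝ) - 2 - ε) * Real.exp (-(κ / 2 * X / ξ)) := by
  obtain ⟨Cd, hCd1, hCd⟩ := exp_poly d (half_pos hκ)
  obtain ⟨K1, hK1⟩ := exists_nat_ge (4 * B ^ 2)
  have hK12 : 2 ≤ K1 := by
    have : (2:ℝ) ≤ K1 := by nlinarith
    exact_mod_cast this
  have hK1' : (2:ℝ) ≤ K1 := by exact_mod_cast hK12
  set C2 := 2 * B * (K1:ℝ) ^ 3 with hC2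
  have hC21 : 1 ≤ C2 := by
    have : (1:ℝ) ≤ (K1:ℝ) ^ 3 := one_le_pow₀ (by linarith)
    rw [hC2]; nlinarith
  set C3 := B * (Cd + 2 ^ d * C2) with hC3
  have hC3p : 0 < C3 := by positivity
  refine ⟨C3, hC3p, fun ε hε => ?_⟩
  have htd : Tendsto (fun n : ℕ => (n:ℝ) ^ (ε / 2)) atTop atTop :=
    (tendsto_rpow_atTop (by linarith [hε.1])).comp tendsto_natCast_atTop_atTop
  obtain ⟨K, hK2, hKC⟩ := ((eventually_ge_atTop 2).and (htd.eventually_ge_atTop C3)).exists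
  refine ⟨max K1 K, fun X σ ξ a h => ?_⟩
  have hσ := h.sig
  have hξ : 0 < ξ := by have := h.sx; linarith
  have hp1 : ∀ u, σ ≤ u → u ≤ ξ → a u ≤ C2 * (u / σ) ^ (2 + ε / 2) * Real.exp (-(κ / 2 * X / ξ)) := by
    intro u h1 h2
    have hu : 0 < u := by linarith
    obtain ⟨n, hn⟩ := pow_unbounded_of_one_lt (ξ / u) (show (1:ℝ) < K1 by linarith)
    refine phase1 hd h hκ hB (by linarith [hε.1]) (by linarith [hε.2]) hK12 hK1 (le_max_left _ _) n u h1 h2 ?_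
    rw [div_lt_iff₀ hu] at hn; linarith
  set r := max σ (min X ξ) with hr
  have hrσ : σ ≤ r := le_max_left _ _
  have hrp : 0 < r := by linarith
  have hK' : (2:ℝ) ≤ K := by exact_mod_cast hK2
  obtain ⟨n, hn1, hn2⟩ := exists_nat_pow_near (x := r / σ) (y := (K:ℝ)) (by rw [one_le_div hσ]; exact hrσ) (by linarith)
  have h2 := phase2 h hκ hB (by linarith [hε.1]) hr hCd1 hCd hC21 hp1 hC3 hK2 (le_max_right _ _) n σ le_rfl hrσ
    (by rw [div_lt_iff₀ hσ] at hn2; linarith)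
  refine h2.trans ?_
  refine mul_le_mul_of_nonneg_right ?_ (Real.exp_pos _).le
  have e1 : C3 ^ n ≤ (r / σ) ^ (ε / 2) := by
    calc C3 ^ n ≤ ((K:ℝ) ^ (ε / 2)) ^ n := by gcongr
      _ = ((K:ℝ) ^ n) ^ (ε / 2) := by
          rw [← Real.rpow_natCast, ← Real.rpow_mul (by positivity), mul_comm, Real.rpow_mul (by positivity), Real.rpow_natCast]
      _ ≤ _ := Real.rpow_le_rpow (by positivity) hn1 (by linarith [hε.1])
  have hq : 0 < r / σ := by positivity
  have e2 : (σ / r) ^ ((d:ℝ) - 2 - ε) = (r / σ) ^ (ε / 2) * ((r / σ) ^ (2 + ε / 2) * (σ / r) ^ d) := by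
    have i1 : σ / r = (r / σ)⁻¹ := by rw [inv_div]
    rw [i1, Real.inv_rpow hq.le, ← Real.rpow_neg hq.le, ← Real.rpow_natCast, Real.inv_rpow hq.le,
      ← Real.rpow_neg hq.le, ← Real.rpow_add hq, ← Real.rpow_add hq]
    congr 1; ring
  rw [e2, pow_succ]
  calc C3 ^ n * C3 * (r / σ) ^ (2 + ε / 2) * (σ / r) ^ d = C3 * (C3 ^ n * ((r / σ) ^ (2 + ε / 2) * (σ / r) ^ d)) := by ring
    _ ≤ _ := by gcongr

end BB
end

section
open Blackbox
namespace BB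
variable {d : ℕ}
open Filter Topology
variable {c₀ : ℝ} {M : Model d c₀}

lemma cv_sum (f : (Fin d → ℤ) → ℝ≥0∞) (k : ℕ) (g : ℕ → (Fin d → ℤ) → ℝ≥0∞) (x : Fin d → ℤ) :
    cv f (fun y => ∑ j ∈ Finset.range k, g j y) x = ∑ j ∈ Finset.range k, cv f (g j) x := by
  unfold cv
  rw [← Summable.tsum_finsetSum (fun _ _ => ENNReal.summable)]
  exact tsum_congr fun y => Finset.mul_sum _ _ _

lemma eu_le_one {κ u : ℝ} (hκ : 0 ≤ κ) (hu : 0 ≤ u) (y : Fin d → ℤ) : eu κ u y ≤ 1 := by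
  unfold eu
  rw [ENNReal.ofReal_le_one, Real.exp_le_one_iff]
  have := supNorm_nonneg y
  have : 0 ≤ κ * supNorm y / u := by positivity
  linarith

lemma eu_mono {κ u v : ℝ} (hκ : 0 ≤ κ) (hu : 0 < u) (huv : u ≤ v) (y : Fin d → ℤ) : eu κ u y ≤ eu κ v y := by
  unfold eu
  refine ENNReal.ofReal_le_ofReal (Real.exp_le_exp.2 (neg_le_neg ?_))
  have := supNorm_nonneg y
  gcongr

def Aa (M : Model d c₀) (κ β : ℝ) (x : Fin d → ℤ) (u : ℝ) : ℝ := (cv (eu κ u) (M.F β) x).toReal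

lemma ofReal_Aa {κ β u : ℝ} (h : ok M β) (hκ : 0 ≤ κ) (hu : 0 ≤ u) (x : Fin d → ℤ) :
    ENNReal.ofReal (Aa M κ β x u) = cv (eu κ u) (M.F β) x := by
  refine ENNReal.ofReal_toReal ?_
  rw [cv_comm]
  refine ne_top_of_le_ne_top ?_ (cv_le_sup (eu_le_one hκ hu) x)
  rw [mul_one, m0_F]; exact m0_G_ne_top h

lemma Aa_nonneg {κ β u : ℝ} (x : Fin d → ℤ) : 0 ≤ Aa M κ β x u := ENNReal.toReal_nonneg

/-- the LCLT input -/
def LC (d : ℕ) (s0 C : ℝ) : Prop := ∀ (u : ℝ) (p : (Fin d → ℤ) → ℝ≥0∞),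
    0 < u → Stp u s0 p → ∀ j ≥ 1, ∀ x,
    (cv p)^[j] (eu (s0 / 4) u) x ≤
      ENNReal.ofReal (C / (Real.sqrt j) ^ d * Real.exp (-(s0 / 4 * supNorm x / (u * Real.sqrt j))))

lemma iter_F (hc : 0 < c₀) (hc1 : c₀ ≤ 1) {δ t C : ℝ} (hδ : 0 < δ) (hδ1 : δ ≤ 1 / 10000)
    (ht : good M δ t) (hL : LC d (c₀ / 100) C) {j : ℕ} (hj : 1 ≤ j) (x : Fin d → ℤ) :
    (cv (M.F t))^[j] (eu (c₀ / 100 / 4) (M.xi t)) x ≤ ENNReal.ofReal (ch M t ^ j *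
      (C / (Real.sqrt j) ^ d * Real.exp (-(c₀ / 100 / 4 * supNorm x / (M.xi t * Real.sqrt j))))) := by
  have h1 := one_le_ch ht.1
  have hS := stp_F hc hc1 hδ hδ1 ht
  have hF : M.F t = fun y => ENNReal.ofReal (ch M t) * (ENNReal.ofReal (1 / ch M t) * M.F t y) := by
    funext y
    rw [← mul_assoc, ← ENNReal.ofReal_mul (by linarith), mul_one_div_cancel (by linarith)]; simp
  rw [hF, iter_smul_left, ENNReal.ofReal_mul (by positivity), ENNReal.ofReal_pow (by linarith)]
  have hxp : 0 < M.xi t := by have := sigma_pos M hc; have := sigma_le_xi hc ht.1; linarith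
  exact mul_le_mul_right (hL _ _ hxp hS j hj x) _

lemma ch_le (hc : 0 < c₀) {δ t ε : ℝ} (hδ : 0 < δ) (hδ1 : δ ≤ 1 / 10000) (hδ2 : 2 / (1 - 3 * δ) ≤ 2 + ε / 2)
    (ht : good M δ t) : ch M t ≤ (M.xi t / M.sigma) ^ (2 + ε / 2) := by
  have h1 := xi_ratio hc hδ (by linarith) ht le_rfl ht.1.1
  have hs := sigma_pos M hc
  have hx := sigma_le_xi hc ht.1
  have hch := one_le_ch ht.1
  rw [ch_zero, div_one, xi_zero] at h1
  have hp : 0 < 1 - 3 * δ := by linarith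
  have hq : 1 ≤ M.xi t / M.sigma := by rw [one_le_div hs]; exact hx
  calc ch M t = (ch M t ^ (1 - 3 * δ)) ^ (1 / (1 - 3 * δ)) := by
        rw [← Real.rpow_mul (by linarith), mul_one_div_cancel hp.ne', Real.rpow_one]
    _ ≤ ((M.xi t / M.sigma) ^ 2) ^ (1 / (1 - 3 * δ)) := Real.rpow_le_rpow (by positivity) h1 (by positivity)
    _ = (M.xi t / M.sigma) ^ (2 / (1 - 3 * δ)) := by
        rw [← Real.rpow_natCast, ← Real.rpow_mul (by linarith)]; congr 1; push_cast; ring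
    _ ≤ _ := Real.rpow_le_rpow_of_exponent_le hq hδ2

lemma recH (hc : 0 < c₀) (hc1 : c₀ ≤ 1) {δ β C ε : ℝ} {Km : ℕ} (hδ : 0 < δ) (hδ1 : δ ≤ 1 / 10000)
    (hδ2 : 2 / (1 - 3 * δ) ≤ 2 + ε / 2) (hδ3 : (1 + 4 * δ) ^ (Km ^ 2) ≤ 3)
    (h : good M δ β) (hC : 1 ≤ C) (hL : LC d (c₀ / 100) C) (x : Fin d → ℤ) :
    RecH d (c₀ / 100 / 4) (3 * C) (2 + ε / 2) (supNorm x) M.sigma (M.xi β) (Aa M (c₀ / 100 / 4) β x) Km := by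
  have hs := sigma_pos M hc
  have hx := sigma_le_xi hc h.1
  have hxp : 0 < M.xi β := by linarith
  set κ := c₀ / 100 / 4 with hκ
  have hκp : 0 < κ := by positivity
  have hX := supNorm_nonneg x
  refine ⟨hs, hx, hX, ?_, ?_, ?_⟩
  · intro u h1 h2
    rw [← ENNReal.ofReal_le_ofReal_iff (Aa_nonneg x), ofReal_Aa h.1 hκp.le (by linarith), ofReal_Aa h.1 hκp.le hxp.le]
    exact cv_mono (eu_mono hκp.le (by linarith) h2) (fun _ => le_rfl) x
  · rw [← ENNReal.ofReal_le_ofReal_iff (by positivity), ofReal_Aa h.1 hκp.le hxp.le, cv_comm]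
    have := iter_F hc hc1 hδ hδ1 h hL le_rfl x
    simp only [Function.iterate_one] at this
    refine this.trans (ENNReal.ofReal_le_ofReal ?_)
    simp only [pow_one, Nat.cast_one, Real.sqrt_one, one_pow, div_one, mul_one]
    have h1 := ch_le hc hδ hδ1 hδ2 h
    have h2 := one_le_ch h.1
    rw [← mul_assoc]
    refine mul_le_mul_of_nonneg_right ?_ (Real.exp_pos _).le
    nlinarith
  · intro u K hu hK hKm huK
    have hup : 0 < u := by linarith
    have hK' : (1:ℝ) ≤ K := by exact_mod_cast hK
    have huξ : u ≤ M.xi β := by nlinarith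
    obtain ⟨t, ht, hte⟩ := intermediate_value_Icc h.1.1 (xi_cont hc h.1) (show u ∈ Set.Icc (M.xi 0) (M.xi β) from
      ⟨by rw [xi_zero]; exact hu, huξ⟩)
    have hg := good_mono h ht.1 ht.2
    have hch := one_le_ch hg.1
    have hchβ := one_le_ch h.1
    have hb : 0 ≤ β - t := by linarith [ht.2]
    have hbc : (β - t) * ch M t ≤ 1 + 4 * δ := by
      refine (beta_ch hc hδ (by linarith) h ht.1 ht.2).trans ?_
      have : 0 ≤ ch M t / ch M β := by positivity
      nlinarith
    have hpow : ∀ j ≤ K ^ 2, ((β - t) * ch M t) ^ j ≤ 3 := by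
      intro j hj
      have h14 : 1 ≤ 1 + 4 * δ := by linarith
      calc ((β - t) * ch M t) ^ j ≤ (1 + 4 * δ) ^ j := by gcongr
        _ ≤ (1 + 4 * δ) ^ (Km ^ 2) := pow_le_pow_right₀ h14 (hj.trans (Nat.pow_le_pow_left hKm 2))
        _ ≤ 3 := hδ3
    have hch2 := ch_le hc hδ hδ1 hδ2 hg
    rw [hte] at hch2
    have hA := Aa_nonneg (M := M) (κ := κ) (β := β) (u := u * K) x
    have hS0 : 0 ≤ Ss d κ (supNorm x) u K := Finset.sum_nonneg fun j _ => by positivity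
    have hX0 : 0 ≤ 3 * C * ((u / M.sigma) ^ (2 + ε / 2) * Ss d κ (supNorm x) u K + Aa M κ β x (u * K) / (K:ℝ) ^ d) := by
      positivity
    rw [← ENNReal.ofReal_le_ofReal_iff hX0, ofReal_Aa h.1 hκp.le hup.le]
    have hr := cv_mono (f := eu κ u) (fun _ => le_rfl) (renewal (I1F h.1 ht.1 ht.2) (K ^ 2)) x
    rw [cv_add, cv_sum] at hr
    refine hr.trans ?_
    have hI : ∀ j, 1 ≤ j → ∀ z, (cv (M.F t))^[j] (eu κ u) z ≤ ENNReal.ofReal (ch M t ^ j *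
      (C / (Real.sqrt j) ^ d * Real.exp (-(κ * supNorm z / (u * Real.sqrt j))))) := by
      intro j hj z
      have := iter_F hc hc1 hδ hδ1 hg hL hj z
      rwa [hte] at this
    have hT1 : ∑ j ∈ Finset.range (K ^ 2), cv (eu κ u) (fun y => ENNReal.ofReal (β - t) ^ j * (cv (M.F t))^[j] (M.F t) y) x
        ≤ ENNReal.ofReal (3 * C * ((u / M.sigma) ^ (2 + ε / 2) * Ss d κ (supNorm x) u K)) := by
      unfold Ss
      rw [Finset.mul_sum, Finset.mul_sum, ENNReal.ofReal_sum_of_nonneg (fun j _ => by positivity)]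
      refine Finset.sum_le_sum fun j hj => ?_
      rw [cv_smul, iter_cv_comm, cv_comm (eu κ u), ← Function.iterate_succ_apply, ← ENNReal.ofReal_pow hb]
      refine (mul_le_mul_right (hI (j + 1) (by omega) x) _).trans ?_
      rw [← ENNReal.ofReal_mul (by positivity)]
      refine ENNReal.ofReal_le_ofReal ?_
      have h3 := hpow j (Finset.mem_range.1 hj).le
      set q := Real.sqrt ((j + 1 : ℕ) : ℝ)
      have e : (β - t) ^ j * (ch M t ^ (j + 1) * (C / q ^ d * Real.exp (-(κ * supNorm x / (u * q))))) =
        (((β - t) * ch M t) ^ j) * C * (ch M t * (1 / q ^ d * Real.exp (-(κ * supNorm x / (u * q))))) := by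
        rw [mul_pow]; ring
      rw [e]
      gcongr
    have hT2 : cv (eu κ u) (fun y => ENNReal.ofReal (β - t) ^ (K ^ 2) * (cv (M.F t))^[K ^ 2] (M.F β) y) x
        ≤ ENNReal.ofReal (3 * C * (Aa M κ β x (u * K) / (K:ℝ) ^ d)) := by
      rw [cv_smul, iter_cv_comm, cv_comm (eu κ u), ← iter_cv_comm, cv_comm (M.F β)]
      have hle : ∀ z, (cv (M.F t))^[K ^ 2] (eu κ u) z ≤ ENNReal.ofReal (ch M t ^ (K ^ 2) * (C / (K:ℝ) ^ d)) * eu κ (u * K) z := by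
        intro z
        refine (hI (K ^ 2) (Nat.one_le_pow _ _ hK) z).trans (le_of_eq ?_)
        unfold eu
        have : Real.sqrt ((K ^ 2 : ℕ) : ℝ) = K := by push_cast; exact Real.sqrt_sq (by positivity)
        rw [← ENNReal.ofReal_mul (by positivity), this, mul_assoc]
      refine (mul_le_mul_right (cv_mono hle (fun _ => le_rfl) x) _).trans ?_
      rw [smul_cv, ← ofReal_Aa h.1 hκp.le (by positivity), ← ENNReal.ofReal_pow hb, ← ENNReal.ofReal_mul (by positivity),
        ← ENNReal.ofReal_mul (by positivity)]
      refine ENNReal.ofReal_le_ofReal ?_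
      have h3 := hpow (K ^ 2) le_rfl
      calc _ = ((β - t) * ch M t) ^ (K ^ 2) * C * (Aa M κ β x (u * K) / (K:ℝ) ^ d) := by rw [mul_pow]; ring
        _ ≤ _ := by gcongr
    rw [mul_add, ENNReal.ofReal_add (by positivity) (by positivity)]
    exact add_le_add hT1 hT2

lemma Jf_le (hc : 0 < c₀) (hd : 0 < d) (y : Fin d → ℤ) :
    Jf M y ≤ ENNReal.ofReal (2 * c₀⁻¹ * Real.sqrt d ^ d / M.sigma ^ d) * eu (c₀ / 100 / 4) M.sigma y := by
  rcases (M.K.nonneg y).eq_or_lt with hy | hy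
  · simp [Jf, ← hy]
  have hs := sigma_pos M hc
  unfold Jf eu
  rw [← ENNReal.ofReal_mul (by positivity)]
  refine ENNReal.ofReal_le_ofReal ((M.K.J_upper y).trans ?_)
  have hR := M.K.R_ge_one
  have h1 : M.sigma ≤ Real.sqrt d * M.K.R := by
    have := sigma_sq_le M
    refine abs_le_of_sq_le_sq' ?_ (by positivity) |>.2
    rw [mul_pow, Real.sq_sqrt (by positivity)]; exact this
  have h2 : supNorm y ≤ M.sigma / c₀ := (M.K.range_le y hy).trans (R_le M hc)
  have h3 : (1:ℝ) / 2 ≤ Real.exp (-(c₀ / 100 / 4 * supNorm y / M.sigma)) := by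
    have : c₀ / 100 / 4 * supNorm y / M.sigma ≤ 1 / 400 := by
      calc _ ≤ c₀ / 100 / 4 * (M.sigma / c₀) / M.sigma := by gcongr
        _ = 1 / 400 := by field_simp; norm_num
    have := Real.add_one_le_exp (-(c₀ / 100 / 4 * supNorm y / M.sigma))
    linarith
  calc c₀⁻¹ / M.K.R ^ d ≤ 2 * c₀⁻¹ * Real.sqrt d ^ d / M.sigma ^ d * (1 / 2) := by
        rw [div_le_iff₀ (by positivity)]
        have : M.sigma ^ d ≤ Real.sqrt d ^ d * M.K.R ^ d := by rw [← mul_pow]; gcongr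
        have e : 2 * c₀⁻¹ * Real.sqrt d ^ d / M.sigma ^ d * (1 / 2) * M.K.R ^ d = c₀⁻¹ * ((Real.sqrt d ^ d * M.K.R ^ d) / M.sigma ^ d) := by
          ring
        rw [e]
        refine le_mul_of_one_le_right (by positivity) ?_
        rw [one_le_div (by positivity)]; exact this
    _ ≤ _ := by gcongr

lemma main_good (hd : 2 < d) (hc : 0 < c₀) (hc1 : c₀ ≤ 1) :
    ∃ c > (0:ℝ), ∃ C > (0:ℝ), ∀ ε ∈ Set.Ioo (0:ℝ) 1, ∃ δ ∈ Set.Ioo (0:ℝ) (1 / 10000), ∀ M : Model d c₀, ∀ β, good M δ β →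
      ∀ x, M.G β x ≤ ENNReal.ofReal ((if x = 0 then 1 else 0) + C / M.sigma ^ d *
        (M.sigma / max M.sigma (supNorm x)) ^ ((d:ℝ) - 2 - ε) * Real.exp (-c * supNorm x / M.xi β)) := by
  obtain ⟨C0, hC0, hL0⟩ := lclt (d := d) (s0 := c₀ / 100) (by omega) (by positivity) (by linarith)
  set C1 := max C0 1 with hC1
  have hL : LC d (c₀ / 100) C1 := by
    intro u p hu hp j hj x
    refine (hL0 u p hu hp j hj x).trans (ENNReal.ofReal_le_ofReal ?_)
    gcongr
    exact le_max_left _ _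
  have hC11 : 1 ≤ C1 := le_max_right _ _
  set κ := c₀ / 100 / 4 with hκ
  have hκp : 0 < κ := by positivity
  obtain ⟨C3, hC3, hph⟩ := phases (d := d) hd hκp (B := 3 * C1) (by linarith)
  obtain ⟨Cd, hCd1, hCd⟩ := exp_poly d (half_pos hκp)
  obtain ⟨Ce, hCe1, hCe⟩ := exp_poly d (half_pos (half_pos hκp))
  set CJ := 2 * c₀⁻¹ * Real.sqrt d ^ d with hCJ
  have hdp : (3:ℝ) ≤ d := by exact_mod_cast hd
  have hCJp : 0 < CJ := by positivity
  refine ⟨κ / 2 / 2, by positivity, 2 * CJ * (Cd + 2 * C3) * Ce, by positivity, fun ε hε => ?_⟩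
  obtain ⟨Km, hKm⟩ := hph ε hε
  obtain ⟨δ, ⟨hδ0, hδ1⟩, hδ2, hδ3⟩ : ∃ δ : ℝ, (0 < δ ∧ δ < 1 / 10000) ∧ 2 / (1 - 3 * δ) ≤ 2 + ε / 2 ∧ (1 + 4 * δ) ^ (Km ^ 2) ≤ 3 := by
    have t1 : Tendsto (fun δ : ℝ => 2 / (1 - 3 * δ)) (𝓝[>] 0) (𝓝 (2 / (1 - 3 * 0))) := by
      refine (ContinuousAt.tendsto ?_).mono_left nhdsWithin_le_nhds
      refine ContinuousAt.div (by fun_prop) (by fun_prop) (by norm_num)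
    have t2 : Tendsto (fun δ : ℝ => (1 + 4 * δ) ^ (Km ^ 2)) (𝓝[>] 0) (𝓝 ((1 + 4 * 0) ^ (Km ^ 2))) := by
      refine (ContinuousAt.tendsto ?_).mono_left nhdsWithin_le_nhds
      fun_prop
    have e1 := t1.eventually_le_const (u := 2 + ε / 2) (by norm_num; exact hε.1)
    have e2 := t2.eventually_le_const (u := 3) (by norm_num)
    have e3 : ∀ᶠ δ : ℝ in 𝓝[>] 0, 0 < δ ∧ δ < 1 / 10000 := by
      filter_upwards [Ioo_mem_nhdsGT (show (0:ℝ) < 1 / 10000 by norm_num)] with δ h using h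
    exact (e3.and (e1.and e2)).exists
  refine ⟨δ, ⟨hδ0, hδ1⟩, fun M β h x => ?_⟩
  have hs := sigma_pos M hc
  have hxi := sigma_le_xi hc h.1
  have hxp : 0 < M.xi β := by linarith
  have hX := supNorm_nonneg x
  have hRH := recH hc hc1 hδ0 hδ1.le hδ2 hδ3 h hC11 hL x
  have hA := hKm _ _ _ _ hRH
  set X := supNorm x with hXd
  set σ := M.sigma with hσ
  set ξ := M.xi β with hξ
  set r := max σ (min X ξ) with hr
  set p := (d:ℝ) - 2 - ε with hp
  have hp0 : 0 ≤ p := by rw [hp]; linarith [hε.2]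
  have hpd : p ≤ d := by rw [hp]; linarith [hε.1]
  have hrσ : σ ≤ r := le_max_left _ _
  have hrp : 0 < r := by linarith
  set D := Real.exp (-(κ / 2 * X / ξ)) with hD
  have hDp : 0 < D := Real.exp_pos _
  have hβ2 : β ≤ 2 := by
    have := beta_ch hc hδ0 (by linarith) h le_rfl h.1.1
    rw [ch_zero, sub_zero, mul_one] at this
    have h1 := one_le_ch h.1
    have h2 : 0 ≤ 1 / ch M β := by positivity
    nlinarith
  have hβ0 := h.1.1
  -- the kernel term
  have hJ : Real.exp (-(κ * X / σ)) ≤ Cd * (σ / r) ^ p * D := by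
    have h1 := Ss_le2 (d := d) (K := 1) hκp hX hs (by simpa using hxi) hs hr le_rfl hrσ hCd1 hCd
    simp only [Ss, one_pow, Finset.range_one, Finset.sum_singleton, zero_add, Nat.cast_one, Real.sqrt_one, div_one, one_mul, mul_one] at h1
    refine h1.trans ?_
    gcongr
    rw [← Real.rpow_natCast]
    exact Real.rpow_le_rpow_of_exponent_ge (by positivity) ((div_le_one hrp).2 hrσ) hpd
  have hF : M.F β x ≤ ENNReal.ofReal (CJ / σ ^ d * ((Cd + 2 * C3) * ((σ / r) ^ p * D))) := by
    have h1 := I1F h.1 le_rfl hβ0 x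
    rw [F_zero, sub_zero] at h1
    refine h1.trans ?_
    have h2 : Jf M x ≤ ENNReal.ofReal (CJ / σ ^ d * (Cd * ((σ / r) ^ p * D))) := by
      refine (Jf_le hc (by omega) x).trans ?_
      unfold eu
      rw [← ENNReal.ofReal_mul (by positivity)]
      refine ENNReal.ofReal_le_ofReal (mul_le_mul_of_nonneg_left ?_ (by positivity))
      rw [← mul_assoc]; exact hJ
    have h3 : ENNReal.ofReal β * cv (Jf M) (M.F β) x ≤ ENNReal.ofReal (CJ / σ ^ d * (2 * C3 * ((σ / r) ^ p * D))) := by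
      refine (mul_le_mul_right (cv_mono (Jf_le hc (by omega)) (fun _ => le_rfl) x) _).trans ?_
      rw [smul_cv, ← ofReal_Aa h.1 hκp.le hs.le, ← ENNReal.ofReal_mul (by positivity), ← ENNReal.ofReal_mul hβ0]
      refine ENNReal.ofReal_le_ofReal ?_
      have hA0 : 0 ≤ Aa M κ β x σ := Aa_nonneg x
      calc β * (CJ / σ ^ d * Aa M κ β x σ) ≤ 2 * (CJ / σ ^ d * (C3 * (σ / r) ^ p * D)) := by gcongr
        _ = _ := by ring
    refine (add_le_add h2 h3).trans (le_of_eq ?_)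
    rw [← ENNReal.ofReal_add (by positivity) (by positivity)]
    congr 1; ring
  -- conversion of the radius
  have hconv : (σ / r) ^ p * D ≤ Ce * ((σ / max σ X) ^ p * Real.exp (-(κ / 2 / 2) * X / ξ)) := by
    have hDD : D = Real.exp (-(κ / 2 / 2 * (X / ξ))) * Real.exp (-(κ / 2 / 2) * X / ξ) := by
      rw [hD, ← Real.exp_add]; congr 1; ring
    rw [hDD, ← mul_assoc, ← mul_assoc]
    refine mul_le_mul_of_nonneg_right ?_ (Real.exp_pos _).le
    rcases le_total X ξ with hle | hle
    · have : r = max σ X := by rw [hr, min_eq_left hle]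
      rw [this, mul_comm]
      refine mul_le_mul_of_nonneg_right ?_ (by positivity)
      refine le_trans ?_ hCe1
      rw [Real.exp_le_one_iff]
      have : 0 ≤ κ / 2 / 2 * (X / ξ) := by positivity
      linarith
    · have e1 : r = ξ := by rw [hr, min_eq_right hle, max_eq_right hxi]
      have e2 : max σ X = X := max_eq_right (hxi.trans hle)
      have hXp : 0 < X := by linarith
      have h1 := hCe (X / ξ) (by positivity)
      have hq : 1 ≤ X / ξ := (one_le_div hxp).2 hle
      rw [e1, e2]
      have e3 : (σ / ξ) ^ p = (σ / X) ^ p * (X / ξ) ^ p := by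
        rw [← Real.mul_rpow (by positivity) (by positivity)]; congr 1; field_simp
      have e4 : (X / ξ) ^ p ≤ (X / ξ) ^ d := by
        rw [← Real.rpow_natCast]; exact Real.rpow_le_rpow_of_exponent_le hq hpd
      rw [e3]
      calc _ ≤ (σ / X) ^ p * (X / ξ) ^ d * (Ce / (X / ξ) ^ d) := by gcongr
        _ = _ := by field_simp
  have hG := I1' h.1 le_rfl hβ0 x
  rw [G_zero, cv_e0, sub_zero] at hG
  refine hG.trans ?_
  rw [ENNReal.ofReal_add (by split_ifs <;> norm_num) (by positivity)]
  refine add_le_add ?_ ?_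
  · unfold e0; split_ifs <;> simp
  · refine (mul_le_mul_right hF _).trans ?_
    rw [← ENNReal.ofReal_mul hβ0]
    refine ENNReal.ofReal_le_ofReal ?_
    calc β * (CJ / σ ^ d * ((Cd + 2 * C3) * ((σ / r) ^ p * D)))
        ≤ 2 * (CJ / σ ^ d * ((Cd + 2 * C3) * (Ce * ((σ / max σ X) ^ p * Real.exp (-(κ / 2 / 2) * X / ξ))))) := by gcongr
      _ = _ := by ring

end BB
end

section
open Blackbox
namespace BB
variable {d : ℕ}
open Filter Topology
variable {c₀ : ℝ} {M : Model d c₀}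

lemma G_left {β : ℝ} (h0 : 0 < β) (h : ENNReal.ofReal β ≤ M.βc) (x : Fin d → ℤ) :
    Tendsto (fun t => M.G t x) (𝓝[<] β) (𝓝 (M.G β x)) := by
  have hev : ∀ᶠ t in 𝓝[<] β, 0 < t ∧ t < β := Ioo_mem_nhdsLT h0
  rcases h.lt_or_eq with hlt | heq
  · have hd := (M.deriv x h0.le hlt).continuousWithinAt
    have hd2 : Tendsto (fun t => (M.G t x).toReal) (𝓝[<] β) (𝓝 (M.G β x).toReal) := by
      refine hd.tendsto.mono_left ?_
      refine le_inf nhdsWithin_le_nhds ?_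
      rw [le_principal_iff]
      filter_upwards [hev] with t ht using ht.1.le
    have hfin : ∀ t, ok M t → M.G t x ≠ ⊤ := fun t ht =>
      ENNReal.ne_top_of_tsum_ne_top (m0_G_ne_top ht) x
    have h3 := ENNReal.tendsto_ofReal hd2
    rw [ENNReal.ofReal_toReal (hfin β ⟨h0.le, hlt⟩)] at h3
    refine h3.congr' ?_
    filter_upwards [hev] with t ht
    exact ENNReal.ofReal_toReal (hfin t ⟨ht.1.le, (ENNReal.ofReal_le_ofReal ht.2.le).trans_lt hlt⟩)
  · have hb : M.βc.toReal = β := by rw [← heq, ENNReal.toReal_ofReal h0.le]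
    have hl := M.limit (by rw [← heq]; exact ENNReal.ofReal_ne_top) x
    rw [hb] at hl
    refine tendsto_order.2 ⟨fun a ha => ?_, fun a ha => ?_⟩
    · rw [hl] at ha
      simp only [lt_iSup_iff] at ha
      obtain ⟨s, hs, has⟩ := ha
      have : ∀ᶠ t in 𝓝[<] β, s < t ∧ t < β := Ioo_mem_nhdsLT hs.2
      filter_upwards [this] with t ht
      exact has.trans_le (G_mono ((ENNReal.ofReal_le_ofReal ht.2.le).trans h) hs.1 ht.1.le x)
    · filter_upwards [hev] with t ht
      exact (G_mono h ht.1.le ht.2.le x).trans_lt ha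

lemma m0_left {β t : ℝ} (h0 : 0 < β) (h : ENNReal.ofReal β ≤ M.βc) (ht : t < β) {a B : ℝ≥0∞}
    (ha : a ≠ ⊤)
    (hB : ∀ s, t ≤ s → s < β → a * m0 (M.G s) ≤ B) : a * m0 (M.G β) ≤ B := by
  unfold m0
  rw [ENNReal.tsum_eq_iSup_sum, ENNReal.mul_iSup]
  refine iSup_le fun S => ?_
  have h1 : Tendsto (fun s => a * ∑ x ∈ S, M.G s x) (𝓝[<] β) (𝓝 (a * ∑ x ∈ S, M.G β x)) :=
    ENNReal.Tendsto.const_mul (tendsto_finsetSum _ fun x _ => G_left h0 h x) (Or.inr ha)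
  refine le_of_tendsto h1 ?_
  have : ∀ᶠ s in 𝓝[<] β, t < s ∧ s < β := Ioo_mem_nhdsLT ht
  filter_upwards [this] with s hs
  exact (mul_le_mul_right (ENNReal.sum_le_tsum S) a).trans (hB s hs.1.le hs.2)

lemma xi_end (hc : 0 < c₀) {δ β t : ℝ} (hδ : 0 < δ) (hδ1 : δ < 1 / 4) (h0 : 0 < β)
    (h : ENNReal.ofReal β ≤ M.βc) (hg : ∀ s, 0 ≤ s → s < β → good M δ s) (ht0 : 0 ≤ t) (ht : t < β)
    (hx : 0 < M.xi β) : M.xi t ≤ M.xi β := by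
  have hp : 0 < (M.xiSq β).toReal := Real.sqrt_pos.1 hx
  have hne : M.xiSq β ≠ ⊤ := fun e => by rw [e] at hp; simp at hp
  have hx0 : M.xiSq β ≠ 0 := fun e => by rw [e] at hp; simp at hp
  have hm1 := one_le_m0_G h0.le h
  have hmt : m0 (M.G β) ≠ ⊤ := by
    intro e
    apply hx0
    rw [xiSq_eq, e, ENNReal.div_top]
  have hok := (hg t ht0 ht).1
  have ht' : M.xiSq t ≠ ⊤ := by rw [xiSq_eq' hc hok]; exact ENNReal.ofReal_ne_top
  have key : M.xiSq t * m0 (M.G β) ≤ m2 (M.F β) := by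
    refine m0_left h0 h ht ht' fun s hs hsb => ?_
    have hgs := hg s (ht0.trans hs) hsb
    have hms := xi_mono hc hδ hδ1 hgs ht0 hs
    have hst : M.xiSq s ≠ ⊤ := by rw [xiSq_eq' hc hgs.1]; exact ENNReal.ofReal_ne_top
    have h1 : M.xiSq t ≤ M.xiSq s := by
      rw [← ENNReal.toReal_le_toReal ht' hst]
      unfold Model.xi at hms
      exact (Real.sqrt_le_sqrt_iff ENNReal.toReal_nonneg).1 hms
    have h2 : M.xiSq s * m0 (M.G s) = m2 (M.F s) := by
      rw [xiSq_eq]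
      refine ENNReal.div_mul_cancel ?_ (m0_G_ne_top hgs.1)
      exact (zero_lt_one.trans_le (one_le_m0_G hgs.1.1 hgs.1.2.le)).ne'
    calc M.xiSq t * m0 (M.G s) ≤ M.xiSq s * m0 (M.G s) := by gcongr
      _ = m2 (M.F s) := h2
      _ ≤ _ := m2_mono (F_mono h hgs.1.1 hsb.le)
  have h3 : M.xiSq t ≤ M.xiSq β := by
    rw [xiSq_eq M β]
    exact (ENNReal.le_div_iff_mul_le (Or.inl (zero_lt_one.trans_le hm1).ne') (Or.inl hmt)).2 key
  unfold Model.xi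
  exact Real.sqrt_le_sqrt (ENNReal.toReal_mono hne h3)

lemma main_end (hd : 2 < d) (hc : 0 < c₀) (hc1 : c₀ ≤ 1) :
    ∃ c > (0:ℝ), ∃ C > (0:ℝ), ∀ ε ∈ Set.Ioo (0:ℝ) 1, ∃ δ ∈ Set.Ioo (0:ℝ) 1,
      ∀ M : Model d c₀, ∀ β : ℝ, 0 ≤ β → β ≤ M.betaOf δ → ∀ x : Fin d → ℤ,
        M.G β x ≤ ENNReal.ofReal
          ((if x = 0 then 1 else 0) +
            C / M.sigma ^ d *
              (M.sigma / max M.sigma (supNorm x)) ^ ((d : ℝ) - 2 - ε) *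
              Real.exp (-c * supNorm x / M.xi β)) := by
  obtain ⟨c, hcp, C, hC, H⟩ := main_good hd hc hc1
  refine ⟨c, hcp, C, hC, fun ε hε => ?_⟩
  obtain ⟨δ, hδ, H⟩ := H ε hε
  refine ⟨δ, ⟨hδ.1, by linarith [hδ.2]⟩, fun M β hb0 hb x => ?_⟩
  have hσ : 0 < M.sigma := sigma_pos M hc
  have hX := supNorm_nonneg x
  have hA : 0 ≤ C / M.sigma ^ d *
      (M.sigma / max M.sigma (supNorm x)) ^ ((d : ℝ) - 2 - ε) := by
    have : 0 < max M.sigma (supNorm x) := lt_max_of_lt_left hσ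
    positivity
  rcases hb0.eq_or_lt with rfl | hb0
  · rw [M.init x]
    have : (if x = 0 then (1:ℝ≥0∞) else 0) = ENNReal.ofReal (if x = 0 then 1 else 0) := by
      split_ifs <;> simp
    rw [this]
    refine ENNReal.ofReal_le_ofReal ?_
    have := mul_nonneg hA (Real.exp_pos (-c * supNorm x / M.xi 0)).le
    linarith
  have hne : {β : ℝ | 0 ≤ β ∧ ENNReal.ofReal β < M.βc ∧ M.E β < ENNReal.ofReal δ}.Nonempty := by
    by_contra hh
    rw [Set.not_nonempty_iff_eq_empty] at hh
    rw [Model.betaOf, hh, Real.sSup_empty] at hb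
    linarith
  have hg : ∀ s, 0 ≤ s → s < β → good M δ s := by
    intro s hs hsb
    obtain ⟨b, hbS, hsb'⟩ := exists_lt_of_lt_csSup hne (hsb.trans_le hb)
    exact good_mono (β := b) ⟨⟨hbS.1, hbS.2.1⟩, hbS.2.2⟩ hs hsb'.le
  have hle : ENNReal.ofReal β ≤ M.βc := by
    refine le_of_tendsto ((ENNReal.continuous_ofReal.tendsto β).mono_left
      (nhdsWithin_le_nhds (s := Set.Iio β))) ?_
    have : ∀ᶠ t in 𝓝[<] β, 0 < t ∧ t < β := Ioo_mem_nhdsLT hb0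
    filter_upwards [this] with t ht using (hg t ht.1.le ht.2).1.2.le
  refine le_of_tendsto (G_left hb0 hle x) ?_
  have : ∀ᶠ t in 𝓝[<] β, 0 < t ∧ t < β := Ioo_mem_nhdsLT hb0
  filter_upwards [this] with t ht
  have hgt := hg t ht.1.le ht.2
  refine (H M t hgt x).trans (ENNReal.ofReal_le_ofReal ?_)
  have hxt : 0 < M.xi t := hσ.trans_le (sigma_le_xi hc hgt.1)
  have hexp : -c * supNorm x / M.xi t ≤ -c * supNorm x / M.xi β := by
    rcases (Real.sqrt_nonneg (M.xiSq β).toReal).eq_or_lt with h | h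
    · have : M.xi β = 0 := h.symm
      rw [this, div_zero]
      exact div_nonpos_of_nonpos_of_nonneg (by nlinarith) hxt.le
    · have hx := xi_end hc hδ.1 (by linarith [hδ.2]) hb0 hle hg ht.1.le ht.2 h
      rw [neg_mul, neg_div, neg_div, neg_le_neg_iff]
      gcongr
  have := mul_le_mul_of_nonneg_left (Real.exp_le_exp.2 hexp) hA
  linarith

end BB
end


/-- near-critical upper bound for `G_β` (Theorem 1.5 / `thm:maintheorem`). -/
theorem statement0 (d : ℕ) (hd : 2 < d) (c₀ : ℝ) (hc₀ : c₀ ∈ Set.Ioc (0:ℝ) 1) :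
    ∃ c > (0:ℝ), ∃ C > (0:ℝ), ∀ ε ∈ Set.Ioo (0:ℝ) 1, ∃ δ ∈ Set.Ioo (0:ℝ) 1,
      ∀ M : Model d c₀, ∀ β : ℝ, 0 ≤ β → β ≤ M.betaOf δ → ∀ x : Fin d → ℤ,
        M.G β x ≤ ENNReal.ofReal
          ((if x = 0 then 1 else 0) +
            C / M.sigma ^ d *
              (M.sigma / max M.sigma (supNorm x)) ^ ((d : ℝ) - 2 - ε) *
              Real.exp (-c * supNorm x / M.xi β)) := by
  exact BB.main_end hd hc₀.1 hc₀.2
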